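/- For every integer k ≥ 2, the convergence exponent of Tarry's problem in dimension two satisfies p_{2,k} = k(k+1)(k+2)/6 + 2; precisely, inf{ p ∈ (0,∞) : ∫_{ℝ^N} |E_k1(x)|^p dx < ∞ } = k(k+1)(k+2)/6 + 2. -/

import Mathlib

open MeasureTheory Real Set
open scoped ENNReal

noncomputable section

/-- Index set for multi-indices `β = (β₁, β₂) ∈ ℕ²` with `1 ≤ β₁ + β₂ ≤ k`;
its cardinality is `N = (k+1)(k+2)/2 − 1`. -/
def Idx (k : ℕ) : Type :=
  {β : Fin (k + 1) × Fin (k + 1) // 1 ≤ (β.1 : ℕ) + (β.2 : ℕ) ∧ (β.1 : ℕ) + (β.2 : ℕ) ≤ k}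

instance (k : ℕ) : Fintype (Idx k) := by unfold Idx; infer_instance

/-- The phase polynomial `P(ξ; x) = ∑_{1 ≤ |β| ≤ k} x_β ξ₁^{β₁} ξ₂^{β₂}`. -/
def Pphase (k : ℕ) (x : Idx k → ℝ) (ξ : Fin 2 → ℝ) : ℝ :=
  ∑ β : Idx k, x β * ξ 0 ^ (β.1.1 : ℕ) * ξ 1 ^ (β.1.2 : ℕ)

/-- `E_k1(x) = ∫_{[0,1]²} e(P(ξ; x)) dξ` with `e(t) = exp(2πit)`. -/
def Eone (k : ℕ) (x : Idx k → ℝ) : ℂ :=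
  ∫ ξ in Icc (0 : Fin 2 → ℝ) 1, Complex.exp (2 * Real.pi * Complex.I * (Pphase k x ξ))

/-- The weight `1 / (1 + t²)`, a smooth substitute for the indicator function of `[-1, 1]`. -/
def cauchyWeight (t : ℝ) : ℝ := (1 + t ^ 2)⁻¹

lemma cauchyWeight_pos (t : ℝ) : 0 < cauchyWeight t := by unfold cauchyWeight; positivity

lemma cauchyWeight_le_one (t : ℝ) : cauchyWeight t ≤ 1 := by
  unfold cauchyWeight
  exact inv_le_one_of_one_le₀ (by nlinarith [sq_nonneg t])

lemma continuous_cauchyWeight : Continuous cauchyWeight := by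
  unfold cauchyWeight
  exact Continuous.inv₀ (by fun_prop) (fun t => by positivity)

lemma measurable_cauchyWeight : Measurable cauchyWeight := continuous_cauchyWeight.measurable

lemma lintegral_cauchyWeight : ∫⁻ t, ENNReal.ofReal (cauchyWeight t) = ENNReal.ofReal π := by
  rw [← integral_univ_inv_one_add_sq, ofReal_integral_eq_lintegral_ofReal]
  · rfl
  · exact integrable_inv_one_add_sq
  · exact ae_of_all _ fun t => (cauchyWeight_pos t).le

lemma lintegral_abs_deriv_mul_cauchyWeight_Ioo (q : Polynomial ℝ) (hq : q.derivative ≠ 0) (n : ℕ) :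
    ∀ a b : ℝ, (q.derivative.roots.toFinset.filter (· ∈ Ioo a b)).card ≤ n →
      ∫⁻ y in Ioo a b, ENNReal.ofReal |q.derivative.eval y| *
        ENNReal.ofReal (cauchyWeight (q.eval y)) ≤ (n + 1) * ENNReal.ofReal π := by
  induction n using Nat.strong_induction_on with
  | _ n ih =>
  intro a b hab
  rcases (q.derivative.roots.toFinset.filter (· ∈ Ioo a b)).eq_empty_or_nonempty with h0 | ⟨c, hc⟩
  · have hinj : InjOn (fun y => q.eval y) (Ioo a b) := by
      have key : ∀ y ∈ Ioo a b, ∀ z ∈ Ioo a b, y < z → q.eval y ≠ q.eval z := by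
        intro y hy z hz hyz he
        obtain ⟨t, ht, ht0⟩ := exists_hasDerivAt_eq_zero (f := fun y => q.eval y) hyz
          q.continuous.continuousOn he (fun x _ => q.hasDerivAt x)
        have : t ∈ q.derivative.roots.toFinset.filter (· ∈ Ioo a b) := by
          simp only [Finset.mem_filter, Multiset.mem_toFinset, Polynomial.mem_roots hq]
          exact ⟨ht0, hy.1.trans ht.1, ht.2.trans hz.2⟩
        rw [h0] at this
        simp at this
      intro y hy z hz he
      rcases lt_trichotomy y z with h | h | h
      · exact absurd he (key y hy z hz h)
      · exact h
      · exact absurd he.symm (key z hz y hy h)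
    rw [← lintegral_image_eq_lintegral_abs_deriv_mul measurableSet_Ioo
      (fun x _ => (q.hasDerivAt x).hasDerivWithinAt) hinj
      (fun t => ENNReal.ofReal (cauchyWeight t))]
    calc _ ≤ ∫⁻ t, ENNReal.ofReal (cauchyWeight t) := setLIntegral_le_lintegral _ _
      _ = 1 * ENNReal.ofReal π := by rw [lintegral_cauchyWeight, one_mul]
      _ ≤ _ := by gcongr; simp
  · have hc' := hc
    simp only [Finset.mem_filter] at hc
    obtain ⟨hcr, hca, hcb⟩ := hc
    set S := q.derivative.roots.toFinset with hS
    have hcard : (S.filter (· ∈ Ioo a c)).card + (S.filter (· ∈ Ioo c b)).card + 1 ≤ n := by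
      refine le_trans ?_ hab
      rw [← Finset.card_union_of_disjoint, ← Finset.card_insert_of_notMem (a := c)]
      · apply Finset.card_le_card
        intro t ht
        simp only [Finset.mem_insert, Finset.mem_union, Finset.mem_filter, mem_Ioo] at ht ⊢
        rcases ht with rfl | ⟨h, h1, h2⟩ | ⟨h, h1, h2⟩
        · exact ⟨hcr, hca, hcb⟩
        · exact ⟨h, h1, h2.trans hcb⟩
        · exact ⟨h, hca.trans h1, h2⟩
      · simp
      · rw [Finset.disjoint_left]
        intro t ht ht'
        simp only [Finset.mem_filter, mem_Ioo] at ht ht'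
        linarith [ht.2.2, ht'.2.1]
    have h1 := ih _ (by omega) a c le_rfl
    have h2 := ih _ (by omega) c b le_rfl
    have hsub : Ioo a b ⊆ Ioo a c ∪ ({c} ∪ Ioo c b) := by
      intro t ht
      rcases lt_trichotomy t c with h | h | h
      · exact Or.inl ⟨ht.1, h⟩
      · exact Or.inr (Or.inl h)
      · exact Or.inr (Or.inr ⟨h, ht.2⟩)
    refine (lintegral_mono_set hsub).trans ((lintegral_union_le _ _ _).trans ?_)
    refine (add_le_add_right (lintegral_union_le _ _ _) _).trans ?_
    simp only [Measure.restrict_singleton, volume_singleton, zero_smul, lintegral_zero_measure,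
      zero_add]
    refine (add_le_add h1 h2).trans ?_
    rw [← add_mul]
    exact mul_le_mul' (by exact_mod_cast (by omega)) le_rfl

/-- The total variation of `arctan ∘ q` is controlled by the degree of `q`. -/
lemma lintegral_abs_deriv_mul_cauchyWeight (q : Polynomial ℝ) (n : ℕ) (hn : q.natDegree ≤ n) :
    ∫⁻ y in Icc (0 : ℝ) 1, ENNReal.ofReal |q.derivative.eval y| *
        ENNReal.ofReal (cauchyWeight (q.eval y)) ≤ (n + 1) * ENNReal.ofReal π := by
  by_cases hq : q.derivative = 0
  · simp [hq]
  · rw [setLIntegral_congr Ioo_ae_eq_Icc.symm]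
    refine lintegral_abs_deriv_mul_cauchyWeight_Ioo q hq n 0 1 ?_
    refine (Finset.card_filter_le _ _).trans ((Multiset.toFinset_card_le _).trans ?_)
    refine (Polynomial.card_roots' _).trans ((Polynomial.natDegree_derivative_le _).trans ?_)
    omega

/-- The additive character `t ↦ exp (2πit)`. -/
def expChar (t : ℝ) : ℂ := Complex.exp (2 * π * Complex.I * t)

lemma norm_expChar (t : ℝ) : ‖expChar t‖ = 1 := by
  unfold expChar
  rw [show (2 * π * Complex.I * t : ℂ) = ((2 * π * t : ℝ) : ℂ) * Complex.I by push_cast; ring]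
  exact Complex.norm_exp_ofReal_mul_I _

lemma expChar_add (s t : ℝ) : expChar (s + t) = expChar s * expChar t := by
  unfold expChar
  rw [← Complex.exp_add]
  push_cast
  ring_nf

lemma expChar_zero : expChar 0 = 1 := by simp [expChar]

lemma expChar_sum {ι : Type*} (s : Finset ι) (f : ι → ℝ) :
    expChar (∑ i ∈ s, f i) = ∏ i ∈ s, expChar (f i) := by
  classical
  induction s using Finset.induction_on with
  | empty => simp [expChar_zero]
  | insert a s ha ih => rw [Finset.sum_insert ha, Finset.prod_insert ha, expChar_add, ih]

lemma conj_expChar (t : ℝ) : (starRingEnd ℂ) (expChar t) = expChar (-t) := by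
  unfold expChar
  rw [← Complex.exp_conj]
  congr 1
  simp only [map_mul, Complex.conj_ofReal, Complex.conj_I, map_ofNat, Complex.ofReal_neg]
  ring

@[fun_prop]
lemma continuous_expChar : Continuous expChar := by
  unfold expChar
  fun_prop

lemma hasDerivAt_expChar (t : ℝ) :
    HasDerivAt expChar (2 * π * Complex.I * expChar t) t := by
  unfold expChar
  have h : HasDerivAt (fun t : ℝ => (2 * π * Complex.I * t : ℂ)) (2 * π * Complex.I) t := by
    simpa using (Complex.ofRealCLM.hasDerivAt (x := t)).const_mul (2 * π * Complex.I : ℂ)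
  have := h.cexp
  convert this using 1
  ring

lemma vanDerCorput_identity (p : Polynomial ℝ) {τ : ℝ} (hτ : 0 < τ) (y : ℝ) :
    HasDerivAt (fun y => expChar (p.eval y) *
        ((p.derivative.eval y / (p.derivative.eval y ^ 2 + τ ^ 2) : ℝ) : ℂ))
      (2 * π * Complex.I * expChar (p.eval y) -
        2 * π * Complex.I * (expChar (p.eval y) *
          (cauchyWeight (τ⁻¹ * p.derivative.eval y) : ℝ)) +
        expChar (p.eval y) *
          ((p.derivative.derivative.eval y * (τ ^ 2 - p.derivative.eval y ^ 2) /
            (p.derivative.eval y ^ 2 + τ ^ 2) ^ 2 : ℝ) : ℂ)) y := by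
  have h1 : HasDerivAt (fun y => expChar (p.eval y))
      (p.derivative.eval y • (2 * π * Complex.I * expChar (p.eval y))) y :=
    HasDerivAt.scomp (g₁ := expChar) (h := fun y => p.eval y) y (hasDerivAt_expChar (p.eval y))
      (p.hasDerivAt y)
  have hne : p.derivative.eval y ^ 2 + τ ^ 2 ≠ 0 := by positivity
  have h2 : HasDerivAt
      (fun y => ((p.derivative.eval y / (p.derivative.eval y ^ 2 + τ ^ 2) : ℝ) : ℂ))
      (((p.derivative.derivative.eval y * (p.derivative.eval y ^ 2 + τ ^ 2) -
        p.derivative.eval y * (2 * p.derivative.eval y * p.derivative.derivative.eval y)) /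
        (p.derivative.eval y ^ 2 + τ ^ 2) ^ 2 : ℝ) : ℂ) y := by
    refine HasDerivAt.ofReal_comp (f := fun y => p.derivative.eval y /
      (p.derivative.eval y ^ 2 + τ ^ 2)) ?_
    have h3 : HasDerivAt (fun y => p.derivative.eval y ^ 2 + τ ^ 2)
        (2 * p.derivative.eval y * p.derivative.derivative.eval y) y := by
      have := ((p.derivative.hasDerivAt y).fun_pow 2).add_const (τ ^ 2)
      simpa using this
    exact (p.derivative.hasDerivAt y).fun_div h3 hne
  refine (h1.mul h2).congr_deriv ?_
  set d := p.derivative.eval y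
  set d2 := p.derivative.derivative.eval y
  set E := expChar (p.eval y)
  have e1 : cauchyWeight (τ⁻¹ * d) = 1 - d * (d / (d ^ 2 + τ ^ 2)) := by
    unfold cauchyWeight
    have : 1 + (τ⁻¹ * d) ^ 2 ≠ 0 := by positivity
    field_simp
    ring
  have e2 : (d2 * (d ^ 2 + τ ^ 2) - d * (2 * d * d2)) / (d ^ 2 + τ ^ 2) ^ 2
      = d2 * (τ ^ 2 - d ^ 2) / (d ^ 2 + τ ^ 2) ^ 2 := by ring
  rw [e1, ← e2, Complex.real_smul]
  push_cast
  ring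

/-- A first-derivative van der Corput estimate for polynomial phases. -/
lemma norm_integral_expChar_le (p : Polynomial ℝ) (n : ℕ) (hn : p.natDegree ≤ n) {h : ℝ}
    (hh : 0 < h) :
    ENNReal.ofReal ‖∫ y in Icc (0 : ℝ) 1, expChar (p.eval y)‖ ≤
      (∫⁻ y in Icc (0 : ℝ) 1, ENNReal.ofReal (cauchyWeight (h * p.derivative.eval y))) +
        ENNReal.ofReal ((n + 2) * h) := by
  set τ := h⁻¹ with hτ_def
  have hτ : 0 < τ := inv_pos.mpr hh
  have hhτ : τ⁻¹ = h := by simp [hτ_def]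
  have hne : ∀ y, p.derivative.eval y ^ 2 + τ ^ 2 ≠ 0 := fun y => by positivity
  set A : ℝ → ℂ := fun y => expChar (p.eval y) * (cauchyWeight (h * p.derivative.eval y) : ℝ)
  set B : ℝ → ℂ := fun y => expChar (p.eval y) *
    ((p.derivative.derivative.eval y * (τ ^ 2 - p.derivative.eval y ^ 2) /
            (p.derivative.eval y ^ 2 + τ ^ 2) ^ 2 : ℝ) : ℂ)
  have cE : Continuous fun y => expChar (p.eval y) := continuous_expChar.comp p.continuous
  have cW : Continuous fun y => cauchyWeight (h * p.derivative.eval y) :=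
    continuous_cauchyWeight.comp (continuous_const.mul p.derivative.continuous)
  have cA : Continuous A := cE.mul (Complex.continuous_ofReal.comp cW)
  have cD : Continuous fun y => p.derivative.derivative.eval y *
      (τ ^ 2 - p.derivative.eval y ^ 2) / (p.derivative.eval y ^ 2 + τ ^ 2) ^ 2 := by
    refine Continuous.div ?_ ?_ (fun y => pow_ne_zero _ (hne y))
    · exact p.derivative.derivative.continuous.mul
        (continuous_const.sub (p.derivative.continuous.pow 2))
    · exact ((p.derivative.continuous.pow 2).add continuous_const).pow 2
  have cB : Continuous B := cE.mul (Complex.continuous_ofReal.comp cD)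
  set F : ℝ → ℂ := fun y => expChar (p.eval y) *
        ((p.derivative.eval y / (p.derivative.eval y ^ 2 + τ ^ 2) : ℝ) : ℂ) with hF
  have hFTC : ∫ y in (0:ℝ)..1, (2 * π * Complex.I * expChar (p.eval y) -
        2 * π * Complex.I * A y + B y) = F 1 - F 0 := by
    refine intervalIntegral.integral_eq_sub_of_hasDerivAt (fun y _ => ?_) ?_
    · have := vanDerCorput_identity p hτ y
      rw [hhτ] at this
      exact this
    · exact Continuous.intervalIntegrable (by fun_prop) _ _
  rw [intervalIntegral.integral_add, intervalIntegral.integral_sub,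
    intervalIntegral.integral_const_mul, intervalIntegral.integral_const_mul] at hFTC
  rotate_left
  · exact Continuous.intervalIntegrable (by fun_prop) _ _
  · exact Continuous.intervalIntegrable (by fun_prop) _ _
  · exact Continuous.intervalIntegrable (by fun_prop) _ _
  · exact Continuous.intervalIntegrable (by fun_prop) _ _
  have hFb : ∀ y, ‖F y‖ ≤ h / 2 := by
    intro y
    rw [hF]
    simp only [norm_mul, norm_expChar, one_mul, Complex.norm_real, Real.norm_eq_abs, abs_div]
    rw [abs_of_pos (a := p.derivative.eval y ^ 2 + τ ^ 2) (by positivity),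
      div_le_iff₀ (by positivity), ← sq_abs, ← hhτ]
    have : τ⁻¹ / 2 * (|p.derivative.eval y| ^ 2 + τ ^ 2) - |p.derivative.eval y| =
      τ⁻¹ / 2 * (|p.derivative.eval y| - τ) ^ 2 := by field_simp; ring
    have h2 : 0 ≤ τ⁻¹ / 2 * (|p.derivative.eval y| - τ) ^ 2 := by positivity
    linarith
  set IE := ∫ y in (0:ℝ)..1, expChar (p.eval y)
  set IA := ∫ y in (0:ℝ)..1, A y
  set IB := ∫ y in (0:ℝ)..1, B y
  have hIE : IE = IA + (2 * π * Complex.I)⁻¹ * (F 1 - F 0 - IB) := by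
    have : (2 * π * Complex.I : ℂ) ≠ 0 := by simp [Real.pi_ne_zero]
    rw [← hFTC]
    field_simp
    ring
  have hnorm : ‖IE‖ ≤ ‖IA‖ + (2 * π)⁻¹ * (h + ‖IB‖) := by
    rw [hIE]
    refine (norm_add_le _ _).trans ?_
    gcongr
    rw [norm_mul]
    have : ‖(2 * π * Complex.I : ℂ)⁻¹‖ = (2 * π)⁻¹ := by
      simp [abs_of_pos Real.pi_pos]
    rw [this]
    gcongr
    calc _ ≤ ‖F 1‖ + ‖F 0‖ + ‖IB‖ :=
          (norm_sub_le _ _).trans (by gcongr; exact norm_sub_le _ _)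
      _ ≤ _ := by linarith [hFb 1, hFb 0]
  have hA : ENNReal.ofReal ‖IA‖ ≤
      ∫⁻ y in Icc (0 : ℝ) 1, ENNReal.ofReal (cauchyWeight (h * p.derivative.eval y)) := by
    simp only [IA]
    rw [intervalIntegral.integral_of_le zero_le_one, ← integral_Icc_eq_integral_Ioc,
      ofReal_norm]
    refine (enorm_integral_le_lintegral_enorm _).trans (le_of_eq ?_)
    refine lintegral_congr fun y => ?_
    simp only [A]
    rw [← ofReal_norm, norm_mul, norm_expChar, one_mul, Complex.norm_real,
      Real.norm_of_nonneg (cauchyWeight_pos _).le]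
  have hB : ENNReal.ofReal ‖IB‖ ≤ ENNReal.ofReal (h * ((n + 1) * π)) := by
    simp only [IB]
    rw [intervalIntegral.integral_of_le zero_le_one, ← integral_Icc_eq_integral_Ioc,
      ofReal_norm]
    refine (enorm_integral_le_lintegral_enorm _).trans ?_
    set q : Polynomial ℝ := Polynomial.C h * p.derivative with hq
    have hqd : q.natDegree ≤ n := (Polynomial.natDegree_C_mul_le _ _).trans
      ((Polynomial.natDegree_derivative_le _).trans (by omega))
    calc ∫⁻ y in Icc (0 : ℝ) 1, ‖B y‖ₑ ≤ ∫⁻ y in Icc (0 : ℝ) 1, ENNReal.ofReal h *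
          (ENNReal.ofReal |q.derivative.eval y| * ENNReal.ofReal (cauchyWeight (q.eval y))) := by
          refine lintegral_mono fun y => ?_
          simp only [B]
          rw [← ENNReal.ofReal_mul (abs_nonneg _), ← ENNReal.ofReal_mul hh.le,
            ← ofReal_norm, norm_mul, norm_expChar, one_mul, Complex.norm_real,
            Real.norm_eq_abs]
          apply ENNReal.ofReal_le_ofReal
          have e1 : q.eval y = h * p.derivative.eval y := by simp [hq]
          have e2 : q.derivative.eval y = h * p.derivative.derivative.eval y := by simp [hq]
          rw [e1, e2]
          set d := p.derivative.eval y
          set d2 := p.derivative.derivative.eval y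
          have e3 : h * (|h * d2| * cauchyWeight (h * d)) = |d2| * (d ^ 2 + τ ^ 2)⁻¹ := by
            unfold cauchyWeight
            rw [abs_mul, abs_of_pos hh, hτ_def]
            have : 1 + (h * d) ^ 2 ≠ 0 := by positivity
            have : d ^ 2 + (h⁻¹) ^ 2 ≠ 0 := by positivity
            field_simp
            ring
          rw [e3, abs_div, abs_mul, mul_div_assoc]
          gcongr
          rw [abs_of_pos (a := (d ^ 2 + τ ^ 2) ^ 2) (by positivity), div_le_iff₀ (by positivity)]
          have : (d ^ 2 + τ ^ 2)⁻¹ * (d ^ 2 + τ ^ 2) ^ 2 = d ^ 2 + τ ^ 2 := by field_simp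
          rw [this, abs_le]
          constructor <;> nlinarith [sq_nonneg d, sq_nonneg τ]
      _ ≤ ENNReal.ofReal h * ((n + 1) * ENNReal.ofReal π) := by
          rw [lintegral_const_mul' _ _ ENNReal.ofReal_ne_top]
          gcongr
          exact lintegral_abs_deriv_mul_cauchyWeight q n hqd
      _ = _ := by
          rw [ENNReal.ofReal_mul hh.le, ENNReal.ofReal_mul (by positivity)]
          congr 2
          rw [ENNReal.ofReal_add (by positivity) zero_le_one]
          simp
  rw [ENNReal.ofReal_le_ofReal_iff (by positivity)] at hB
  have hint : ∫ y in Icc (0 : ℝ) 1, expChar (p.eval y) = IE := by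
    simp only [IE]
    rw [intervalIntegral.integral_of_le zero_le_one, ← integral_Icc_eq_integral_Ioc]
  rw [hint]
  calc ENNReal.ofReal ‖IE‖ ≤ ENNReal.ofReal (‖IA‖ + (n + 2) * h) := by
        apply ENNReal.ofReal_le_ofReal
        refine hnorm.trans ?_
        refine add_le_add_right ?_ _
        rw [inv_mul_le_iff₀ (by positivity)]
        have := Real.pi_gt_three
        have hn0 : (0 : ℝ) ≤ n := Nat.cast_nonneg n
        nlinarith [mul_nonneg hn0 hh.le, mul_nonneg (mul_nonneg hn0 hh.le) Real.pi_pos.le, mul_pos hh Real.pi_pos]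
    _ ≤ _ := by
        rw [ENNReal.ofReal_add (norm_nonneg _) (by positivity)]
        gcongr

lemma lintegral_fin_cons {n : ℕ} (F : (Fin (n + 1) → ℝ) → ℝ≥0∞) (hF : Measurable F) :
    ∫⁻ z, F z = ∫⁻ a : ℝ, ∫⁻ x : Fin n → ℝ, F (Fin.cons a x) := by
  have h := (volume_preserving_piFinSuccAbove (fun _ : Fin (n + 1) => ℝ) 0).symm
  rw [← h.lintegral_comp hF, Measure.volume_eq_prod, lintegral_prod]
  · simp [MeasurableEquiv.piFinSuccAbove, Fin.insertNthEquiv]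
  · exact (hF.comp h.measurable).aemeasurable

lemma measurable_fin_cons {n : ℕ} :
    Measurable fun p : ℝ × (Fin n → ℝ) => (Fin.cons p.1 p.2 : Fin (n + 1) → ℝ) := by
  refine measurable_pi_iff.2 fun i => ?_
  refine Fin.cases ?_ (fun j => ?_) i
  · simpa using measurable_fst
  · simp only [Fin.cons_succ]
    fun_prop

lemma lintegral_fin_cons_symm {n : ℕ} (F : (Fin (n + 1) → ℝ) → ℝ≥0∞) (hF : Measurable F) :
    ∫⁻ z, F z = ∫⁻ x : Fin n → ℝ, ∫⁻ a : ℝ, F (Fin.cons a x) := by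
  rw [lintegral_fin_cons F hF]
  exact lintegral_lintegral_swap (hF.comp measurable_fin_cons).aemeasurable

lemma lintegral_fin_prod {n : ℕ} (φ : Fin n → ℝ → ℝ≥0∞) (hφ : ∀ i, Measurable (φ i)) :
    ∫⁻ z : Fin n → ℝ, ∏ i, φ i (z i) = ∏ i, ∫⁻ t, φ i t := by
  induction n with
  | zero => simp [volume_pi]
  | succ n ih =>
    rw [lintegral_fin_cons _ (by fun_prop), Fin.prod_univ_succ]
    simp only [Fin.prod_univ_succ, Fin.cons_zero, Fin.cons_succ]
    rw [← ih (fun i => φ i.succ) (fun i => hφ _), ← lintegral_mul_const _ (hφ 0)]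
    refine lintegral_congr fun a => ?_
    rw [lintegral_const_mul]
    fun_prop

lemma setLIntegral_rpow_neg_Ioo {b L : ℝ} (hb : b < 1) (hL : 0 < L) :
    ∫⁻ t in Ioo 0 L, ENNReal.ofReal t ^ (-b) = ENNReal.ofReal (L ^ (1 - b) / (1 - b)) := by
  have h1 : ∫⁻ t in Ioo 0 L, ENNReal.ofReal t ^ (-b) =
      ∫⁻ t in Ioo 0 L, ENNReal.ofReal (t ^ (-b)) :=
    setLIntegral_congr_fun measurableSet_Ioo fun t ht => ENNReal.ofReal_rpow_of_pos ht.1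
  have hi : IntegrableOn (fun t : ℝ => t ^ (-b)) (Ioo 0 L) := by
    have := intervalIntegral.intervalIntegrable_rpow' (a := 0) (b := L) (r := -b) (by linarith)
    rw [intervalIntegrable_iff_integrableOn_Ioc_of_le hL.le] at this
    exact this.mono_set Ioo_subset_Ioc_self
  rw [h1, ← ofReal_integral_eq_lintegral_ofReal hi]
  · rw [← integral_Ioc_eq_integral_Ioo, ← intervalIntegral.integral_of_le hL.le,
      integral_rpow (Or.inl (by linarith)), Real.zero_rpow (by linarith)]
    congr 1
    rw [show -b + 1 = 1 - b by ring, sub_zero]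
  · filter_upwards [ae_restrict_mem measurableSet_Ioo] with t ht
    exact Real.rpow_nonneg ht.1.le _

lemma setLIntegral_abs_sub_rpow_neg_le {b : ℝ} (hb0 : 0 ≤ b) (hb : b < 1) {L : ℝ} (hL : 0 < L)
    (X : Set ℝ) (hX : volume X = ENNReal.ofReal L) (c : ℝ) :
    ∫⁻ t in X, ENNReal.ofReal |t - c| ^ (-b) ≤
      ENNReal.ofReal (1 + 2 / (1 - b)) * ENNReal.ofReal L ^ (1 - b) := by
  have hsub : X ⊆ (X ∩ {t | L ≤ |t - c|}) ∪ (Ioo c (c + L) ∪ ({c} ∪ Ioo (c - L) c)) := by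
    intro t ht
    by_cases h : L ≤ |t - c|
    · exact Or.inl ⟨ht, h⟩
    · right
      rw [not_le, abs_lt] at h
      rcases lt_trichotomy t c with h' | h' | h'
      · exact Or.inr (Or.inr ⟨by linarith, h'⟩)
      · exact Or.inr (Or.inl h')
      · exact Or.inl ⟨h', by linarith⟩
  have hm : MeasurableSet {t : ℝ | L ≤ |t - c|} :=
    measurableSet_le measurable_const (by fun_prop)
  have h1 : ∫⁻ t in X ∩ {t | L ≤ |t - c|}, ENNReal.ofReal |t - c| ^ (-b) ≤
      ENNReal.ofReal L ^ (1 - b) := by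
    calc _ ≤ ∫⁻ t in X ∩ {t | L ≤ |t - c|}, ENNReal.ofReal L ^ (-b) := by
          rw [inter_comm, ← Measure.restrict_restrict hm]
          refine setLIntegral_mono measurable_const fun t ht => ?_
          rw [ENNReal.rpow_neg, ENNReal.rpow_neg]
          exact ENNReal.inv_le_inv.2
            (ENNReal.rpow_le_rpow (ENNReal.ofReal_le_ofReal ht) hb0)
      _ = ENNReal.ofReal L ^ (-b) * volume (X ∩ {t | L ≤ |t - c|}) := setLIntegral_const _ _
      _ ≤ ENNReal.ofReal L ^ (-b) * ENNReal.ofReal L := by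
          gcongr; rw [← hX]; exact measure_mono inter_subset_left
      _ = _ := by
          conv_lhs => rw [← ENNReal.rpow_one (ENNReal.ofReal L), ← ENNReal.rpow_mul, one_mul]
          rw [← ENNReal.rpow_add _ _ (by simpa using hL) ENNReal.ofReal_ne_top]
          congr 1; ring
  have h2 : ∫⁻ t in Ioo c (c + L), ENNReal.ofReal |t - c| ^ (-b) =
      ENNReal.ofReal (L ^ (1 - b) / (1 - b)) := by
    rw [← setLIntegral_rpow_neg_Ioo hb hL, ← (measurePreserving_add_left volume
      c).setLIntegral_comp_preimage_emb (measurableEmbedding_addLeft c)]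
    have : (fun x => c + x) ⁻¹' Ioo c (c + L) = Ioo 0 L := by ext; simp
    rw [this]
    refine setLIntegral_congr_fun measurableSet_Ioo fun t ht => ?_
    simp [abs_of_pos ht.1]
  have h3 : ∫⁻ t in Ioo (c - L) c, ENNReal.ofReal |t - c| ^ (-b) =
      ENNReal.ofReal (L ^ (1 - b) / (1 - b)) := by
    rw [← setLIntegral_rpow_neg_Ioo hb hL, ← (Measure.measurePreserving_sub_left volume
      c).setLIntegral_comp_preimage_emb (MeasurableEquiv.subLeft c).measurableEmbedding]
    have : (fun x => c - x) ⁻¹' Ioo (c - L) c = Ioo 0 L := by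
      ext; simp [and_comm]
    rw [this]
    refine setLIntegral_congr_fun measurableSet_Ioo fun t ht => ?_
    simp [abs_of_pos ht.1]
  have hb1 : 0 < 1 - b := by linarith
  calc _ ≤ _ := lintegral_mono_set hsub
    _ ≤ ENNReal.ofReal L ^ (1 - b) + (ENNReal.ofReal (L ^ (1 - b) / (1 - b)) +
        (0 + ENNReal.ofReal (L ^ (1 - b) / (1 - b)))) := by
      refine (lintegral_union_le _ _ _).trans (add_le_add h1 ?_)
      refine (lintegral_union_le _ _ _).trans (add_le_add h2.le ?_)
      refine (lintegral_union_le _ _ _).trans (add_le_add ?_ h3.le)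
      simp
    _ = _ := by
      rw [ENNReal.ofReal_rpow_of_pos hL, zero_add, ← ENNReal.ofReal_add (by positivity)
        (by positivity), ← ENNReal.ofReal_add (by positivity) (by positivity),
        ← ENNReal.ofReal_mul (by positivity)]
      congr 1
      field_simp
      ring

/-- The absolute value of the Vandermonde determinant. -/
def absVandermonde {n : ℕ} (x : Fin n → ℝ) : ℝ := |(Matrix.vandermonde x).det|

lemma absVandermonde_nonneg {n : ℕ} (x : Fin n → ℝ) : 0 ≤ absVandermonde x := abs_nonneg _

@[fun_prop]
lemma continuous_absVandermonde {n : ℕ} :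
    Continuous (absVandermonde : (Fin n → ℝ) → ℝ) := by
  unfold absVandermonde
  simp only [Matrix.det_vandermonde]
  fun_prop

lemma absVandermonde_cons {n : ℕ} (c : ℝ) (x : Fin n → ℝ) :
    absVandermonde (Fin.cons c x : Fin (n + 1) → ℝ) =
      (∏ i, |x i - c|) * absVandermonde x := by
  unfold absVandermonde
  simp only [Matrix.det_vandermonde]
  rw [Fin.prod_univ_succ, Fin.prod_Ioi_zero, abs_mul, Finset.abs_prod]
  simp only [Fin.prod_Ioi_succ, Fin.cons_succ, Fin.cons_zero]

lemma prod_le_one_add_sum_pow {n : ℕ} (u : Fin n → ℝ≥0∞) :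
    ∏ i, u i ≤ 1 + ∑ i, u i ^ n := by
  rcases (Finset.univ : Finset (Fin n)).eq_empty_or_nonempty with h | h
  · simp [h]
  · obtain ⟨i, -, hi⟩ := Finset.exists_max_image _ u h
    calc ∏ j, u j ≤ u i ^ (Finset.univ : Finset (Fin n)).card :=
          Finset.prod_le_pow_card _ _ _ fun j hj => hi j hj
      _ = u i ^ n := by simp
      _ ≤ ∑ j, u j ^ n :=
          Finset.single_le_sum (f := fun j => u j ^ n) (fun _ _ => zero_le) (Finset.mem_univ i)
      _ ≤ _ := le_add_self

/-- Negative moments of the Vandermonde determinant over a product set. -/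
lemma exists_lintegral_absVandermonde_rpow_neg_le {a : ℝ} (ha : 0 ≤ a) (n : ℕ)
    (han : a * (n - 1 : ℝ) < 1) :
    ∃ C : ℝ≥0∞, C ≠ ⊤ ∧ ∀ (X : Set ℝ) (L : ℝ), MeasurableSet X → 0 < L → L ≤ 1 →
      volume X = ENNReal.ofReal L →
      ∫⁻ z : Fin n → ℝ, (∏ i, X.indicator 1 (z i)) * ENNReal.ofReal (absVandermonde z) ^ (-a) ≤
        C * ENNReal.ofReal L ^ (n - a * (n * (n - 1) / 2)) := by
  induction n with
  | zero =>
    refine ⟨1, by simp, fun X L _ hL hL1 _ => ?_⟩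
    simp [absVandermonde, volume_pi]
  | succ n ih =>
    push_cast at han
    have han' : a * n < 1 := by simpa using han
    obtain ⟨C, hC, ih⟩ := ih (by nlinarith)
    refine ⟨(1 + n * ENNReal.ofReal (1 + 2 / (1 - a * n))) * C, ?_, ?_⟩
    · exact ENNReal.mul_ne_top (by finiteness) hC
    intro X L hX hL hL1 hv
    have hmX : Measurable (X.indicator (1 : ℝ → ℝ≥0∞)) := measurable_one.indicator hX
    rw [lintegral_fin_cons_symm _ (by fun_prop)]
    have inner : ∀ x : Fin n → ℝ, ∫⁻ c : ℝ, (∏ i, X.indicator 1 ((Fin.cons c x : Fin (n+1) → ℝ) i))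
          * ENNReal.ofReal (absVandermonde (Fin.cons c x : Fin (n+1) → ℝ)) ^ (-a) ≤
        ((1 + n * ENNReal.ofReal (1 + 2 / (1 - a * n))) * ENNReal.ofReal L ^ (1 - a * n)) *
          ((∏ i, X.indicator 1 (x i)) * ENNReal.ofReal (absVandermonde x) ^ (-a)) := by
      intro x
      have e : ∀ c, (∏ i, X.indicator (1 : ℝ → ℝ≥0∞) ((Fin.cons c x : Fin (n+1) → ℝ) i))
          * ENNReal.ofReal (absVandermonde (Fin.cons c x : Fin (n+1) → ℝ)) ^ (-a) =
          (X.indicator 1 c * ∏ i, ENNReal.ofReal |x i - c| ^ (-a)) *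
           ((∏ i, X.indicator 1 (x i)) * ENNReal.ofReal (absVandermonde x) ^ (-a)) := by
        intro c
        rw [Fin.prod_univ_succ, absVandermonde_cons,
          ENNReal.ofReal_mul (Finset.prod_nonneg fun _ _ => abs_nonneg _),
          ENNReal.ofReal_prod_of_nonneg (fun _ _ => abs_nonneg _),
          ENNReal.mul_rpow_of_ne_top (ENNReal.prod_ne_top fun _ _ => ENNReal.ofReal_ne_top)
            ENNReal.ofReal_ne_top, ENNReal.prod_rpow_of_ne_top fun _ _ => ENNReal.ofReal_ne_top]
        simp only [Fin.cons_zero, Fin.cons_succ]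
        ring
      simp_rw [e]
      rw [lintegral_mul_const _ (by fun_prop)]
      gcongr
      calc ∫⁻ c, X.indicator 1 c * ∏ i, ENNReal.ofReal |x i - c| ^ (-a)
          ≤ ∫⁻ c in X, (1 + ∑ i, ENNReal.ofReal |c - x i| ^ (-(a * n))) := by
            rw [← lintegral_indicator hX]
            refine lintegral_mono fun c => ?_
            by_cases hc : c ∈ X
            · simp only [indicator_of_mem hc, Pi.one_apply, one_mul]
              refine (prod_le_one_add_sum_pow _).trans (le_of_eq ?_)
              congr 1
              refine Finset.sum_congr rfl fun i _ => ?_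
              rw [abs_sub_comm, ← ENNReal.rpow_natCast, ← ENNReal.rpow_mul, neg_mul]
            · simp [indicator_of_notMem hc]
        _ = ENNReal.ofReal L + ∑ i, ∫⁻ c in X, ENNReal.ofReal |c - x i| ^ (-(a * n)) := by
            rw [lintegral_add_left measurable_const, lintegral_finsetSum _ (by fun_prop)]
            simp [hv]
        _ ≤ ENNReal.ofReal L ^ (1 - a * n) + ∑ i : Fin n,
              ENNReal.ofReal (1 + 2 / (1 - a * n)) * ENNReal.ofReal L ^ (1 - a * n) := by
            gcongr with i
            · conv_lhs => rw [← ENNReal.rpow_one (ENNReal.ofReal L)]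
              refine ENNReal.rpow_le_rpow_of_exponent_ge (by simpa using hL1) ?_
              nlinarith [mul_nonneg ha (Nat.cast_nonneg (α := ℝ) n)]
            · exact setLIntegral_abs_sub_rpow_neg_le (by positivity) han' hL X hv (x i)
        _ = _ := by
            rw [Finset.sum_const, Finset.card_univ, Fintype.card_fin, nsmul_eq_mul]
            ring
    refine (lintegral_mono inner).trans ?_
    rw [lintegral_const_mul _ (by fun_prop)]
    refine (mul_le_mul' le_rfl (ih X L hX hL hL1 hv)).trans (le_of_eq ?_)
    rw [mul_mul_mul_comm, ← ENNReal.rpow_add _ _ (by simpa using hL) ENNReal.ofReal_ne_top]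
    congr 2
    push_cast
    ring

/-- A lower bound for the mean of the Vandermonde determinant over a product set. -/
lemma exists_volume_rpow_le_lintegral_absVandermonde (n : ℕ) :
    ∃ C : ℝ≥0∞, C ≠ ⊤ ∧ ∀ (X : Set ℝ) (L : ℝ), MeasurableSet X → 0 < L → L ≤ 1 →
      volume X = ENNReal.ofReal L →
      ENNReal.ofReal L ^ (n * (n + 1) / 2 : ℝ) ≤
        C * ∫⁻ z : Fin n → ℝ, (∏ i, X.indicator 1 (z i)) * ENNReal.ofReal (absVandermonde z) := by
  have hn0 : (0 : ℝ) ≤ n := Nat.cast_nonneg n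
  set a : ℝ := 1 / (n + 1) with ha_def
  have ha : 0 < a := by positivity
  obtain ⟨C, hC, hCb⟩ := exists_lintegral_absVandermonde_rpow_neg_le ha.le n (by
    rw [ha_def, div_mul_eq_mul_div, div_lt_one (by positivity)]; linarith)
  -- choose `c` with `c ^ a * C ≤ 1 / 2`
  set K : ℝ := 2 * (C.toReal + 1) with hK
  have hKpos : 0 < K := by positivity
  have hKC : C ≤ ENNReal.ofReal (K / 2) := by
    rw [← ENNReal.ofReal_toReal hC]
    apply ENNReal.ofReal_le_ofReal
    rw [hK]; linarith
  set c : ℝ := K ^ (-(1 / a)) with hc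
  have hcpos : 0 < c := by positivity
  have hca : c ^ a = K⁻¹ := by
    rw [hc, ← Real.rpow_mul hKpos.le, neg_mul, one_div_mul_cancel ha.ne', Real.rpow_neg_one]
  refine ⟨ENNReal.ofReal (2 * c⁻¹), ENNReal.ofReal_ne_top, fun X L hX hL hL1 hv => ?_⟩
  have hmX : Measurable (X.indicator (1 : ℝ → ℝ≥0∞)) := measurable_one.indicator hX
  set m : ℝ := n * (n - 1) / 2 with hm
  set v : ℝ := c * L ^ m with hv_def
  have hvpos : 0 < v := by positivity
  set I := ∫⁻ z : Fin n → ℝ, (∏ i, X.indicator 1 (z i)) * ENNReal.ofReal (absVandermonde z)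
  have h1 : ENNReal.ofReal (L ^ n) ≤ ENNReal.ofReal v⁻¹ * I +
      ENNReal.ofReal (v ^ a) * (C * ENNReal.ofReal L ^ (n - a * m)) := by
    calc ENNReal.ofReal (L ^ n) = ∫⁻ z : Fin n → ℝ, ∏ i, X.indicator 1 (z i) := by
          rw [lintegral_fin_prod (fun _ => X.indicator 1) (fun _ => hmX)]
          simp [lintegral_indicator hX, hv, ENNReal.ofReal_pow hL.le]
      _ ≤ ∫⁻ z : Fin n → ℝ, (ENNReal.ofReal v⁻¹ *
            ((∏ i, X.indicator 1 (z i)) * ENNReal.ofReal (absVandermonde z)) +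
          ENNReal.ofReal (v ^ a) *
            ((∏ i, X.indicator 1 (z i)) * ENNReal.ofReal (absVandermonde z) ^ (-a))) := by
          refine lintegral_mono fun z => ?_
          have key : 1 ≤ ENNReal.ofReal v⁻¹ * ENNReal.ofReal (absVandermonde z) +
              ENNReal.ofReal (v ^ a) * ENNReal.ofReal (absVandermonde z) ^ (-a) := by
            rcases le_total v (absVandermonde z) with h | h
            · refine le_add_right ?_
              rw [← ENNReal.ofReal_mul (by positivity), ENNReal.one_le_ofReal,
                ← div_eq_inv_mul, one_le_div hvpos]
              exact h
            · refine le_add_left ?_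
              calc (1 : ℝ≥0∞) = ENNReal.ofReal v ^ a * ENNReal.ofReal v ^ (-a) := by
                    rw [← ENNReal.rpow_add _ _ (by simpa using hvpos) ENNReal.ofReal_ne_top]
                    simp
                _ ≤ _ := by
                    rw [ENNReal.ofReal_rpow_of_pos hvpos]
                    refine mul_le_mul' le_rfl ?_
                    rw [ENNReal.rpow_neg, ENNReal.rpow_neg]
                    exact ENNReal.inv_le_inv.2
                      (ENNReal.rpow_le_rpow (ENNReal.ofReal_le_ofReal h) ha.le)
          calc ∏ i, X.indicator 1 (z i) = (∏ i, X.indicator (1 : ℝ → ℝ≥0∞) (z i)) * 1 :=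
                (mul_one _).symm
            _ ≤ _ := mul_le_mul' le_rfl key
            _ = _ := by ring
      _ ≤ _ := by
          rw [lintegral_add_left (by fun_prop), lintegral_const_mul _ (by fun_prop),
            lintegral_const_mul _ (by fun_prop)]
          gcongr
          exact hCb X L hX hL hL1 hv
  have h2 : ENNReal.ofReal (v ^ a) * (C * ENNReal.ofReal L ^ (n - a * m)) ≤
      ENNReal.ofReal (L ^ n / 2) := by
    calc _ ≤ ENNReal.ofReal (v ^ a) * (ENNReal.ofReal (K / 2) *
          ENNReal.ofReal L ^ (n - a * m)) := by gcongr
      _ = _ := by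
        rw [ENNReal.ofReal_rpow_of_pos hL, ← ENNReal.ofReal_mul (by positivity),
          ← ENNReal.ofReal_mul (by positivity)]
        congr 1
        rw [hv_def, Real.mul_rpow hcpos.le (by positivity), hca, ← Real.rpow_mul hL.le]
        have : L ^ (m * a) * L ^ (n - a * m) = L ^ n := by
          rw [← Real.rpow_add hL, ← Real.rpow_natCast]
          congr 1; ring
        rw [← this]
        field_simp
  have h3 : ENNReal.ofReal (L ^ n / 2) ≤ ENNReal.ofReal v⁻¹ * I := by
    have : ENNReal.ofReal (L ^ n / 2) + ENNReal.ofReal (L ^ n / 2) ≤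
        ENNReal.ofReal v⁻¹ * I + ENNReal.ofReal (L ^ n / 2) := by
      rw [← ENNReal.ofReal_add (by positivity) (by positivity), add_halves]
      exact h1.trans (by gcongr)
    exact (ENNReal.add_le_add_iff_right ENNReal.ofReal_ne_top).1 this
  calc ENNReal.ofReal L ^ (n * (n + 1) / 2 : ℝ) =
        ENNReal.ofReal (2 * L ^ m) * ENNReal.ofReal (L ^ n / 2) := by
        rw [ENNReal.ofReal_rpow_of_pos hL, ← ENNReal.ofReal_mul (by positivity)]
        congr 1
        have : L ^ (n * (n + 1) / 2 : ℝ) = L ^ m * L ^ n := by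
          rw [← Real.rpow_natCast, ← Real.rpow_add hL, hm]
          congr 1; ring
        rw [this]; ring
    _ ≤ ENNReal.ofReal (2 * L ^ m) * (ENNReal.ofReal v⁻¹ * I) := by gcongr
    _ = ENNReal.ofReal (2 * c⁻¹) * I := by
        rw [← mul_assoc, ← ENNReal.ofReal_mul (by positivity)]
        congr 2
        rw [hv_def]
        have : L ^ m ≠ 0 := by positivity
        field_simp

lemma lintegral_comp_mulVec {ι : Type*} [Fintype ι] [DecidableEq ι] (M : Matrix ι ι ℝ)
    (hM : M.det ≠ 0) (G : (ι → ℝ) → ℝ≥0∞) (hG : Measurable G) :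
    ∫⁻ f, G (M.mulVec f) = ENNReal.ofReal |M.det⁻¹| * ∫⁻ f, G f := by
  have h := Real.map_matrix_volume_pi_eq_smul_volume_pi hM
  have hm : Measurable (Matrix.toLin' M) := (LinearMap.continuous_of_finiteDimensional _).measurable
  calc ∫⁻ f, G (M.mulVec f) = ∫⁻ f, G (Matrix.toLin' M f) := by simp
    _ = ∫⁻ f, G f ∂(Measure.map (Matrix.toLin' M) volume) := (lintegral_map hG hm).symm
    _ = _ := by rw [h, lintegral_smul_measure, smul_eq_mul]

lemma lintegral_comp_diag {ι : Type*} [Fintype ι] (d : ι → ℝ) (hd : ∀ i, d i ≠ 0)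
    (G : (ι → ℝ) → ℝ≥0∞) (hG : Measurable G) :
    ∫⁻ r : ι → ℝ, G (fun i => d i * r i) = ENNReal.ofReal |(∏ i, d i)⁻¹| * ∫⁻ r, G r := by
  classical
  have := lintegral_comp_mulVec (Matrix.diagonal d)
    (by rw [Matrix.det_diagonal]; exact Finset.prod_ne_zero_iff.2 fun i _ => hd i) G hG
  rw [Matrix.det_diagonal] at this
  rw [← this]
  refine lintegral_congr fun r => ?_
  congr 1
  ext i
  rw [Matrix.mulVec_diagonal]

lemma lintegral_pi_split {ι α β : Type*} [Fintype ι] [Fintype α] [Fintype β] (e : ι ≃ α ⊕ β)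
    (F : (ι → ℝ) → ℝ≥0∞) (hF : Measurable F) :
    ∫⁻ z, F z = ∫⁻ f : α → ℝ, ∫⁻ r : β → ℝ, F fun i => Sum.elim f r (e i) := by
  have h1 := (volume_measurePreserving_piCongrLeft (fun _ : α ⊕ β => ℝ) e).symm
  have h2 := (volume_measurePreserving_sumPiEquivProdPi (fun _ : α ⊕ β => ℝ)).symm
  have h3 := h1.comp h2
  rw [← h3.lintegral_comp hF, Measure.volume_eq_prod, lintegral_prod]
  · refine lintegral_congr fun f => lintegral_congr fun r => ?_
    congr 1
  · exact (hF.comp h3.measurable).aemeasurable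

/-- Multi-indices `(i, j)` with `i + j ≤ m`. -/
def triangle (m : ℕ) : Finset (ℕ × ℕ) :=
  (Finset.range (m + 1) ×ˢ Finset.range (m + 1)).filter fun p => p.1 + p.2 ≤ m

lemma mem_triangle {m : ℕ} {p : ℕ × ℕ} : p ∈ triangle m ↔ p.1 + p.2 ≤ m := by
  simp only [triangle, Finset.mem_filter, Finset.mem_product, Finset.mem_range]
  omega

/-- Splitting the multi-indices `(i, j)` according to whether `j = 0`. -/
def triangleEquiv (m : ℕ) : triangle (m + 1) ≃ Fin (m + 2) ⊕ triangle m where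
  toFun p := match p with
    | ⟨(i, 0), h⟩ => Sum.inl ⟨i, by have := mem_triangle.1 h; simp at this; omega⟩
    | ⟨(i, j + 1), h⟩ => Sum.inr ⟨(i, j), by
        have := mem_triangle.1 h; rw [mem_triangle]; simp at this ⊢; omega⟩
  invFun q := match q with
    | Sum.inl i => ⟨(i, 0), by rw [mem_triangle]; have := i.2; simp; omega⟩
    | Sum.inr ⟨(i, j), h⟩ => ⟨(i, j + 1), by
        have := mem_triangle.1 h; rw [mem_triangle]; simp at this ⊢; omega⟩
  left_inv p := by
    rcases p with ⟨⟨i, _ | j⟩, h⟩ <;> rfl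
  right_inv q := by
    rcases q with i | ⟨⟨i, j⟩, h⟩ <;> rfl

lemma card_triangle (m : ℕ) : Fintype.card (triangle m) * 2 = (m + 1) * (m + 2) := by
  induction m with
  | zero => rfl
  | succ m ih =>
    rw [Fintype.card_congr (triangleEquiv m), Fintype.card_sum, Fintype.card_fin]
    linarith

/-- The polynomial `y ↦ ∑ r_{ij} x^i y^j / j!`. -/
def triPoly (m : ℕ) (r : triangle m → ℝ) (x : ℝ) : Polynomial ℝ :=
  ∑ p, Polynomial.C (r p * x ^ p.1.1 / (p.1.2).factorial) * Polynomial.X ^ p.1.2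

/-- The primitive `y ↦ ∑ r_{ij} x^i y^(j+1) / (j+1)!` of `triPoly m r x`. -/
def triPrim (m : ℕ) (r : triangle m → ℝ) (x : ℝ) : Polynomial ℝ :=
  ∑ p, Polynomial.C (r p * x ^ p.1.1 / (p.1.2 + 1).factorial) * Polynomial.X ^ (p.1.2 + 1)

lemma eval_triPoly (m : ℕ) (r : triangle m → ℝ) (x y : ℝ) : (triPoly m r x).eval y =
    ∑ p, r p * x ^ p.1.1 / (p.1.2).factorial * y ^ p.1.2 := by
  simp [triPoly, Polynomial.eval_finsetSum]

lemma eval_triPrim (m : ℕ) (r : triangle m → ℝ) (x y : ℝ) : (triPrim m r x).eval y =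
    ∑ p, r p * x ^ p.1.1 / (p.1.2 + 1).factorial * y ^ (p.1.2 + 1) := by
  simp [triPrim, Polynomial.eval_finsetSum]

lemma derivative_triPrim (m : ℕ) (r : triangle m → ℝ) (x : ℝ) :
    (triPrim m r x).derivative = triPoly m r x := by
  simp only [triPrim, triPoly, Polynomial.derivative_sum]
  refine Finset.sum_congr rfl fun p _ => ?_
  rw [Polynomial.derivative_C_mul_X_pow, Nat.add_sub_cancel]
  congr 2
  rw [Nat.factorial_succ]
  push_cast
  have : ((p.1.2 : ℝ) + 1) ≠ 0 := by positivity
  have : ((p.1.2).factorial : ℝ) ≠ 0 := by positivity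
  field_simp

lemma natDegree_triPrim_le (m : ℕ) (r : triangle m → ℝ) (x : ℝ) :
    (triPrim m r x).natDegree ≤ m + 1 := by
  refine Polynomial.natDegree_sum_le_of_forall_le _ _ fun p _ => ?_
  refine (Polynomial.natDegree_C_mul_X_pow_le _ _).trans ?_
  have := mem_triangle.1 p.2
  omega

lemma triPoly_succ (m : ℕ) (f : Fin (m + 2) → ℝ) (r : triangle m → ℝ) (x : ℝ) :
    triPoly (m + 1) (fun p => Sum.elim f r (triangleEquiv m p)) x =
      Polynomial.C (∑ i, f i * x ^ (i : ℕ)) + triPrim m r x := by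
  rw [triPoly, ← Equiv.sum_comp (triangleEquiv m).symm, Fintype.sum_sum_type, map_sum, triPrim]
  congr 1
  refine Finset.sum_congr rfl fun i _ => ?_
  simp only [Equiv.apply_symm_apply, Sum.elim_inl]
  simp [triangleEquiv]

lemma triPoly_smul (m : ℕ) (h : ℝ) (r : triangle m → ℝ) (x y : ℝ) :
    (triPoly m (fun p => h * r p) x).eval y = h * (triPoly m r x).eval y := by
  rw [eval_triPoly, eval_triPoly, Finset.mul_sum]
  refine Finset.sum_congr rfl fun p _ => by ring

@[fun_prop]
lemma continuous_triPoly_eval {α : Type*} [TopologicalSpace α] (m : ℕ) {r : α → triangle m → ℝ}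
    {x y : α → ℝ} (hr : Continuous r) (hx : Continuous x) (hy : Continuous y) :
    Continuous fun a => (triPoly m (r a) (x a)).eval (y a) := by
  simp only [eval_triPoly]
  fun_prop

@[fun_prop]
lemma continuous_triPrim_eval {α : Type*} [TopologicalSpace α] (m : ℕ) {r : α → triangle m → ℝ}
    {x y : α → ℝ} (hr : Continuous r) (hx : Continuous x) (hy : Continuous y) :
    Continuous fun a => (triPrim m (r a) (x a)).eval (y a) := by
  simp only [eval_triPrim]
  fun_prop

/-- The mean of the weight `cauchyWeight` over the unit square along a polynomial. -/
def weightMean (m : ℕ) (r : triangle m → ℝ) : ℝ≥0∞ :=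
  ∫⁻ x in Icc (0 : ℝ) 1, ∫⁻ y in Icc (0 : ℝ) 1,
    ENNReal.ofReal (cauchyWeight ((triPoly m r x).eval y))

lemma measurable_weightMean (m : ℕ) : Measurable (weightMean m) := by
  have h1 : Measurable fun q : ((triangle m → ℝ) × ℝ) × ℝ =>
      ENNReal.ofReal (cauchyWeight ((triPoly m q.1.1 q.1.2).eval q.2)) := by
    have h : Continuous fun q : ((triangle m → ℝ) × ℝ) × ℝ => (triPoly m q.1.1 q.1.2).eval q.2 :=
      continuous_triPoly_eval m (continuous_fst.comp continuous_fst)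
        (continuous_snd.comp continuous_fst) continuous_snd
    exact (continuous_cauchyWeight.comp h).measurable.ennreal_ofReal
  exact (h1.lintegral_prod_right').lintegral_prod_right'

lemma setLIntegral_Icc_le_one {g : ℝ → ℝ≥0∞} (hg : ∀ x, g x ≤ 1) :
    ∫⁻ x in Icc (0 : ℝ) 1, g x ≤ 1 := by
  refine (lintegral_mono hg).trans ?_
  simp

lemma weightMean_le_one (m : ℕ) (r : triangle m → ℝ) : weightMean m r ≤ 1 :=
  setLIntegral_Icc_le_one fun _ => setLIntegral_Icc_le_one fun _ => by
    simpa using cauchyWeight_le_one _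

/-- A power of a sum of non-negative terms, bounded by a weighted sum of powers. -/
lemma exists_tsum_rpow_le {s ε : ℝ} (hs : 0 < s) (hε : 0 < ε) :
    ∃ C : ℝ≥0∞, C ≠ ⊤ ∧ ∀ a : ℕ → ℝ≥0∞,
      (∑' j, a j) ^ s ≤ C * ∑' j : ℕ, ENNReal.ofReal ((2 : ℝ) ^ (ε * j)) * a j ^ s := by
  set q : ℝ := 2 ^ (-(ε / s)) with hq
  have hq0 : 0 < q := by positivity
  have hq1 : q < 1 := Real.rpow_lt_one_of_one_lt_of_neg (by norm_num) (by
    have : 0 < ε / s := by positivity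
    linarith)
  refine ⟨(ENNReal.ofReal (1 - q)⁻¹) ^ s, by finiteness, fun a => ?_⟩
  set T := ∑' j : ℕ, ENNReal.ofReal ((2 : ℝ) ^ (ε * j)) * a j ^ s
  have h1 : ∀ j, a j ≤ ENNReal.ofReal q ^ j * T ^ (1 / s) := by
    intro j
    have : ENNReal.ofReal ((2 : ℝ) ^ (ε * j)) * a j ^ s ≤ T :=
      ENNReal.le_tsum (f := fun j : ℕ => ENNReal.ofReal ((2 : ℝ) ^ (ε * j)) * a j ^ s) j
    have h2 := ENNReal.rpow_le_rpow this (z := 1 / s) (by positivity)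
    rw [ENNReal.mul_rpow_of_nonneg _ _ (by positivity), ← ENNReal.rpow_mul,
      mul_one_div_cancel hs.ne', ENNReal.rpow_one, ENNReal.ofReal_rpow_of_pos (by positivity)] at h2
    calc a j = ENNReal.ofReal (q ^ j) * (ENNReal.ofReal (((2 : ℝ) ^ (ε * j)) ^ (1 / s)) * a j) := by
          rw [← mul_assoc, ← ENNReal.ofReal_mul (by positivity), hq, ← Real.rpow_natCast,
            ← Real.rpow_mul (by norm_num), ← Real.rpow_mul (by norm_num),
            ← Real.rpow_add (by norm_num)]
          have : -(ε / s) * j + ε * j * (1 / s) = 0 := by ring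
          rw [this, Real.rpow_zero, ENNReal.ofReal_one, one_mul]
      _ ≤ _ := by
        rw [ENNReal.ofReal_pow hq0.le]
        gcongr
  calc (∑' j, a j) ^ s ≤ (∑' j, ENNReal.ofReal q ^ j * T ^ (1 / s)) ^ s := by
        gcongr with j
        exact h1 j
    _ = _ := by
        rw [ENNReal.tsum_mul_right, ENNReal.tsum_geometric, ENNReal.mul_rpow_of_nonneg _ _ hs.le,
          ← ENNReal.rpow_mul, one_div_mul_cancel hs.ne', ENNReal.rpow_one,
          ← ENNReal.ofReal_one, ← ENNReal.ofReal_sub _ hq0.le,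
          ENNReal.ofReal_inv_of_pos (by linarith)]

lemma vandermonde_mulVec {n : ℕ} (z f : Fin n → ℝ) (i : Fin n) :
    (Matrix.vandermonde z).mulVec f i = ∑ j, f j * z i ^ (j : ℕ) := by
  simp only [Matrix.mulVec, dotProduct, Matrix.vandermonde_apply]
  exact Finset.sum_congr rfl fun j _ => mul_comm _ _

lemma lintegral_prod_eval_mul_absVandermonde_le {n : ℕ} (ψ : ℝ → ℝ → ℝ≥0∞)
    (hψ : Measurable (Function.uncurry ψ)) :
    ∫⁻ f : Fin n → ℝ, ∫⁻ z : Fin n → ℝ,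
      (∏ i, ψ (z i) (∑ j, f j * z i ^ (j : ℕ))) * ENNReal.ofReal (absVandermonde z) ≤
      (∫⁻ x, ∫⁻ t, ψ x t) ^ n := by
  have hm : ∀ i, Measurable fun q : (Fin n → ℝ) × (Fin n → ℝ) =>
      ψ (q.2 i) (∑ j, q.1 j * q.2 i ^ (j : ℕ)) := by
    intro i
    have h1 : Continuous fun q : (Fin n → ℝ) × (Fin n → ℝ) =>
        (q.2 i, ∑ j, q.1 j * q.2 i ^ (j : ℕ)) := by fun_prop
    exact hψ.comp h1.measurable
  rw [lintegral_lintegral_swap]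
  swap
  · refine Measurable.aemeasurable ?_
    refine Measurable.mul (Finset.measurable_prod _ fun i _ => hm i) (by fun_prop)
  calc _ ≤ ∫⁻ z : Fin n → ℝ, ∏ i, ∫⁻ t, ψ (z i) t := by
        refine lintegral_mono fun z => ?_
        have hmz : ∀ x, Measurable (ψ x) := fun x => hψ.comp measurable_prodMk_left
        rw [lintegral_mul_const]
        swap
        · exact Finset.measurable_prod _ fun i _ => (hm i).comp measurable_prodMk_right
        by_cases hz : (Matrix.vandermonde z).det = 0
        · simp [absVandermonde, hz]
        · have := lintegral_comp_mulVec (Matrix.vandermonde z) hz (fun t => ∏ i, ψ (z i) (t i))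
            (Finset.measurable_prod _ fun i _ => (hmz _).comp (measurable_pi_apply i))
          simp only [vandermonde_mulVec] at this
          rw [this, lintegral_fin_prod _ fun i => hmz _, mul_comm, ← mul_assoc,
            absVandermonde, ← ENNReal.ofReal_mul (abs_nonneg _), abs_inv,
            mul_inv_cancel₀ (abs_ne_zero.2 hz), ENNReal.ofReal_one, one_mul]
    _ = _ := by
        rw [lintegral_fin_prod (fun _ x => ∫⁻ t, ψ x t) fun _ => hψ.lintegral_prod_right']
        simp

/-- The family of graphs of polynomials of degree less than `n`, intersected with a planar set. -/
lemma exists_lintegral_volume_graph_rpow_le (n : ℕ) (hn : 1 ≤ n) :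
    ∃ C : ℝ≥0∞, C ≠ ⊤ ∧ ∀ S : Set (ℝ × ℝ), MeasurableSet S → (∀ q ∈ S, q.1 ∈ Icc (0 : ℝ) 1) →
      ∫⁻ f : Fin n → ℝ, volume {x | (x, ∑ j, f j * x ^ (j : ℕ)) ∈ S} ^ (n * (n + 1) / 2 : ℝ) ≤
        C * (volume S) ^ n := by
  obtain ⟨C, hC, h⟩ := exists_volume_rpow_le_lintegral_absVandermonde n
  refine ⟨C, hC, fun S hS hS1 => ?_⟩
  have hmS : Measurable (Function.uncurry fun x t : ℝ => S.indicator (1 : ℝ × ℝ → ℝ≥0∞) (x, t)) :=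
    measurable_one.indicator hS
  have hvol : volume S = ∫⁻ x, ∫⁻ t, S.indicator (1 : ℝ × ℝ → ℝ≥0∞) (x, t) := by
    rw [← lintegral_indicator_one hS, Measure.volume_eq_prod, lintegral_prod]
    exact hmS.aemeasurable
  rw [hvol]
  refine le_trans ?_ (mul_le_mul' le_rfl (lintegral_prod_eval_mul_absVandermonde_le _ hmS))
  rw [← lintegral_const_mul' _ _ hC]
  refine lintegral_mono fun f => ?_
  set X := {x : ℝ | (x, ∑ j, f j * x ^ (j : ℕ)) ∈ S} with hXdef
  have hX : MeasurableSet X :=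
    (by fun_prop : Measurable fun x : ℝ => (x, ∑ j, f j * x ^ (j : ℕ))) hS
  have hX1 : volume X ≤ 1 := by
    refine (measure_mono (fun x hx => hS1 _ hx : X ⊆ Icc (0 : ℝ) 1)).trans ?_
    simp
  rcases eq_or_ne (volume X) 0 with h0 | h0
  · rw [h0, ENNReal.zero_rpow_of_pos (by positivity)]
    exact zero_le
  · have hX' : volume X ≠ ⊤ := ne_top_of_le_ne_top ENNReal.one_ne_top hX1
    have := h X (volume X).toReal hX (ENNReal.toReal_pos h0 hX')
      (ENNReal.toReal_le_of_le_ofReal zero_le_one (by simpa using hX1))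
      (ENNReal.ofReal_toReal hX').symm
    rw [ENNReal.ofReal_toReal hX'] at this
    exact this

/-- The mean of `cauchyWeight` along the polynomial `t + triPrim m r x`. -/
def fiberMean (m : ℕ) (r : triangle m → ℝ) (x t : ℝ) : ℝ≥0∞ :=
  ∫⁻ y in Icc (0 : ℝ) 1, ENNReal.ofReal (cauchyWeight (t + (triPrim m r x).eval y))

lemma fiberMean_le_one (m : ℕ) (r : triangle m → ℝ) (x t : ℝ) : fiberMean m r x t ≤ 1 :=
  setLIntegral_Icc_le_one fun _ => by simpa using cauchyWeight_le_one _

lemma measurable_fiberMean {α : Type*} [MeasurableSpace α] (m : ℕ) {r : α → triangle m → ℝ}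
    {x t : α → ℝ} (hr : Measurable r) (hx : Measurable x) (ht : Measurable t) :
    Measurable fun a => fiberMean m (r a) (x a) (t a) := by
  have h1 : Measurable fun q : ((triangle m → ℝ) × ℝ × ℝ) × ℝ =>
      ENNReal.ofReal (cauchyWeight (q.1.2.2 + (triPrim m q.1.1 q.1.2.1).eval q.2)) := by
    have h : Continuous fun q : ((triangle m → ℝ) × ℝ × ℝ) × ℝ =>
        (triPrim m q.1.1 q.1.2.1).eval q.2 :=
      continuous_triPrim_eval m (continuous_fst.comp continuous_fst)
        (continuous_fst.comp (continuous_snd.comp continuous_fst)) continuous_snd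
    have h' : Continuous fun q : ((triangle m → ℝ) × ℝ × ℝ) × ℝ => q.1.2.2 :=
      continuous_snd.comp (continuous_snd.comp continuous_fst)
    exact (continuous_cauchyWeight.comp (h'.add h)).measurable.ennreal_ofReal
  have h2 : Measurable fun q : (triangle m → ℝ) × ℝ × ℝ => fiberMean m q.1 q.2.1 q.2.2 :=
    h1.lintegral_prod_right'
  have h3 : Measurable fun a => (r a, x a, t a) := hr.prodMk (hx.prodMk ht)
  have h4 : Measurable ((fun q : (triangle m → ℝ) × ℝ × ℝ => fiberMean m q.1 q.2.1 q.2.2) ∘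
      fun a => (r a, x a, t a)) := by
    apply Measurable.comp
    · exact h2
    · exact h3
  simpa only [Function.comp_def] using h4

/-- On the level set of `fiberMean` at height about `σ`, a fixed proportion of the mass comes from
points where the derivative in `y` is at most of order `1 / σ`. -/
lemma one_le_mul_lintegral_of_lt_fiberMean (m : ℕ) (r : triangle m → ℝ) (x t : ℝ) {σ : ℝ}
    (hσ : 0 < σ) (h : ENNReal.ofReal (σ / 2) < fiberMean m r x t) :
    1 ≤ ENNReal.ofReal (8 / σ) * ∫⁻ y in Icc (0 : ℝ) 1,
      ENNReal.ofReal (cauchyWeight (t + (triPrim m r x).eval y)) *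
      ENNReal.ofReal (cauchyWeight (σ / (4 * ((m + 2) * π)) * (triPoly m r x).eval y)) := by
  set h₀ : ℝ := σ / (4 * ((m + 2) * π)) with hh₀
  have hh₀pos : 0 < h₀ := by positivity
  set q : Polynomial ℝ := Polynomial.C t + triPrim m r x with hq
  have hqe : ∀ y, q.eval y = t + (triPrim m r x).eval y := fun y => by simp [hq]
  have hqd : ∀ y, q.derivative.eval y = (triPoly m r x).eval y := fun y => by
    simp [hq, derivative_triPrim]
  have hqn : q.natDegree ≤ m + 1 := by
    refine (Polynomial.natDegree_add_le _ _).trans (max_le ?_ (natDegree_triPrim_le m r x))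
    simp
  have hvar := lintegral_abs_deriv_mul_cauchyWeight q (m + 1) hqn
  simp only [hqe, hqd] at hvar
  set D := ∫⁻ y in Icc (0 : ℝ) 1,
      ENNReal.ofReal (cauchyWeight (t + (triPrim m r x).eval y)) *
      ENNReal.ofReal (cauchyWeight (h₀ * (triPoly m r x).eval y)) with hD
  have c1 : Continuous fun y => (triPrim m r x).eval y := by fun_prop
  have c2 : Continuous fun y => (triPoly m r x).eval y := by fun_prop
  have m1 : Measurable fun y => ENNReal.ofReal (cauchyWeight (t + (triPrim m r x).eval y)) :=
    (continuous_cauchyWeight.comp (by fun_prop)).measurable.ennreal_ofReal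
  have m2 : Measurable fun y => ENNReal.ofReal (cauchyWeight (h₀ * (triPoly m r x).eval y)) :=
    (continuous_cauchyWeight.comp (by fun_prop)).measurable.ennreal_ofReal
  have m3 : Measurable fun y => ENNReal.ofReal |(triPoly m r x).eval y| := by fun_prop
  have key : fiberMean m r x t ≤ 2 * D + ENNReal.ofReal (σ / 4) := by
    calc fiberMean m r x t ≤ ∫⁻ y in Icc (0 : ℝ) 1,
          (2 * (ENNReal.ofReal (cauchyWeight (t + (triPrim m r x).eval y)) *
            ENNReal.ofReal (cauchyWeight (h₀ * (triPoly m r x).eval y))) +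
           ENNReal.ofReal h₀ * (ENNReal.ofReal |(triPoly m r x).eval y| *
            ENNReal.ofReal (cauchyWeight (t + (triPrim m r x).eval y)))) := by
          refine lintegral_mono fun y => ?_
          have hw := cauchyWeight_pos (t + (triPrim m r x).eval y)
          set w := cauchyWeight (t + (triPrim m r x).eval y)
          set d := (triPoly m r x).eval y
          have hwd := cauchyWeight_pos (h₀ * d)
          rw [← ENNReal.ofReal_mul hw.le, ← ENNReal.ofReal_mul (abs_nonneg _),
            ← ENNReal.ofReal_mul hh₀pos.le, ← ENNReal.ofReal_ofNat 2,
            ← ENNReal.ofReal_mul (by norm_num),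
            ← ENNReal.ofReal_add (by positivity) (by positivity)]
          apply ENNReal.ofReal_le_ofReal
          have : 1 ≤ 2 * cauchyWeight (h₀ * d) + h₀ * |d| := by
            rcases le_total 1 (h₀ * |d|) with h1 | h1
            · linarith
            · have h2 : (h₀ * d) ^ 2 ≤ 1 := by
                rw [sq_le_one_iff_abs_le_one, abs_mul, abs_of_pos hh₀pos]
                exact h1
              have h3 : (1 / 2 : ℝ) ≤ cauchyWeight (h₀ * d) := by
                unfold cauchyWeight
                rw [one_div]
                exact inv_anti₀ (by positivity) (by linarith)
              have : 0 ≤ h₀ * |d| := by positivity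
              linarith
          nlinarith
      _ = 2 * D + ENNReal.ofReal h₀ * ∫⁻ y in Icc (0 : ℝ) 1,
          ENNReal.ofReal |(triPoly m r x).eval y| *
            ENNReal.ofReal (cauchyWeight (t + (triPrim m r x).eval y)) := by
          rw [lintegral_add_left (by fun_prop), lintegral_const_mul _ (by fun_prop),
            lintegral_const_mul _ (by fun_prop)]
      _ ≤ 2 * D + ENNReal.ofReal h₀ * (((m + 1 : ℕ) + 1) * ENNReal.ofReal π) := by gcongr
      _ = _ := by
          have : ((m + 1 : ℕ) + 1 : ℝ≥0∞) = ENNReal.ofReal (m + 2) := by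
            rw [ENNReal.ofReal_add (by positivity) (by positivity)]
            push_cast
            rw [add_assoc]
            norm_num
          rw [this, ← ENNReal.ofReal_mul (by positivity), ← ENNReal.ofReal_mul hh₀pos.le]
          congr 2
          rw [hh₀]
          field_simp
  have h2 : ENNReal.ofReal (σ / 4) ≤ 2 * D := by
    have : ENNReal.ofReal (σ / 4) + ENNReal.ofReal (σ / 4) ≤ 2 * D + ENNReal.ofReal (σ / 4) := by
      rw [← ENNReal.ofReal_add (by positivity) (by positivity)]
      refine le_trans ?_ (h.le.trans key)
      apply le_of_eq; congr 1; ring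
    exact (ENNReal.add_le_add_iff_right ENNReal.ofReal_ne_top).1 this
  calc (1 : ℝ≥0∞) = ENNReal.ofReal (4 / σ) * ENNReal.ofReal (σ / 4) := by
        rw [← ENNReal.ofReal_mul (by positivity)]
        rw [show 4 / σ * (σ / 4) = 1 by field_simp]
        simp
    _ ≤ ENNReal.ofReal (4 / σ) * (2 * D) := by gcongr
    _ = _ := by
        rw [← mul_assoc, ← ENNReal.ofReal_ofNat 2, ← ENNReal.ofReal_mul (by positivity)]
        congr 2
        ring

lemma lintegral_pi_split_symm {ι α β : Type*} [Fintype ι] [Fintype α] [Fintype β]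
    (e : ι ≃ α ⊕ β) (F : (ι → ℝ) → ℝ≥0∞) (hF : Measurable F) :
    ∫⁻ z, F z = ∫⁻ r : β → ℝ, ∫⁻ f : α → ℝ, F fun i => Sum.elim f r (e i) := by
  rw [lintegral_pi_split (e.trans (Equiv.sumComm α β)) F hF]
  refine lintegral_congr fun r => lintegral_congr fun f => ?_
  congr 1
  ext i
  simp only [Equiv.trans_apply]
  rcases e i with a | b <;> rfl

/-- The parameters `(x, t)` at which `fiberMean` is comparable to `σ`. -/
def fiberLevel (m : ℕ) (r : triangle m → ℝ) (σ : ℝ) : Set (ℝ × ℝ) :=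
  {q | q.1 ∈ Icc (0 : ℝ) 1 ∧ ENNReal.ofReal (σ / 2) < fiberMean m r q.1 q.2 ∧
    fiberMean m r q.1 q.2 ≤ ENNReal.ofReal σ}

lemma measurableSet_fiberLevel (m : ℕ) (r : triangle m → ℝ) (σ : ℝ) :
    MeasurableSet (fiberLevel m r σ) := by
  have h : Measurable fun q : ℝ × ℝ => fiberMean m r q.1 q.2 :=
    measurable_fiberMean m measurable_const measurable_fst measurable_snd
  refine (measurable_fst measurableSet_Icc).inter ?_
  exact (measurableSet_lt measurable_const h).inter (measurableSet_le h measurable_const)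

lemma lintegral_cauchyWeight_add (a : ℝ) :
    ∫⁻ t, ENNReal.ofReal (cauchyWeight (t + a)) = ENNReal.ofReal π := by
  rw [lintegral_add_right_eq_self (fun t => ENNReal.ofReal (cauchyWeight t)),
    lintegral_cauchyWeight]

lemma volume_fiberLevel_le (m : ℕ) (r : triangle m → ℝ) {σ : ℝ} (hσ : 0 < σ) :
    volume (fiberLevel m r σ) ≤ ENNReal.ofReal π * (ENNReal.ofReal (8 / σ) *
      weightMean m (fun p => σ / (4 * ((m + 2) * π)) * r p)) := by
  set h₀ : ℝ := σ / (4 * ((m + 2) * π))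
  calc volume (fiberLevel m r σ) = ∫⁻ x, ∫⁻ t, (fiberLevel m r σ).indicator 1 (x, t) := by
        rw [← lintegral_indicator_one (measurableSet_fiberLevel m r σ), Measure.volume_eq_prod,
          lintegral_prod]
        exact (measurable_one.indicator (measurableSet_fiberLevel m r σ)).aemeasurable
    _ ≤ ∫⁻ x in Icc (0 : ℝ) 1, ∫⁻ t, ENNReal.ofReal (8 / σ) * ∫⁻ y in Icc (0 : ℝ) 1,
          ENNReal.ofReal (cauchyWeight (t + (triPrim m r x).eval y)) *
          ENNReal.ofReal (cauchyWeight (h₀ * (triPoly m r x).eval y)) := by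
        rw [← lintegral_indicator measurableSet_Icc]
        refine lintegral_mono fun x => ?_
        by_cases hx : x ∈ Icc (0 : ℝ) 1
        · rw [indicator_of_mem hx]
          refine lintegral_mono fun t => ?_
          by_cases hq : (x, t) ∈ fiberLevel m r σ
          · rw [indicator_of_mem hq]
            exact one_le_mul_lintegral_of_lt_fiberMean m r x t hσ hq.2.1
          · rw [indicator_of_notMem hq]
            exact zero_le
        · rw [indicator_of_notMem hx]
          refine (lintegral_eq_zero_of_ae_eq_zero ?_).le
          refine Filter.Eventually.of_forall fun t => ?_
          exact indicator_of_notMem (fun hq => hx hq.1) _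
    _ = ∫⁻ x in Icc (0 : ℝ) 1, ENNReal.ofReal (8 / σ) * ∫⁻ y in Icc (0 : ℝ) 1,
          ENNReal.ofReal π * ENNReal.ofReal (cauchyWeight (h₀ * (triPoly m r x).eval y)) := by
        refine lintegral_congr fun x => ?_
        have m1x : Measurable fun q : ℝ × ℝ =>
            ENNReal.ofReal (cauchyWeight (q.1 + (triPrim m r x).eval q.2)) *
            ENNReal.ofReal (cauchyWeight (h₀ * (triPoly m r x).eval q.2)) := by
          have c1 : Continuous fun q : ℝ × ℝ => cauchyWeight (q.1 + (triPrim m r x).eval q.2) :=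
            continuous_cauchyWeight.comp
              (continuous_fst.add ((triPrim m r x).continuous.comp continuous_snd))
          have c2 : Continuous fun q : ℝ × ℝ => cauchyWeight (h₀ * (triPoly m r x).eval q.2) :=
            continuous_cauchyWeight.comp
              (continuous_const.mul ((triPoly m r x).continuous.comp continuous_snd))
          exact c1.measurable.ennreal_ofReal.mul c2.measurable.ennreal_ofReal
        rw [lintegral_const_mul' _ _ ENNReal.ofReal_ne_top]
        congr 1
        rw [lintegral_lintegral_swap m1x.aemeasurable]
        refine lintegral_congr fun y => ?_
        rw [lintegral_mul_const' _ _ ENNReal.ofReal_ne_top, lintegral_cauchyWeight_add]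
    _ = _ := by
        simp_rw [lintegral_const_mul' _ _ ENNReal.ofReal_ne_top]
        unfold weightMean
        simp_rw [triPoly_smul]
        ring

lemma volume_section_fiberLevel_le (m : ℕ) (r : triangle m → ℝ) {σ : ℝ} (hσ : 0 < σ)
    (g : ℝ → ℝ) (hg : Measurable g) :
    volume {x | (x, g x) ∈ fiberLevel m r σ} ≤ ENNReal.ofReal (8 / σ) *
      weightMean m (fun p => σ / (4 * ((m + 2) * π)) * r p) := by
  set h₀ : ℝ := σ / (4 * ((m + 2) * π))
  set X := {x | (x, g x) ∈ fiberLevel m r σ}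
  have hX : MeasurableSet X := (measurable_id.prodMk hg) (measurableSet_fiberLevel m r σ)
  rw [← lintegral_indicator_one hX, weightMean, ← lintegral_const_mul' _ _ ENNReal.ofReal_ne_top,
    ← lintegral_indicator measurableSet_Icc]
  refine lintegral_mono fun x => ?_
  by_cases hx : x ∈ X
  · rw [indicator_of_mem hx, indicator_of_mem hx.1]
    refine (one_le_mul_lintegral_of_lt_fiberMean m r x (g x) hσ hx.2.1).trans ?_
    gcongr with y
    rw [triPoly_smul]
    refine (mul_le_mul' (ENNReal.ofReal_le_one.2 (cauchyWeight_le_one _)) le_rfl).trans ?_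
    rw [one_mul]
  · rw [indicator_of_notMem hx]
    exact zero_le

lemma exists_lintegral_volume_section_fiberLevel_le (m : ℕ) {s : ℝ}
    (hs : ((m + 2) * (m + 3) / 2 : ℝ) ≤ s) :
    ∃ C : ℝ≥0∞, C ≠ ⊤ ∧ ∀ (r : triangle m → ℝ) (σ : ℝ), 0 < σ →
      ∫⁻ f : Fin (m + 2) → ℝ,
        volume {x | (x, ∑ j, f j * x ^ (j : ℕ)) ∈ fiberLevel m r σ} ^ s ≤
      C * (ENNReal.ofReal (8 / σ) * weightMean m (fun p => σ / (4 * ((m + 2) * π)) * r p)) ^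
        (s - (m + 1) * (m + 2) / 2) := by
  obtain ⟨C, hC, h⟩ := exists_lintegral_volume_graph_rpow_le (m + 2) (by omega)
  refine ⟨C * ENNReal.ofReal π ^ (m + 2), ENNReal.mul_ne_top hC (by finiteness),
    fun r σ hσ => ?_⟩
  set W := ENNReal.ofReal (8 / σ) * weightMean m (fun p => σ / (4 * ((m + 2) * π)) * r p) with hW
  have hWtop : W ≠ ⊤ := ENNReal.mul_ne_top ENNReal.ofReal_ne_top
    (ne_top_of_le_ne_top ENNReal.one_ne_top (weightMean_le_one _ _))
  set t : ℝ := (m + 2) * (m + 3) / 2 with ht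
  have ht' : ((m + 2 : ℕ) : ℝ) * ((m + 2 : ℕ) + 1) / 2 = t := by rw [ht]; push_cast; ring
  have ht0 : 0 ≤ t := by positivity
  calc _ ≤ ∫⁻ f : Fin (m + 2) → ℝ,
        volume {x | (x, ∑ j, f j * x ^ (j : ℕ)) ∈ fiberLevel m r σ} ^ t * W ^ (s - t) := by
        refine lintegral_mono fun f => ?_
        conv_lhs => rw [← add_sub_cancel t s]
        rw [ENNReal.rpow_add_of_nonneg _ _ ht0 (by linarith)]
        refine mul_le_mul' le_rfl (ENNReal.rpow_le_rpow ?_ (by linarith))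
        exact volume_section_fiberLevel_le m r hσ _
          (continuous_finsetSum _ fun j _ => by fun_prop).measurable
    _ = (∫⁻ f : Fin (m + 2) → ℝ,
        volume {x | (x, ∑ j, f j * x ^ (j : ℕ)) ∈ fiberLevel m r σ} ^ t) * W ^ (s - t) :=
        lintegral_mul_const' _ _ (ENNReal.rpow_ne_top_of_nonneg (by linarith) hWtop)
    _ ≤ C * volume (fiberLevel m r σ) ^ (m + 2) * W ^ (s - t) := by
        gcongr
        rw [← ht']
        exact h _ (measurableSet_fiberLevel m r σ) fun q hq => hq.1
    _ ≤ C * (ENNReal.ofReal π * W) ^ (m + 2) * W ^ (s - t) := by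
        gcongr
        exact volume_fiberLevel_le m r hσ
    _ = _ := by
        rw [mul_pow, ← mul_assoc, mul_assoc, ← ENNReal.rpow_natCast W,
          ← ENNReal.rpow_add_of_nonneg _ _ (by positivity) (by linarith)]
        congr 2
        rw [ht]; push_cast; ring

lemma lintegral_tsum_weightMean_lt_top (m : ℕ) {e a c : ℝ} (hc : 0 < c)
    (ha : a + (m + 1) * (m + 2) / 2 < 0) (hJ : ∫⁻ r, weightMean m r ^ e < ⊤) :
    ∫⁻ r : triangle m → ℝ, ∑' j : ℕ, ENNReal.ofReal ((2 : ℝ) ^ (a * j)) *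
      weightMean m (fun p => c * (2 : ℝ) ^ (-(j : ℝ)) * r p) ^ e < ⊤ := by
  have hcard : (Fintype.card (triangle m) : ℝ) = (m + 1) * (m + 2) / 2 := by
    have := card_triangle m
    rw [eq_div_iff (by norm_num)]
    exact_mod_cast this
  have hG : Measurable fun r => weightMean m r ^ e := (measurable_weightMean m).pow_const e
  have hmul : ∀ j : ℕ, Measurable fun r : triangle m → ℝ =>
      weightMean m (fun p => c * (2 : ℝ) ^ (-(j : ℝ)) * r p) ^ e := fun j =>
    hG.comp (by fun_prop : Measurable fun (r : triangle m → ℝ) p => c * (2 : ℝ) ^ (-(j : ℝ)) * r p)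
  rw [lintegral_tsum fun j => ((hmul j).const_mul _).aemeasurable]
  set K : ℝ := (m + 1) * (m + 2) / 2
  have hterm : ∀ j : ℕ, ∫⁻ r : triangle m → ℝ, ENNReal.ofReal ((2 : ℝ) ^ (a * j)) *
      weightMean m (fun p => c * (2 : ℝ) ^ (-(j : ℝ)) * r p) ^ e =
      (ENNReal.ofReal (c ^ (-K)) * ∫⁻ r, weightMean m r ^ e) *
        ENNReal.ofReal ((2 : ℝ) ^ (a + K)) ^ j := by
    intro j
    rw [lintegral_const_mul _ (hmul j),
      lintegral_comp_diag (fun _ => c * (2 : ℝ) ^ (-(j : ℝ))) (fun _ => by positivity) _ hG,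
      Finset.prod_const, Finset.card_univ, abs_of_pos (by positivity), ← Real.rpow_natCast, hcard,
      ← ENNReal.ofReal_pow (by positivity), ← mul_assoc, ← ENNReal.ofReal_mul (by positivity),
      mul_right_comm, ← ENNReal.ofReal_mul (by positivity)]
    congr 2
    rw [← Real.rpow_neg (by positivity), Real.mul_rpow hc.le (by positivity),
      ← Real.rpow_mul (by norm_num), ← Real.rpow_natCast, ← Real.rpow_mul (by norm_num)]
    rw [mul_left_comm, ← Real.rpow_add (by norm_num)]
    congr 2
    ring
  simp_rw [hterm]
  rw [ENNReal.tsum_mul_left, ENNReal.tsum_geometric]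
  have hlt : (2 : ℝ) ^ (a + K) < 1 := Real.rpow_lt_one_of_one_lt_of_neg (by norm_num) ha
  refine ENNReal.mul_lt_top (ENNReal.mul_lt_top ENNReal.ofReal_lt_top hJ) ?_
  rw [ENNReal.inv_lt_top]
  exact tsub_pos_of_lt (ENNReal.ofReal_lt_one.2 hlt)

lemma exists_dyadic_scale {b : ℝ} (hb : 0 < b) (hb1 : b ≤ 1) :
    ∃ j : ℕ, (2 : ℝ) ^ (-(j : ℝ)) / 2 < b ∧ b ≤ (2 : ℝ) ^ (-(j : ℝ)) := by
  obtain ⟨j, h1, h2⟩ := exists_nat_pow_near_of_lt_one hb hb1 (y := (2 : ℝ)⁻¹) (by norm_num)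
    (by norm_num)
  refine ⟨j, ?_, ?_⟩
  · rw [Real.rpow_neg (by norm_num), Real.rpow_natCast, ← inv_pow]
    rw [pow_succ] at h1
    linarith
  · rw [Real.rpow_neg (by norm_num), Real.rpow_natCast, ← inv_pow]
    exact h2

lemma weightMean_succ (m : ℕ) (f : Fin (m + 2) → ℝ) (r : triangle m → ℝ) :
    weightMean (m + 1) (fun p => Sum.elim f r (triangleEquiv m p)) =
      ∫⁻ x in Icc (0 : ℝ) 1, fiberMean m r x (∑ j, f j * x ^ (j : ℕ)) := by
  unfold weightMean fiberMean
  simp_rw [triPoly_succ, Polynomial.eval_add, Polynomial.eval_C]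

lemma weightMean_succ_le (m : ℕ) (f : Fin (m + 2) → ℝ) (r : triangle m → ℝ) :
    weightMean (m + 1) (fun p => Sum.elim f r (triangleEquiv m p)) ≤
      ∑' j : ℕ, ENNReal.ofReal ((2 : ℝ) ^ (-(j : ℝ))) *
        volume {x | (x, ∑ i, f i * x ^ (i : ℕ)) ∈ fiberLevel m r ((2 : ℝ) ^ (-(j : ℝ)))} := by
  set X : ℕ → Set ℝ := fun j =>
    {x | (x, ∑ i, f i * x ^ (i : ℕ)) ∈ fiberLevel m r ((2 : ℝ) ^ (-(j : ℝ)))} with hXdef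
  have hX : ∀ j, MeasurableSet (X j) := fun j =>
    (by fun_prop : Measurable fun x : ℝ => (x, ∑ i, f i * x ^ (i : ℕ)))
      (measurableSet_fiberLevel m r _)
  rw [weightMean_succ, ← lintegral_indicator measurableSet_Icc]
  calc _ ≤ ∫⁻ x, ∑' j : ℕ, ENNReal.ofReal ((2 : ℝ) ^ (-(j : ℝ))) * (X j).indicator 1 x := by
        refine lintegral_mono fun x => ?_
        by_cases hx : x ∈ Icc (0 : ℝ) 1
        swap
        · rw [indicator_of_notMem hx]; exact zero_le
        rw [indicator_of_mem hx]
        set b := fiberMean m r x (∑ i, f i * x ^ (i : ℕ)) with hb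
        have hb1 : b ≤ 1 := fiberMean_le_one _ _ _ _
        rcases eq_or_ne b 0 with h0 | h0
        · rw [h0]; exact zero_le
        have hbt : b ≠ ⊤ := ne_top_of_le_ne_top ENNReal.one_ne_top hb1
        obtain ⟨j, h1, h2⟩ := exists_dyadic_scale (ENNReal.toReal_pos h0 hbt)
          (ENNReal.toReal_le_of_le_ofReal zero_le_one (by simpa using hb1))
        refine le_trans ?_ (ENNReal.le_tsum j)
        have hxj : x ∈ X j := by
          refine ⟨hx, ?_, ?_⟩
          · exact (ENNReal.ofReal_lt_iff_lt_toReal (by positivity) hbt).2 h1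
          · exact (ENNReal.le_ofReal_iff_toReal_le hbt (by positivity)).2 h2
        rw [indicator_of_mem hxj, Pi.one_apply, mul_one]
        exact (ENNReal.le_ofReal_iff_toReal_le hbt (by positivity)).2 h2
    _ = _ := by
        rw [lintegral_tsum fun j =>
          ((measurable_one.indicator (hX j)).const_mul _).aemeasurable]
        congr 1
        ext j
        rw [lintegral_const_mul _ (measurable_one.indicator (hX j)),
          lintegral_indicator_one (hX j)]

/-- The exponent `m (m + 1) (m + 2) / 6 + 2`. -/
def critExponent (m : ℕ) : ℝ := m * (m + 1) * (m + 2) / 6 + 2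

lemma critExponent_succ (m : ℕ) :
    critExponent (m + 1) = critExponent m + (m + 1) * (m + 2) / 2 := by
  unfold critExponent
  push_cast
  ring

lemma le_critExponent_succ (m : ℕ) : ((m + 2) * (m + 3) / 2 : ℝ) ≤ critExponent (m + 1) := by
  unfold critExponent
  push_cast
  rcases m with _ | _ | m
  · norm_num
  · norm_num
  · push_cast
    have : (0 : ℝ) ≤ m := Nat.cast_nonneg m
    nlinarith [mul_nonneg this this, mul_nonneg (mul_nonneg this this) this]

instance : Unique (triangle 0) where
  default := ⟨(0, 0), by simp [mem_triangle]⟩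
  uniq p := by
    rcases p with ⟨⟨i, j⟩, h⟩
    have := mem_triangle.1 h
    simp only [Nat.le_zero, Nat.add_eq_zero_iff] at this
    ext <;> simp [this.1, this.2]

lemma lintegral_weightMean_zero_lt_top {s : ℝ} (hs : 1 ≤ s) :
    ∫⁻ r, weightMean 0 r ^ s < ⊤ := by
  have h1 : ∀ r, weightMean 0 r ^ s ≤ ENNReal.ofReal (cauchyWeight (r default)) := by
    intro r
    have : weightMean 0 r = ENNReal.ofReal (cauchyWeight (r default)) := by
      have h2 : ∀ x y, (triPoly 0 r x).eval y = r default := by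
        intro x y
        rw [eval_triPoly, Fintype.sum_unique]
        change r default * x ^ 0 / (Nat.factorial 0 : ℝ) * y ^ 0 = _
        simp
      unfold weightMean
      simp [h2]
    rw [← this]
    exact ENNReal.rpow_le_self_of_le_one (weightMean_le_one _ _) hs
  refine (lintegral_mono h1).trans_lt ?_
  have := (volume_preserving_funUnique (triangle 0) ℝ).lintegral_comp
    (f := fun t => ENNReal.ofReal (cauchyWeight t)) measurable_cauchyWeight.ennreal_ofReal
  simp only [MeasurableEquiv.funUnique_apply] at this
  rw [lintegral_cauchyWeight] at this
  refine lt_of_eq_of_lt ?_ (lt_of_eq_of_lt this ENNReal.ofReal_lt_top)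
  congr!

/-- The convergence exponent of the sublevel integrals. -/
lemma lintegral_weightMean_lt_top (m : ℕ) :
    ∀ s : ℝ, critExponent m < s → ∫⁻ r, weightMean m r ^ s < ⊤ := by
  induction m with
  | zero =>
    intro s hs
    refine lintegral_weightMean_zero_lt_top ?_
    unfold critExponent at hs
    norm_num at hs
    linarith
  | succ m ih =>
    intro s hs
    set η : ℝ := (s - critExponent (m + 1)) / 2 with hη
    have hηpos : 0 < η := by rw [hη]; linarith
    set s' := s - η with hs'
    set e := s' - (m + 1) * (m + 2) / 2 with he
    have hs'1 : ((m + 2) * (m + 3) / 2 : ℝ) ≤ s' := by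
      have := le_critExponent_succ m
      rw [hs', hη]; linarith
    have hs'0 : 0 < s' := lt_of_lt_of_le (by positivity) hs'1
    have hs0 : 0 < s := by rw [hs'] at hs'0; linarith
    have he1 : critExponent m < e := by
      rw [critExponent_succ] at hη
      rw [critExponent_succ] at hs
      rw [he, hs', hη]
      linarith
    have he0 : 0 ≤ e := by
      refine le_trans ?_ he1.le
      unfold critExponent; positivity
    obtain ⟨C₁, hC₁, hsum⟩ := exists_tsum_rpow_le hs0 (half_pos hηpos)
    obtain ⟨C₂, hC₂, hsec⟩ := exists_lintegral_volume_section_fiberLevel_le m hs'1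
    set c₀ : ℝ := (4 * ((m + 2) * π))⁻¹ with hc₀
    have hc₀pos : 0 < c₀ := by positivity
    rw [lintegral_pi_split_symm (triangleEquiv m) _
      ((measurable_weightMean (m + 1)).pow_const s)]
    have hfin := lintegral_tsum_weightMean_lt_top m (e := e) (a := η / 2 - s + e) hc₀pos
      (by rw [he, hs']; linarith) (ih e he1)
    have hK : C₁ * (C₂ * ENNReal.ofReal (8 ^ e)) ≠ ⊤ :=
      ENNReal.mul_ne_top hC₁ (ENNReal.mul_ne_top hC₂ ENNReal.ofReal_ne_top)
    refine lt_of_le_of_lt ?_ (ENNReal.mul_lt_top hK.lt_top hfin)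
    rw [← lintegral_const_mul' _ _ hK]
    refine lintegral_mono fun r => ?_
    have hmeas : ∀ j : ℕ, Measurable fun f : Fin (m + 2) → ℝ =>
        volume {x | (x, ∑ i, f i * x ^ (i : ℕ)) ∈ fiberLevel m r ((2 : ℝ) ^ (-(j : ℝ)))} := by
      intro j
      have h1 : Continuous fun q : (Fin (m + 2) → ℝ) × ℝ =>
          (q.2, ∑ i, q.1 i * q.2 ^ (i : ℕ)) := by fun_prop
      exact measurable_measure_prodMk_left
        (h1.measurable (measurableSet_fiberLevel m r ((2 : ℝ) ^ (-(j : ℝ)))))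
    calc ∫⁻ f : Fin (m + 2) → ℝ,
          weightMean (m + 1) (fun p => Sum.elim f r (triangleEquiv m p)) ^ s
        ≤ ∫⁻ f : Fin (m + 2) → ℝ, C₁ * ∑' j : ℕ, ENNReal.ofReal ((2 : ℝ) ^ (η / 2 * j)) *
            (ENNReal.ofReal ((2 : ℝ) ^ (-(j : ℝ))) *
        volume {x | (x, ∑ i, f i * x ^ (i : ℕ)) ∈ fiberLevel m r ((2 : ℝ) ^ (-(j : ℝ)))}) ^ s :=
          lintegral_mono fun f => (ENNReal.rpow_le_rpow (weightMean_succ_le m f r) hs0.le).trans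
            (hsum _)
      _ = C₁ * ∑' j : ℕ, ∫⁻ f : Fin (m + 2) → ℝ, ENNReal.ofReal ((2 : ℝ) ^ (η / 2 * j)) *
            (ENNReal.ofReal ((2 : ℝ) ^ (-(j : ℝ))) *
        volume {x | (x, ∑ i, f i * x ^ (i : ℕ)) ∈ fiberLevel m r ((2 : ℝ) ^ (-(j : ℝ)))}) ^ s := by
          rw [lintegral_const_mul' _ _ hC₁, lintegral_tsum fun j =>
            ((((hmeas j).const_mul _).pow_const s).const_mul _).aemeasurable]
      _ ≤ C₁ * ∑' j : ℕ, (C₂ * ENNReal.ofReal (8 ^ e)) *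
            (ENNReal.ofReal ((2 : ℝ) ^ ((η / 2 - s + e) * j)) *
              weightMean m (fun p => c₀ * (2 : ℝ) ^ (-(j : ℝ)) * r p) ^ e) := by
          gcongr with j
          calc _ ≤ ∫⁻ f : Fin (m + 2) → ℝ, ENNReal.ofReal ((2 : ℝ) ^ ((η / 2 - s) * j)) *
                volume {x | (x, ∑ i, f i * x ^ (i : ℕ)) ∈
                  fiberLevel m r ((2 : ℝ) ^ (-(j : ℝ)))} ^ s' := by
                refine lintegral_mono fun f => ?_
                rw [ENNReal.mul_rpow_of_nonneg _ _ hs0.le, ← mul_assoc,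
                  ENNReal.ofReal_rpow_of_pos (by positivity),
                  ← ENNReal.ofReal_mul (by positivity), ← Real.rpow_mul (by norm_num),
                  ← Real.rpow_add (by norm_num)]
                refine mul_le_mul' (le_of_eq ?_) ?_
                · congr 2; ring
                · refine ENNReal.rpow_le_rpow_of_exponent_ge ?_ (by rw [hs']; linarith)
                  refine (measure_mono (fun x hx => hx.1 : _ ⊆ Icc (0 : ℝ) 1)).trans ?_
                  simp
            _ ≤ _ := by
                rw [lintegral_const_mul' _ _ ENNReal.ofReal_ne_top]
                refine (mul_le_mul' le_rfl (hsec r _ (by positivity))).trans (le_of_eq ?_)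
                rw [ENNReal.mul_rpow_of_nonneg _ _ he0, ENNReal.ofReal_rpow_of_pos (by positivity)]
                have e1 : (fun p => (2 : ℝ) ^ (-(j : ℝ)) / (4 * ((m + 2) * π)) * r p) =
                    fun p => c₀ * (2 : ℝ) ^ (-(j : ℝ)) * r p := by
                  ext p; rw [hc₀]; ring
                have e2 : (2 : ℝ) ^ ((η / 2 - s + e) * j) =
                    (2 : ℝ) ^ ((η / 2 - s) * j) * (2 : ℝ) ^ (e * j) := by
                  rw [← Real.rpow_add (by norm_num)]; congr 1; ring
                have e3 : (8 / (2 : ℝ) ^ (-(j : ℝ))) ^ e = 8 ^ e * (2 : ℝ) ^ (e * j) := by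
                  rw [Real.rpow_neg (by norm_num), div_inv_eq_mul,
                    Real.mul_rpow (by norm_num) (by positivity), ← Real.rpow_mul (by norm_num),
                    mul_comm e]
                rw [e1, e2, e3, ENNReal.ofReal_mul (by positivity),
                  ENNReal.ofReal_mul (by positivity)]
                ring
      _ = _ := by
          rw [ENNReal.tsum_mul_left]
          ring

lemma aeval_esymm_eq_of_psum_eq {n : ℕ} {x y : Fin n → ℝ}
    (h : ∀ j : Fin n, ∑ i, x i ^ (j + 1 : ℕ) = ∑ i, y i ^ (j + 1 : ℕ)) (j : ℕ) (hj : j ≤ n) :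
    MvPolynomial.aeval x (MvPolynomial.esymm (Fin n) ℝ j) =
      MvPolynomial.aeval y (MvPolynomial.esymm (Fin n) ℝ j) := by
  induction j using Nat.strong_induction_on with
  | _ j ih =>
    rcases Nat.eq_zero_or_pos j with rfl | hpos
    · simp
    have key : ∀ z : Fin n → ℝ, (j : ℝ) * MvPolynomial.aeval z (MvPolynomial.esymm (Fin n) ℝ j) =
        (-1) ^ (j + 1) * ∑ a ∈ Finset.HasAntidiagonal.antidiagonal j with a.1 < j,
          (-1) ^ a.1 * MvPolynomial.aeval z (MvPolynomial.esymm (Fin n) ℝ a.1) *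
            ∑ i, z i ^ a.2 := by
      intro z
      have := congrArg (MvPolynomial.aeval z) (MvPolynomial.mul_esymm_eq_sum (Fin n) ℝ j)
      simpa [MvPolynomial.psum] using this
    have hj0 : (j : ℝ) ≠ 0 := by positivity
    apply mul_left_cancel₀ hj0
    rw [key x, key y]
    congr 1
    refine Finset.sum_congr rfl fun a ha => ?_
    rw [Finset.mem_filter, Finset.HasAntidiagonal.mem_antidiagonal] at ha
    rw [ih a.1 ha.2 (by omega)]
    congr 1
    have := h ⟨a.2 - 1, by omega⟩
    have h2 : a.2 - 1 + 1 = a.2 := by omega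
    simpa only [h2] using this

lemma map_eq_map_of_psum_eq {n : ℕ} {x y : Fin n → ℝ}
    (h : ∀ j : Fin n, ∑ i, x i ^ (j + 1 : ℕ) = ∑ i, y i ^ (j + 1 : ℕ)) :
    Finset.univ.val.map x = Finset.univ.val.map y := by
  have hprod : ((Finset.univ.val.map x).map fun t => Polynomial.X - Polynomial.C t).prod =
      ((Finset.univ.val.map y).map fun t => Polynomial.X - Polynomial.C t).prod := by
    rw [Multiset.prod_X_sub_X_eq_sum_esymm, Multiset.prod_X_sub_X_eq_sum_esymm]
    simp only [Multiset.card_map, Finset.card_val, Finset.card_univ, Fintype.card_fin]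
    refine Finset.sum_congr rfl fun j hj => ?_
    have := aeval_esymm_eq_of_psum_eq h j (by simpa [Nat.lt_succ_iff] using hj)
    rw [MvPolynomial.aeval_esymm_eq_multiset_esymm, MvPolynomial.aeval_esymm_eq_multiset_esymm]
      at this
    rw [this]
  have := congrArg Polynomial.roots hprod
  rwa [Polynomial.roots_multiset_prod_X_sub_C, Polynomial.roots_multiset_prod_X_sub_C] at this

/-- The power sum map `y ↦ (∑ᵢ yᵢ ^ (j + 1))ⱼ`. -/
def psumMap (n : ℕ) (y : Fin n → ℝ) (j : Fin n) : ℝ := ∑ i, y i ^ (j + 1 : ℕ)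

lemma continuous_psumMap (n : ℕ) : Continuous (psumMap n) := by
  unfold psumMap
  fun_prop

lemma injOn_psumMap {n : ℕ} (τ : Equiv.Perm (Fin n)) :
    InjOn (psumMap n) {y | StrictMono (y ∘ τ)} := by
  intro x hx y hy h
  have h1 := map_eq_map_of_psum_eq (fun j => congrFun h j)
  have hr : range (x ∘ τ) = range (y ∘ τ) := by
    rw [τ.surjective.range_comp, τ.surjective.range_comp]
    ext t
    have := congrArg (t ∈ ·) h1
    simpa using this
  have h2 := (StrictMono.range_inj hx hy).1 hr
  ext i
  simpa using congrFun h2 (τ.symm i)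

lemma hasFDerivAt_psumMap (n : ℕ) (y : Fin n → ℝ) :
    HasFDerivAt (psumMap n) (Matrix.toLin' (Matrix.of fun j i : Fin n =>
      (j + 1 : ℝ) * y i ^ (j : ℕ))).toContinuousLinearMap y := by
  rw [hasFDerivAt_pi']
  intro j
  have h1 : HasFDerivAt (fun z : Fin n → ℝ => ∑ i, z i ^ (j + 1 : ℕ))
      (∑ i, ((j + 1 : ℕ) * y i ^ (j : ℕ)) • ContinuousLinearMap.proj (R := ℝ) (φ := fun _ => ℝ) i)
      y := by
    refine HasFDerivAt.fun_sum fun i _ => ?_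
    have h2 : HasFDerivAt (fun z : Fin n → ℝ => z i)
        (ContinuousLinearMap.proj (R := ℝ) (φ := fun _ => ℝ) i) y := hasFDerivAt_apply i y
    simpa using h2.pow (j + 1)
  refine h1.congr_fderiv ?_
  ext v
  simp [Matrix.mulVec, dotProduct]

lemma abs_det_psumMap (n : ℕ) (y : Fin n → ℝ) :
    |(Matrix.toLin' (Matrix.of fun j i : Fin n =>
      (j + 1 : ℝ) * y i ^ (j : ℕ))).toContinuousLinearMap.det| = n.factorial * absVandermonde y := by
  have h1 : (Matrix.of fun j i : Fin n => (j + 1 : ℝ) * y i ^ (j : ℕ)) =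
      Matrix.diagonal (fun j : Fin n => (j + 1 : ℝ)) * (Matrix.vandermonde y).transpose := by
    ext j i
    simp [Matrix.diagonal_mul, Matrix.vandermonde]
  rw [ContinuousLinearMap.det, LinearMap.coe_toContinuousLinearMap, LinearMap.det_toLin', h1,
    Matrix.det_mul, Matrix.det_diagonal, Matrix.det_transpose, abs_mul, absVandermonde]
  congr 1
  rw [Fin.prod_univ_eq_prod_range (fun i : ℕ => ((i : ℝ) + 1)) n, ← Finset.prod_range_add_one_eq_factorial]
  push_cast
  exact abs_of_nonneg (Finset.prod_nonneg fun i _ => by positivity)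

lemma measurableSet_strictMono_comp {n : ℕ} (τ : Equiv.Perm (Fin n)) :
    MeasurableSet {y : Fin n → ℝ | StrictMono (y ∘ τ)} := by
  have : {y : Fin n → ℝ | StrictMono (y ∘ τ)} =
      ⋂ (i : Fin n) (j : Fin n) (_ : i < j), {y | y (τ i) < y (τ j)} := by
    ext y
    simp [StrictMono]
  rw [this]
  refine MeasurableSet.iInter fun i => MeasurableSet.iInter fun j => MeasurableSet.iInter fun _ => ?_
  exact measurableSet_lt (measurable_pi_apply _) (measurable_pi_apply _)

lemma exists_strictMono_comp_of_absVandermonde_ne_zero {n : ℕ} {y : Fin n → ℝ}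
    (h : absVandermonde y ≠ 0) : ∃ τ : Equiv.Perm (Fin n), StrictMono (y ∘ τ) := by
  rw [absVandermonde, abs_ne_zero, Matrix.det_vandermonde_ne_zero_iff] at h
  refine ⟨Tuple.sort y, (Tuple.monotone_sort y).strictMono_of_injective ?_⟩
  exact h.comp (Tuple.sort y).injective

lemma lintegral_absVandermonde_mul_comp_psumMap_le (n : ℕ) (G : (Fin n → ℝ) → ℝ≥0∞)
    (hG : Measurable G) :
    ∫⁻ y, ENNReal.ofReal (absVandermonde y) * G (psumMap n y) ≤ ∫⁻ w, G w := by
  have hm : Measurable fun y : Fin n → ℝ => ENNReal.ofReal (absVandermonde y) * G (psumMap n y) :=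
    continuous_absVandermonde.measurable.ennreal_ofReal.mul
      (hG.comp (continuous_psumMap n).measurable)
  have hτ : ∀ τ : Equiv.Perm (Fin n),
      n.factorial * ∫⁻ y in {y | StrictMono (y ∘ τ)}, ENNReal.ofReal (absVandermonde y) *
        G (psumMap n y) ≤ ∫⁻ w, G w := by
    intro τ
    have := lintegral_image_eq_lintegral_abs_det_fderiv_mul volume (measurableSet_strictMono_comp τ)
      (fun y _ => (hasFDerivAt_psumMap n y).hasFDerivWithinAt) (injOn_psumMap τ) G
    rw [← lintegral_const_mul _ hm]
    refine le_trans (le_of_eq ?_) (setLIntegral_le_lintegral (psumMap n '' {y | StrictMono (y ∘ τ)}) G)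
    rw [this]
    refine lintegral_congr fun y => ?_
    rw [abs_det_psumMap, ENNReal.ofReal_mul (by positivity), ENNReal.ofReal_natCast, mul_assoc]
  have hcover : ∫⁻ y, ENNReal.ofReal (absVandermonde y) * G (psumMap n y) ≤
      ∑ τ : Equiv.Perm (Fin n), ∫⁻ y in {y | StrictMono (y ∘ τ)},
        ENNReal.ofReal (absVandermonde y) * G (psumMap n y) := by
    simp_rw [← lintegral_indicator (measurableSet_strictMono_comp _)]
    rw [← lintegral_finsetSum _ fun τ _ => hm.indicator (measurableSet_strictMono_comp τ)]
    refine lintegral_mono fun y => ?_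
    by_cases hy : absVandermonde y = 0
    · simp [hy]
    obtain ⟨τ, hτ⟩ := exists_strictMono_comp_of_absVandermonde_ne_zero hy
    refine le_trans ?_ (Finset.single_le_sum (fun _ _ => zero_le) (Finset.mem_univ τ))
    rw [indicator_of_mem (show y ∈ {y : Fin n → ℝ | StrictMono (y ∘ τ)} from hτ)]
  have hf : (n.factorial : ℝ≥0∞) ≠ 0 := by exact_mod_cast n.factorial_ne_zero
  have hf' : (n.factorial : ℝ≥0∞) ≠ ⊤ := ENNReal.natCast_ne_top _
  rw [← ENNReal.mul_le_mul_iff_right hf hf']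
  calc _ ≤ n.factorial * ∑ τ : Equiv.Perm (Fin n), ∫⁻ y in {y | StrictMono (y ∘ τ)},
        ENNReal.ofReal (absVandermonde y) * G (psumMap n y) := by gcongr
    _ ≤ ∑ τ : Equiv.Perm (Fin n), ∫⁻ w, G w := by
        rw [Finset.mul_sum]
        exact Finset.sum_le_sum fun τ _ => hτ τ
    _ = _ := by
        rw [Finset.sum_const, Finset.card_univ, Fintype.card_perm, Fintype.card_fin, nsmul_eq_mul]

/-- The Fourier transform of `f ↦ exp (-c ∑ fᵢ²)`. -/
def gaussKernel (c : ℝ) {n : ℕ} (u : Fin n → ℝ) : ℝ :=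
  ∏ i, ((π / c) ^ (1 / 2 : ℝ) * Real.exp (-(π ^ 2 / c) * u i ^ 2))

lemma gaussKernel_nonneg {c : ℝ} (hc : 0 < c) {n : ℕ} (u : Fin n → ℝ) : 0 ≤ gaussKernel c u :=
  Finset.prod_nonneg fun i _ => by positivity

@[fun_prop]
lemma continuous_gaussKernel (c : ℝ) {n : ℕ} :
    Continuous (gaussKernel c : (Fin n → ℝ) → ℝ) := by
  unfold gaussKernel
  fun_prop

lemma integral_gauss_mul_expChar {c : ℝ} (hc : 0 < c) {n : ℕ} (u : Fin n → ℝ) :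
    ∫ f : Fin n → ℝ, (Real.exp (-c * ∑ i, f i ^ 2) : ℂ) * expChar (∑ i, f i * u i) =
      (gaussKernel c u : ℂ) := by
  have h := GaussianFourier.integral_cexp_neg_sum_mul_add (ι := Fin n) (b := fun _ => (c : ℂ))
    (fun _ => by simpa using hc) (fun i => 2 * π * Complex.I * u i)
  have h1 : ∀ f : Fin n → ℝ,
      (Real.exp (-c * ∑ i, f i ^ 2) : ℂ) * expChar (∑ i, f i * u i) =
      Complex.exp (-∑ i, (c : ℂ) * (f i : ℂ) ^ 2 + ∑ i, 2 * π * Complex.I * u i * f i) := by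
    intro f
    rw [expChar, Complex.ofReal_exp, ← Complex.exp_add]
    congr 1
    push_cast
    rw [Finset.mul_sum, Finset.mul_sum, ← Finset.sum_neg_distrib]
    congr 1
    · exact Finset.sum_congr rfl fun i _ => by ring
    · exact Finset.sum_congr rfl fun i _ => by ring
  simp_rw [h1]
  rw [h, gaussKernel]
  push_cast
  refine Finset.prod_congr rfl fun i _ => ?_
  congr 1
  · rw [Complex.ofReal_cpow (by positivity)]
    push_cast
    rfl
  · congr 1
    have : (2 * (π : ℂ) * Complex.I * u i) ^ 2 = -(4 * π ^ 2 * (u i : ℂ) ^ 2) := by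
      rw [mul_pow, mul_pow, mul_pow, Complex.I_sq]; ring
    rw [this]
    have hc' : (c : ℂ) ≠ 0 := by exact_mod_cast hc.ne'
    field_simp

lemma lintegral_gaussKernel {c : ℝ} (hc : 0 < c) (n : ℕ) :
    ∫⁻ u : Fin n → ℝ, ENNReal.ofReal (gaussKernel c u) = 1 := by
  have h1 : ∀ u : Fin n → ℝ, ENNReal.ofReal (gaussKernel c u) =
      ∏ i, ENNReal.ofReal ((π / c) ^ (1 / 2 : ℝ) * Real.exp (-(π ^ 2 / c) * u i ^ 2)) := fun u =>
    ENNReal.ofReal_prod_of_nonneg fun i _ => by positivity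
  simp_rw [h1]
  rw [lintegral_fin_prod (fun _ t =>
    ENNReal.ofReal ((π / c) ^ (1 / 2 : ℝ) * Real.exp (-(π ^ 2 / c) * t ^ 2)))
    (fun _ => by fun_prop)]
  refine Finset.prod_eq_one fun i _ => ?_
  rw [← ofReal_integral_eq_lintegral_ofReal
    ((integrable_exp_neg_mul_sq (by positivity)).const_mul _)
    (Filter.Eventually.of_forall fun t => by positivity), integral_const_mul, integral_gaussian,
    ← Real.sqrt_eq_rpow, ← Real.sqrt_mul (by positivity)]
  have : π / c * (π / (π ^ 2 / c)) = 1 := by field_simp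
  rw [this]
  simp

lemma integrable_gauss {c : ℝ} (hc : 0 < c) (n : ℕ) :
    Integrable fun f : Fin n → ℝ => Real.exp (-c * ∑ i, f i ^ 2) := by
  have : (fun f : Fin n → ℝ => Real.exp (-c * ∑ i, f i ^ 2)) =
      fun f => ∏ i, Real.exp (-c * f i ^ 2) := by
    ext f
    rw [Finset.mul_sum, Real.exp_sum]
  rw [this]
  exact Integrable.fintype_prod (f := fun (_ : Fin n) (t : ℝ) => Real.exp (-c * t ^ 2))
    (fun _ => integrable_exp_neg_mul_sq hc)

lemma lintegral_normSq_mul_gauss_le {A : Type*} [MeasureSpace A] [SigmaFinite (volume : Measure A)]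
    {n : ℕ} {Φ : A → Fin n → ℝ} (hΦ : Measurable Φ) {G : A → ℂ} (hG : Integrable G) {c : ℝ}
    (hc : 0 < c) :
    ∫⁻ f : Fin n → ℝ, ENNReal.ofReal (‖∫ x, G x * expChar (∑ i, f i * Φ x i)‖ ^ 2 *
      Real.exp (-c * ∑ i, f i ^ 2)) ≤
    ∫⁻ z : A × A, ‖G z.1‖ₑ * ‖G z.2‖ₑ * ENNReal.ofReal (gaussKernel c (Φ z.1 - Φ z.2)) := by
  set H : (Fin n → ℝ) → A × A → ℂ := fun f z => (Real.exp (-c * ∑ i, f i ^ 2) : ℂ) *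
    (G z.1 * (starRingEnd ℂ) (G z.2)) * expChar (∑ i, f i * (Φ z.1 - Φ z.2) i) with hH
  have hGc : Integrable fun x => (starRingEnd ℂ) (G x) := by
    have := (Complex.conjLIE.toContinuousLinearEquiv.toContinuousLinearMap).integrable_comp hG
    exact this
  have hsq : ∀ f, ((‖∫ x, G x * expChar (∑ i, f i * Φ x i)‖ ^ 2 *
      Real.exp (-c * ∑ i, f i ^ 2) : ℝ) : ℂ) = ∫ z, H f z := by
    intro f
    calc ((‖∫ x, G x * expChar (∑ i, f i * Φ x i)‖ ^ 2 *
          Real.exp (-c * ∑ i, f i ^ 2) : ℝ) : ℂ)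
        = (Real.exp (-c * ∑ i, f i ^ 2) : ℂ) * ((∫ x, G x * expChar (∑ i, f i * Φ x i)) *
            ∫ x, (starRingEnd ℂ) (G x * expChar (∑ i, f i * Φ x i))) := by
          rw [integral_conj, Complex.mul_conj']
          push_cast
          ring
      _ = ∫ z, H f z := by
          rw [← integral_prod_mul, ← integral_const_mul]
          refine integral_congr_ae (Filter.Eventually.of_forall fun z => ?_)
          simp only [hH, map_mul, conj_expChar, Pi.sub_apply, mul_sub, Finset.sum_sub_distrib]
          rw [sub_eq_add_neg, expChar_add]
          ring
  have hHint : Integrable (Function.uncurry H)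
      ((volume : Measure (Fin n → ℝ)).prod (volume : Measure (A × A))) := by
    have h1 : Integrable (fun q : (Fin n → ℝ) × (A × A) => (Real.exp (-c * ∑ i, q.1 i ^ 2) : ℂ) *
        (G q.2.1 * (starRingEnd ℂ) (G q.2.2))) (volume.prod (volume.prod volume)) :=
      (integrable_gauss hc n).ofReal.mul_prod (hG.mul_prod hGc)
    refine h1.mul_bdd (c := 1) ?_ (Filter.Eventually.of_forall fun q => (norm_expChar _).le)
    refine (continuous_expChar.measurable.comp ?_).aestronglyMeasurable
    refine Finset.measurable_sum _ fun i _ => ?_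
    refine ((measurable_pi_apply i).comp measurable_fst).mul ?_
    exact (measurable_pi_apply i).comp
      ((hΦ.comp (measurable_fst.comp measurable_snd)).sub
        (hΦ.comp (measurable_snd.comp measurable_snd)))
  have hint : Integrable fun f : Fin n → ℝ => (‖∫ x, G x * expChar (∑ i, f i * Φ x i)‖ ^ 2 *
      Real.exp (-c * ∑ i, f i ^ 2) : ℝ) := by
    have h1 := hHint.integral_prod_left
    have h2 := h1.re
    refine h2.congr (Filter.Eventually.of_forall fun f => ?_)
    have := hsq f
    simp only [Function.uncurry_apply_pair]
    rw [← this]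
    exact Complex.ofReal_re _
  rw [← ofReal_integral_eq_lintegral_ofReal hint
    (Filter.Eventually.of_forall fun f => by positivity)]
  have hnn : 0 ≤ ∫ f : Fin n → ℝ, ‖∫ x, G x * expChar (∑ i, f i * Φ x i)‖ ^ 2 *
      Real.exp (-c * ∑ i, f i ^ 2) := integral_nonneg fun f => by positivity
  have hval : ((∫ f : Fin n → ℝ, ‖∫ x, G x * expChar (∑ i, f i * Φ x i)‖ ^ 2 *
      Real.exp (-c * ∑ i, f i ^ 2) : ℝ) : ℂ) = ∫ z, ∫ f, H f z := by
    rw [← integral_complex_ofReal]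
    simp_rw [hsq]
    exact integral_integral_swap hHint
  have hnorm : ENNReal.ofReal (∫ f : Fin n → ℝ, ‖∫ x, G x * expChar (∑ i, f i * Φ x i)‖ ^ 2 *
      Real.exp (-c * ∑ i, f i ^ 2)) = ‖∫ z, ∫ f, H f z‖ₑ := by
    rw [← hval, ← ofReal_norm, Complex.norm_real, Real.norm_of_nonneg hnn]
  rw [hnorm]
  refine (enorm_integral_le_lintegral_enorm _).trans (le_of_eq ?_)
  refine lintegral_congr fun z => ?_
  have : ∫ f, H f z = (G z.1 * (starRingEnd ℂ) (G z.2)) * (gaussKernel c (Φ z.1 - Φ z.2) : ℂ) := by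
    rw [← integral_gauss_mul_expChar hc, ← integral_const_mul]
    refine integral_congr_ae (Filter.Eventually.of_forall fun f => ?_)
    simp only [hH]
    ring
  rw [this, enorm_mul, enorm_mul]
  congr 1
  · congr 1
    rw [← ofReal_norm, ← ofReal_norm, RCLike.norm_conj]
  · rw [← ofReal_norm, Complex.norm_real, Real.norm_of_nonneg (gaussKernel_nonneg hc _)]

lemma enorm_mul_enorm_le_of_weights {a b u v : ℝ≥0∞} (ha : a ≠ ⊤) (hb : b ≠ ⊤)
    (hu : a ≠ 0 → u ≠ 0) (hv : b ≠ 0 → v ≠ 0) (hu' : u ≠ ⊤) (hv' : v ≠ ⊤) :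
    a * b ≤ a ^ 2 * u⁻¹ * v + b ^ 2 * v⁻¹ * u := by
  rcases eq_or_ne a 0 with rfl | ha0
  · simp
  rcases eq_or_ne b 0 with rfl | hb0
  · simp
  have hu0 := hu ha0
  have hv0 := hv hb0
  rcases le_total (b * u) (a * v) with h | h
  · refine le_trans ?_ le_self_add
    calc a * b = a * u⁻¹ * (b * u) := by
          rw [show a * u⁻¹ * (b * u) = a * b * (u⁻¹ * u) by ring, ENNReal.inv_mul_cancel hu0 hu',
            mul_one]
      _ ≤ a * u⁻¹ * (a * v) := mul_le_mul' le_rfl h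
      _ = _ := by ring
  · refine le_trans ?_ le_add_self
    calc a * b = b * v⁻¹ * (a * v) := by
          rw [show b * v⁻¹ * (a * v) = a * b * (v⁻¹ * v) by ring, ENNReal.inv_mul_cancel hv0 hv',
            mul_one]
      _ ≤ b * v⁻¹ * (b * u) := mul_le_mul' le_rfl h
      _ = _ := by ring

lemma lintegral_normSq_mul_gauss_psumMap_le {n : ℕ} {G : (Fin n → ℝ) → ℂ} (hG : Integrable G)
    (hGm : Measurable G)
    (hV : ∀ x, G x ≠ 0 → absVandermonde x ≠ 0) {c : ℝ} (hc : 0 < c) :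
    ∫⁻ f : Fin n → ℝ, ENNReal.ofReal (‖∫ x, G x * expChar (∑ i, f i * psumMap n x i)‖ ^ 2 *
      Real.exp (-c * ∑ i, f i ^ 2)) ≤
    2 * ∫⁻ x, ‖G x‖ₑ ^ 2 * (ENNReal.ofReal (absVandermonde x))⁻¹ := by
  refine (lintegral_normSq_mul_gauss_le (continuous_psumMap n).measurable hG hc).trans ?_
  set V : (Fin n → ℝ) → ℝ≥0∞ := fun x => ENNReal.ofReal (absVandermonde x) with hVdef
  set K : (Fin n → ℝ) → ℝ≥0∞ := fun u => ENNReal.ofReal (gaussKernel c u) with hK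
  have hVm : Measurable V := continuous_absVandermonde.measurable.ennreal_ofReal
  have hKm : Measurable K := (continuous_gaussKernel c).measurable.ennreal_ofReal
  have hΦm := (continuous_psumMap n).measurable
  set g : (Fin n → ℝ) → ℝ≥0∞ := fun x => ‖G x‖ₑ ^ 2 * (V x)⁻¹ with hg
  have hgm : Measurable g := (hGm.enorm.pow_const 2).mul hVm.inv
  have hpt : ∀ z : (Fin n → ℝ) × (Fin n → ℝ),
      ‖G z.1‖ₑ * ‖G z.2‖ₑ * K (psumMap n z.1 - psumMap n z.2) ≤
      g z.1 * (V z.2 * K (psumMap n z.1 - psumMap n z.2)) +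
        g z.2 * (V z.1 * K (psumMap n z.1 - psumMap n z.2)) := by
    intro z
    have hnz : ∀ x, ‖G x‖ₑ ≠ 0 → V x ≠ 0 := by
      intro x hx
      rw [hVdef]
      have := hV x (by simpa using hx)
      simpa using lt_of_le_of_ne (absVandermonde_nonneg x) this.symm
    have := enorm_mul_enorm_le_of_weights (a := ‖G z.1‖ₑ) (b := ‖G z.2‖ₑ) (u := V z.1) (v := V z.2)
      enorm_ne_top enorm_ne_top (hnz _) (hnz _) ENNReal.ofReal_ne_top ENNReal.ofReal_ne_top
    calc _ ≤ (‖G z.1‖ₑ ^ 2 * (V z.1)⁻¹ * V z.2 + ‖G z.2‖ₑ ^ 2 * (V z.2)⁻¹ * V z.1) *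
          K (psumMap n z.1 - psumMap n z.2) := mul_le_mul' this le_rfl
      _ = _ := by simp only [hg]; ring
  have hKz : Measurable fun z : (Fin n → ℝ) × (Fin n → ℝ) =>
      K (psumMap n z.1 - psumMap n z.2) :=
    hKm.comp ((hΦm.comp measurable_fst).sub (hΦm.comp measurable_snd))
  have hm1 : Measurable fun z : (Fin n → ℝ) × (Fin n → ℝ) =>
      g z.1 * (V z.2 * K (psumMap n z.1 - psumMap n z.2)) :=
    (hgm.comp measurable_fst).mul ((hVm.comp measurable_snd).mul hKz)
  have hm2 : Measurable fun z : (Fin n → ℝ) × (Fin n → ℝ) =>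
      g z.2 * (V z.1 * K (psumMap n z.1 - psumMap n z.2)) :=
    (hgm.comp measurable_snd).mul ((hVm.comp measurable_fst).mul hKz)
  have hone : ∀ w, ∫⁻ y, V y * K (w - psumMap n y) ≤ 1 := by
    intro w
    refine (lintegral_absVandermonde_mul_comp_psumMap_le n (fun t => K (w - t))
      (hKm.comp (measurable_const.sub measurable_id))).trans (le_of_eq ?_)
    rw [lintegral_sub_left_eq_self K w]
    exact lintegral_gaussKernel hc n
  have hone' : ∀ w, ∫⁻ y, V y * K (psumMap n y - w) ≤ 1 := by
    intro w
    refine (lintegral_absVandermonde_mul_comp_psumMap_le n (fun t => K (t - w))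
      (hKm.comp (measurable_id.sub measurable_const))).trans (le_of_eq ?_)
    rw [lintegral_sub_right_eq_self K w]
    exact lintegral_gaussKernel hc n
  calc _ ≤ ∫⁻ z : (Fin n → ℝ) × (Fin n → ℝ),
        (g z.1 * (V z.2 * K (psumMap n z.1 - psumMap n z.2)) +
        g z.2 * (V z.1 * K (psumMap n z.1 - psumMap n z.2))) := lintegral_mono hpt
    _ = (∫⁻ x, g x * ∫⁻ y, V y * K (psumMap n x - psumMap n y)) +
        ∫⁻ y, g y * ∫⁻ x, V x * K (psumMap n x - psumMap n y) := by
        rw [lintegral_add_left hm1, Measure.volume_eq_prod]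
        congr 1
        · rw [lintegral_prod _ hm1.aemeasurable]
          refine lintegral_congr fun x => ?_
          have h1 : Measurable fun y => V y * K (psumMap n x - psumMap n y) :=
            hVm.mul (hKm.comp (measurable_const.sub hΦm))
          exact lintegral_const_mul (g x) h1
        · rw [lintegral_prod_symm _ hm2.aemeasurable]
          refine lintegral_congr fun y => ?_
          have h1 : Measurable fun x => V x * K (psumMap n x - psumMap n y) :=
            hVm.mul (hKm.comp (hΦm.sub measurable_const))
          exact lintegral_const_mul (g y) h1
    _ ≤ (∫⁻ x, g x * 1) + ∫⁻ y, g y * 1 :=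
        add_le_add (lintegral_mono fun x => mul_le_mul' le_rfl (hone _))
          (lintegral_mono fun x => mul_le_mul' le_rfl (hone' _))
    _ = 2 * ∫⁻ x, g x := by simp only [mul_one]; ring

lemma measurable_integral_mul_expChar_psumMap {n : ℕ} {G : (Fin n → ℝ) → ℂ} (hGm : Measurable G) :
    Measurable fun f : Fin n → ℝ => ∫ x, G x * expChar (∑ i, f i * psumMap n x i) := by
  have h1 : Continuous fun q : (Fin n → ℝ) × (Fin n → ℝ) =>
      expChar (∑ i, q.1 i * psumMap n q.2 i) := by
    refine continuous_expChar.comp (continuous_finsetSum _ fun i _ => ?_)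
    exact ((continuous_apply i).comp continuous_fst).mul
      ((continuous_apply i).comp ((continuous_psumMap n).comp continuous_snd))
  have h2 : Measurable fun q : (Fin n → ℝ) × (Fin n → ℝ) =>
      G q.2 * expChar (∑ i, q.1 i * psumMap n q.2 i) :=
    (hGm.comp measurable_snd).mul h1.measurable
  exact (h2.stronglyMeasurable.integral_prod_right').measurable

/-- A weighted `L²` estimate for the extension operator of the power sum map. -/
lemma lintegral_normSq_psumMap_le {n : ℕ} {G : (Fin n → ℝ) → ℂ} (hG : Integrable G)
    (hGm : Measurable G) (hV : ∀ x, G x ≠ 0 → absVandermonde x ≠ 0) :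
    ∫⁻ f : Fin n → ℝ, ENNReal.ofReal (‖∫ x, G x * expChar (∑ i, f i * psumMap n x i)‖ ^ 2) ≤
    2 * ∫⁻ x, ‖G x‖ₑ ^ 2 * (ENNReal.ofReal (absVandermonde x))⁻¹ := by
  have hTm := measurable_integral_mul_expChar_psumMap hGm
  set T : (Fin n → ℝ) → ℝ := fun f => ‖∫ x, G x * expChar (∑ i, f i * psumMap n x i)‖ ^ 2 with hT
  have hlim : ∀ f : Fin n → ℝ, Filter.Tendsto
      (fun N : ℕ => ENNReal.ofReal (T f * Real.exp (-(1 / ((N : ℝ) + 1)) * ∑ i, f i ^ 2)))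
      Filter.atTop (nhds (ENNReal.ofReal (T f))) := by
    intro f
    refine ENNReal.tendsto_ofReal ?_
    have h1 := (tendsto_one_div_add_atTop_nhds_zero_nat (𝕜 := ℝ)).neg.mul_const (∑ i, f i ^ 2)
    have h2 := ((Real.continuous_exp.tendsto _).comp h1).const_mul (T f)
    simpa using h2
  calc ∫⁻ f, ENNReal.ofReal (T f) = ∫⁻ f, Filter.liminf (fun N : ℕ => ENNReal.ofReal (T f *
        Real.exp (-(1 / ((N : ℝ) + 1)) * ∑ i, f i ^ 2))) Filter.atTop :=
        lintegral_congr fun f => (hlim f).liminf_eq.symm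
    _ ≤ Filter.liminf (fun N : ℕ => ∫⁻ f, ENNReal.ofReal (T f *
        Real.exp (-(1 / ((N : ℝ) + 1)) * ∑ i, f i ^ 2))) Filter.atTop := by
        refine lintegral_liminf_le fun N => ?_
        have h3 : Continuous fun f : Fin n → ℝ =>
          Real.exp (-(1 / ((N : ℝ) + 1)) * ∑ i, f i ^ 2) := by fun_prop
        exact ((hTm.norm.pow_const 2).mul h3.measurable).ennreal_ofReal
    _ ≤ _ := by
        refine Filter.liminf_le_of_le (by isBoundedDefault) fun b hb => ?_
        obtain ⟨N, hN⟩ := hb.exists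
        exact hN.trans (lintegral_normSq_mul_gauss_psumMap_le hG hGm hV (by positivity))

/-- The extension operator of the moment curve. -/
def extOp (n : ℕ) (g : ℝ → ℂ) (f : Fin n → ℝ) : ℂ :=
  ∫ x, g x * expChar (∑ i, f i * x ^ (i + 1 : ℕ))

lemma extOp_pow (n : ℕ) (g : ℝ → ℂ) (f : Fin n → ℝ) :
    extOp n g f ^ n =
      ∫ z : Fin n → ℝ, (∏ i, g (z i)) * expChar (∑ j, f j * psumMap n z j) := by
  have h := integral_fintype_prod_volume_eq_prod (ι := Fin n)
    (f := fun (_ : Fin n) (x : ℝ) => g x * expChar (∑ i, f i * x ^ (i + 1 : ℕ)))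
  rw [Finset.prod_const, Finset.card_univ, Fintype.card_fin] at h
  rw [extOp, ← h]
  refine integral_congr_ae (Filter.Eventually.of_forall fun z => ?_)
  simp only [Finset.prod_mul_distrib, ← expChar_sum]
  congr 2
  simp only [psumMap, Finset.mul_sum]
  exact Finset.sum_comm

lemma measurable_extOp (n : ℕ) {g : ℝ → ℂ} (hg : Measurable g) : Measurable (extOp n g) := by
  have h1 : Continuous fun q : (Fin n → ℝ) × ℝ => expChar (∑ i, q.1 i * q.2 ^ (i + 1 : ℕ)) := by
    fun_prop
  have h2 : Measurable fun q : (Fin n → ℝ) × ℝ =>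
      g q.2 * expChar (∑ i, q.1 i * q.2 ^ (i + 1 : ℕ)) :=
    (hg.comp measurable_snd).mul h1.measurable
  exact (h2.stronglyMeasurable.integral_prod_right').measurable

lemma integrable_of_norm_le_indicator {g : ℝ → ℂ} {X : Set ℝ} (hX : MeasurableSet X)
    (hXfin : volume X ≠ ⊤) (hg : Measurable g) (hgX : ∀ x, ‖g x‖ ≤ X.indicator 1 x) :
    Integrable g := by
  refine Integrable.mono' (g := X.indicator 1) ?_ hg.aestronglyMeasurable
    (Filter.Eventually.of_forall hgX)
  rw [integrable_indicator_iff hX]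
  exact integrableOn_const hXfin

lemma enorm_prod_le_prod_indicator {n : ℕ} {g : ℝ → ℂ} {X : Set ℝ}
    (hgX : ∀ x, ‖g x‖ ≤ X.indicator 1 x) (z : Fin n → ℝ) :
    ‖∏ i, g (z i)‖ₑ ≤ ∏ i, X.indicator (1 : ℝ → ℝ≥0∞) (z i) := by
  rw [← ofReal_norm, norm_prod, ENNReal.ofReal_prod_of_nonneg fun _ _ => norm_nonneg _]
  refine Finset.prod_le_prod' fun i _ => ?_
  have := hgX (z i)
  by_cases h : z i ∈ X
  · rw [indicator_of_mem h] at this ⊢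
    exact ENNReal.ofReal_le_one.2 this
  · rw [indicator_of_notMem h] at this ⊢
    simp [le_antisymm this (norm_nonneg _)]

lemma prod_indicator_sq {n : ℕ} (X : Set ℝ) (z : Fin n → ℝ) :
    (∏ i, X.indicator (1 : ℝ → ℝ≥0∞) (z i)) ^ 2 = ∏ i, X.indicator (1 : ℝ → ℝ≥0∞) (z i) := by
  rw [← Finset.prod_pow]
  refine Finset.prod_congr rfl fun i _ => ?_
  by_cases h : z i ∈ X <;> simp [h]

lemma exists_volume_lt_norm_extOp_le {n : ℕ} (hn : 2 ≤ n) {q : ℝ} (hq : (n : ℝ) ^ 2 < q) :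
    ∃ C : ℝ, 0 ≤ C ∧ ∀ (X : Set ℝ) (L : ℝ) (g : ℝ → ℂ), MeasurableSet X → 0 < L → L ≤ 1 →
      volume X = ENNReal.ofReal L → Measurable g → (∀ x, ‖g x‖ ≤ X.indicator 1 x) →
      ∀ α : ℝ, 0 < α → volume {f | α < ‖extOp n g f‖} ≤
        ENNReal.ofReal (C * α ^ (-q) * L ^ (q - n * (n + 1) / 2)) := by
  have hn' : (2 : ℝ) ≤ n := by exact_mod_cast hn
  have hqn : 0 < q - n := by nlinarith
  set a : ℝ := n / (q - n) with ha
  have ha0 : 0 < a := by positivity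
  have ha1 : a ≤ 1 := by rw [ha, div_le_one hqn]; nlinarith
  have han : a * (n - 1 : ℝ) < 1 := by
    rw [ha, div_mul_eq_mul_div, div_lt_one hqn]; nlinarith
  obtain ⟨C₀, hC₀, hU⟩ := exists_lintegral_absVandermonde_rpow_neg_le ha0.le n han
  set c : ℝ := max C₀.toReal 1 with hc
  have hcpos : 0 < c := lt_of_lt_of_le one_pos (le_max_right _ _)
  have hC₀c : C₀ ≤ ENNReal.ofReal c :=
    (ENNReal.le_ofReal_iff_toReal_le hC₀ hcpos.le).2 (le_max_left _ _)
  refine ⟨4 * (2 * c) ^ (1 / a), by positivity, ?_⟩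
  intro X L g hX hL hL1 hvol hg hgX α hα
  set β : ℝ := n - a * (n * (n - 1) / 2) with hβ
  set M : ℝ := c * L ^ β with hM
  have hMpos : 0 < M := by positivity
  have hI : ∫⁻ z : Fin n → ℝ, (∏ i, X.indicator 1 (z i)) *
      ENNReal.ofReal (absVandermonde z) ^ (-a) ≤ ENNReal.ofReal M := by
    refine (hU X L hX hL hL1 hvol).trans ?_
    rw [hM, ENNReal.ofReal_mul hcpos.le, ENNReal.ofReal_rpow_of_pos hL]
    exact mul_le_mul' hC₀c le_rfl
  set v : ℝ := (α ^ n / (2 * M)) ^ (1 / a) with hv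
  have hvpos : 0 < v := by positivity
  have hva : v ^ a = α ^ n / (2 * M) := by
    rw [hv, ← Real.rpow_mul (by positivity), one_div_mul_cancel ha0.ne', Real.rpow_one]
  set Y : Set (Fin n → ℝ) := {z | v < absVandermonde z} with hY
  have hYm : MeasurableSet Y := measurableSet_lt measurable_const continuous_absVandermonde.measurable
  set P : (Fin n → ℝ) → ℂ := fun z => ∏ i, g (z i) with hP
  have hPm : Measurable P := Finset.measurable_prod _ fun i _ => hg.comp (measurable_pi_apply i)
  have hPint : Integrable P := Integrable.fintype_prod (f := fun (_ : Fin n) => g) fun _ =>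
    integrable_of_norm_le_indicator hX (by rw [hvol]; exact ENNReal.ofReal_ne_top) hg hgX
  have hPle : ∀ z, ‖P z‖ₑ ≤ ∏ i, X.indicator (1 : ℝ → ℝ≥0∞) (z i) :=
    enorm_prod_le_prod_indicator hgX
  have hsmall : ∀ f : Fin n → ℝ,
      ‖∫ z, Yᶜ.indicator P z * expChar (∑ j, f j * psumMap n z j)‖ ≤ α ^ n / 2 := by
    intro f
    rw [← ENNReal.ofReal_le_ofReal_iff (by positivity), ofReal_norm]
    refine (enorm_integral_le_lintegral_enorm _).trans ?_
    calc ∫⁻ z, ‖Yᶜ.indicator P z * expChar (∑ j, f j * psumMap n z j)‖ₑ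
        ≤ ∫⁻ z : Fin n → ℝ, ENNReal.ofReal (v ^ a) * ((∏ i, X.indicator 1 (z i)) *
          ENNReal.ofReal (absVandermonde z) ^ (-a)) := by
          refine lintegral_mono fun z => ?_
          rw [enorm_mul, ← ofReal_norm (expChar _), norm_expChar, ENNReal.ofReal_one, mul_one]
          by_cases hz : z ∈ Y
          · rw [indicator_of_notMem (by simpa using hz)]
            simp
          rw [indicator_of_mem (by simpa using hz)]
          have hz' : absVandermonde z ≤ v := not_lt.1 hz
          have h1 : 1 ≤ ENNReal.ofReal (v ^ a) * ENNReal.ofReal (absVandermonde z) ^ (-a) := by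
            rw [ENNReal.rpow_neg, ← ENNReal.ofReal_rpow_of_pos hvpos, ← ENNReal.inv_rpow,
              ← ENNReal.mul_rpow_of_nonneg _ _ ha0.le]
            refine ENNReal.one_le_rpow ?_ ha0
            rw [← div_eq_mul_inv]
            refine (ENNReal.le_div_iff_mul_le (Or.inr ?_) (Or.inl ENNReal.ofReal_ne_top)).2 ?_
            · simpa using hvpos
            · rw [one_mul]; exact ENNReal.ofReal_le_ofReal hz'
          calc ‖P z‖ₑ ≤ (∏ i, X.indicator (1 : ℝ → ℝ≥0∞) (z i)) * 1 := by
                rw [mul_one]; exact hPle z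
            _ ≤ _ := by
                refine (mul_le_mul' le_rfl h1).trans (le_of_eq ?_)
                ring
      _ ≤ ENNReal.ofReal (v ^ a) * ENNReal.ofReal M := by
          rw [lintegral_const_mul' _ _ ENNReal.ofReal_ne_top]
          exact mul_le_mul' le_rfl hI
      _ = _ := by
          rw [← ENNReal.ofReal_mul (by positivity), hva]
          congr 1
          field_simp
  have hbig : ∀ f, α < ‖extOp n g f‖ →
      ENNReal.ofReal ((α ^ n / 2) ^ 2) ≤
        ENNReal.ofReal (‖∫ z, Y.indicator P z * expChar (∑ j, f j * psumMap n z j)‖ ^ 2) := by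
    intro f hf
    refine ENNReal.ofReal_le_ofReal (pow_le_pow_left₀ (by positivity) ?_ 2)
    have hb : ∀ {Q : (Fin n → ℝ) → ℂ}, Integrable Q →
        Integrable fun z => Q z * expChar (∑ j, f j * psumMap n z j) := by
      intro Q hQ
      refine hQ.mul_bdd (c := 1) ?_ (Filter.Eventually.of_forall fun z => (norm_expChar _).le)
      refine (continuous_expChar.comp (continuous_finsetSum _ fun i _ => ?_)).aestronglyMeasurable
      exact continuous_const.mul ((continuous_apply i).comp (continuous_psumMap n))
    have h1 : extOp n g f ^ n = (∫ z, Y.indicator P z * expChar (∑ j, f j * psumMap n z j)) +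
        ∫ z, Yᶜ.indicator P z * expChar (∑ j, f j * psumMap n z j) := by
      rw [extOp_pow, ← integral_add (hb (hPint.indicator hYm)) (hb (hPint.indicator hYm.compl))]
      refine integral_congr_ae (Filter.Eventually.of_forall fun z => ?_)
      simp only [← add_mul, indicator_self_add_compl_apply, hP]
    have h2 : α ^ n ≤ ‖extOp n g f ^ n‖ := by
      rw [norm_pow]; exact pow_le_pow_left₀ hα.le hf.le n
    rw [h1] at h2
    have := h2.trans (norm_add_le _ _)
    linarith [hsmall f]
  have hGint : ∫⁻ f : Fin n → ℝ,
      ENNReal.ofReal (‖∫ z, Y.indicator P z * expChar (∑ j, f j * psumMap n z j)‖ ^ 2) ≤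
      2 * ENNReal.ofReal (v ^ (a - 1) * M) := by
    refine (lintegral_normSq_psumMap_le (hPint.indicator hYm) (hPm.indicator hYm) ?_).trans ?_
    · intro z hz
      have : z ∈ Y := by
        by_contra h
        exact hz (indicator_of_notMem h _)
      exact (hvpos.trans this).ne'
    refine mul_le_mul' le_rfl ?_
    rw [ENNReal.ofReal_mul (by positivity)]
    refine le_trans ?_ (mul_le_mul' le_rfl hI)
    rw [← lintegral_const_mul' _ _ ENNReal.ofReal_ne_top]
    refine lintegral_mono fun z => ?_
    by_cases hz : z ∈ Y
    swap
    · rw [indicator_of_notMem hz]; simp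
    rw [indicator_of_mem hz]
    have hz0 : 0 < absVandermonde z := hvpos.trans hz
    have h1 : (ENNReal.ofReal (absVandermonde z))⁻¹ ≤
        ENNReal.ofReal (v ^ (a - 1)) * ENNReal.ofReal (absVandermonde z) ^ (-a) := by
      rw [← ENNReal.ofReal_inv_of_pos hz0, ENNReal.ofReal_rpow_of_pos hz0,
        ← ENNReal.ofReal_mul (by positivity)]
      refine ENNReal.ofReal_le_ofReal ?_
      rw [← Real.rpow_neg_one, show (-1 : ℝ) = (a - 1) + (-a) by ring, Real.rpow_add hz0]
      refine mul_le_mul_of_nonneg_right ?_ (by positivity)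
      exact Real.rpow_le_rpow_of_nonpos hvpos (le_of_lt hz) (by linarith)
    calc _ ≤ (∏ i, X.indicator (1 : ℝ → ℝ≥0∞) (z i)) ^ 2 * (ENNReal.ofReal (v ^ (a - 1)) *
          ENNReal.ofReal (absVandermonde z) ^ (-a)) :=
          mul_le_mul' (pow_le_pow_left' (hPle z) 2) h1
      _ = _ := by rw [prod_indicator_sq]; ring
  have hmarkov : ENNReal.ofReal ((α ^ n / 2) ^ 2) * volume {f | α < ‖extOp n g f‖} ≤
      2 * ENNReal.ofReal (v ^ (a - 1) * M) := by
    refine le_trans ?_ hGint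
    refine le_trans (mul_le_mul' le_rfl (measure_mono hbig)) ?_
    exact mul_meas_ge_le_lintegral
      ((measurable_integral_mul_expChar_psumMap (hPm.indicator hYm)).norm.pow_const 2).ennreal_ofReal _
  have h2 : volume {f | α < ‖extOp n g f‖} ≤
      2 * ENNReal.ofReal (v ^ (a - 1) * M) / ENNReal.ofReal ((α ^ n / 2) ^ 2) := by
    rw [ENNReal.le_div_iff_mul_le (Or.inl (by
        rw [ne_eq, ENNReal.ofReal_eq_zero, not_le]; positivity)) (Or.inl ENNReal.ofReal_ne_top),
      mul_comm]
    exact hmarkov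
  refine h2.trans (le_of_eq ?_)
  rw [show (2 : ℝ≥0∞) = ENNReal.ofReal 2 by simp, ← ENNReal.ofReal_mul (by norm_num),
    ← ENNReal.ofReal_div_of_pos (by positivity)]
  congr 1
  have e1 : v ^ (a - 1) * M = α ^ n / 2 * v⁻¹ := by
    rw [Real.rpow_sub hvpos, hva, Real.rpow_one]
    field_simp
  have e2 : v⁻¹ = (2 * c) ^ (1 / a) * L ^ (q - n * (n + 1) / 2) * α ^ (-(q - n)) := by
    rw [hv, ← Real.inv_rpow (by positivity), inv_div, hM, ← mul_assoc,
      Real.div_rpow (by positivity) (by positivity), Real.mul_rpow (by positivity) (by positivity),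
      ← Real.rpow_mul hL.le, ← Real.rpow_natCast, ← Real.rpow_mul hα.le,
      Real.rpow_neg hα.le, div_eq_mul_inv]
    have e3 : β * (1 / a) = q - n * (n + 1) / 2 := by
      rw [hβ]
      have : (n : ℝ) ≠ 0 := by positivity
      rw [ha]
      field_simp
      ring
    have e4 : (n : ℝ) * (1 / a) = q - n := by
      have : (n : ℝ) ≠ 0 := by positivity
      rw [ha]
      field_simp
    rw [e3, e4]
  have e5 : α ^ (-q) = α ^ (-(q - n)) * (α ^ n)⁻¹ := by
    rw [← Real.rpow_natCast, ← Real.rpow_neg hα.le, ← Real.rpow_add hα]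
    congr 1; ring
  rw [e1, e2, e5]
  field_simp
  ring

lemma enorm_extOp_le {n : ℕ} {g : ℝ → ℂ} {X : Set ℝ} (hX : MeasurableSet X)
    (hgX : ∀ x, ‖g x‖ ≤ X.indicator 1 x) (f : Fin n → ℝ) : ‖extOp n g f‖ₑ ≤ volume X := by
  refine (enorm_integral_le_lintegral_enorm _).trans ?_
  rw [← lintegral_indicator_one hX]
  refine lintegral_mono fun x => ?_
  rw [enorm_mul, ← ofReal_norm (expChar _), norm_expChar, ENNReal.ofReal_one, mul_one,
    ← ofReal_norm]
  have := hgX x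
  by_cases h : x ∈ X
  · rw [indicator_of_mem h] at this ⊢
    exact ENNReal.ofReal_le_one.2 this
  · rw [indicator_of_notMem h] at this ⊢
    simp [le_antisymm this (norm_nonneg _)]

lemma tsum_ofReal_two_rpow_neg_ne_top {s : ℝ} (hs : 0 < s) :
    ∑' j : ℕ, ENNReal.ofReal ((2 : ℝ) ^ (-(s * j))) ≠ ⊤ := by
  have h : ∀ j : ℕ, ENNReal.ofReal ((2 : ℝ) ^ (-(s * j))) =
      ENNReal.ofReal ((2 : ℝ) ^ (-s)) ^ j := by
    intro j
    rw [← ENNReal.ofReal_pow (by positivity), ← Real.rpow_natCast, ← Real.rpow_mul (by norm_num)]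
    congr 2
    ring
  simp_rw [h]
  rw [ENNReal.tsum_geometric]
  refine ENNReal.inv_ne_top.2 (tsub_pos_of_lt ?_).ne'
  rw [ENNReal.ofReal_lt_one]
  exact Real.rpow_lt_one_of_one_lt_of_neg (by norm_num) (by linarith)

lemma exists_lintegral_extOp_rpow_le_of_indicator {n : ℕ} (hn : 2 ≤ n) {q p : ℝ}
    (hq : (n : ℝ) ^ 2 < q) (hqp : q < p) :
    ∃ C : ℝ≥0∞, C ≠ ⊤ ∧ ∀ (X : Set ℝ) (g : ℝ → ℂ), MeasurableSet X → volume X ≤ 1 →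
      Measurable g → (∀ x, ‖g x‖ ≤ X.indicator 1 x) →
      ∫⁻ f, ‖extOp n g f‖ₑ ^ p ≤ C * volume X ^ (p - n * (n + 1) / 2) := by
  have hn' : (2 : ℝ) ≤ n := by exact_mod_cast hn
  have hq0 : 0 < q := lt_of_le_of_lt (by positivity) hq
  have hp0 : 0 < p := hq0.trans hqp
  obtain ⟨C₀, hC₀, hweak⟩ := exists_volume_lt_norm_extOp_le hn hq
  set S := ∑' j : ℕ, ENNReal.ofReal ((2 : ℝ) ^ (-((p - q) * j))) with hS
  have hStop : S ≠ ⊤ := tsum_ofReal_two_rpow_neg_ne_top (by linarith)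
  refine ⟨ENNReal.ofReal (C₀ * 2 ^ q) * S, ENNReal.mul_ne_top ENNReal.ofReal_ne_top hStop, ?_⟩
  intro X g hX hX1 hg hgX
  rcases eq_or_ne (volume X) 0 with h0 | h0
  · have : ∀ f, ‖extOp n g f‖ₑ ^ p = 0 := by
      intro f
      have := enorm_extOp_le hX hgX f
      rw [h0] at this
      rw [le_antisymm this zero_le, ENNReal.zero_rpow_of_pos hp0]
    simp [this]
  have hXt : volume X ≠ ⊤ := ne_top_of_le_ne_top ENNReal.one_ne_top hX1
  set L := (volume X).toReal with hLdef
  have hL : 0 < L := ENNReal.toReal_pos h0 hXt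
  have hL1 : L ≤ 1 := ENNReal.toReal_le_of_le_ofReal zero_le_one (by simpa using hX1)
  have hvol : volume X = ENNReal.ofReal L := (ENNReal.ofReal_toReal hXt).symm
  have hle : ∀ f, ‖extOp n g f‖ ≤ L := by
    intro f
    have := enorm_extOp_le hX hgX f
    rwa [hvol, ← ofReal_norm, ENNReal.ofReal_le_ofReal_iff hL.le] at this
  set A : ℕ → Set (Fin n → ℝ) := fun j => {f | L * (2 : ℝ) ^ (-(j : ℝ)) / 2 < ‖extOp n g f‖}
  have hAm : ∀ j : ℕ, MeasurableSet (A j) := fun j =>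
    measurableSet_lt measurable_const (measurable_extOp n hg).norm
  calc ∫⁻ f, ‖extOp n g f‖ₑ ^ p
      ≤ ∫⁻ f, ∑' j : ℕ, ENNReal.ofReal ((L * (2 : ℝ) ^ (-(j : ℝ))) ^ p) * (A j).indicator 1 f := by
        refine lintegral_mono fun f => ?_
        rcases (norm_nonneg (extOp n g f)).eq_or_lt with h | h
        · rw [← ofReal_norm, ← h, ENNReal.ofReal_zero, ENNReal.zero_rpow_of_pos hp0]
          exact zero_le
        obtain ⟨j, h1, h2⟩ := exists_dyadic_scale (div_pos h hL) ((div_le_one hL).2 (hle f))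
        refine le_trans ?_ (ENNReal.le_tsum j)
        have hf : f ∈ A j := by
          have := mul_lt_mul_of_pos_left h1 hL
          rw [mul_div_cancel₀ _ hL.ne'] at this
          change L * (2 : ℝ) ^ (-(j : ℝ)) / 2 < ‖extOp n g f‖
          linarith
        rw [indicator_of_mem hf, Pi.one_apply, mul_one, ← ofReal_norm,
          ENNReal.ofReal_rpow_of_pos h]
        refine ENNReal.ofReal_le_ofReal (Real.rpow_le_rpow h.le ?_ hp0.le)
        rw [div_le_iff₀ hL] at h2
        linarith
    _ = ∑' j : ℕ, ENNReal.ofReal ((L * (2 : ℝ) ^ (-(j : ℝ))) ^ p) * volume (A j) := by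
        rw [lintegral_tsum fun j => ((measurable_one.indicator (hAm j)).const_mul _).aemeasurable]
        congr 1
        ext j
        rw [lintegral_const_mul _ (measurable_one.indicator (hAm j)),
          lintegral_indicator_one (hAm j)]
    _ ≤ ∑' j : ℕ, ENNReal.ofReal (C₀ * 2 ^ q) * volume X ^ (p - n * (n + 1) / 2) *
          ENNReal.ofReal ((2 : ℝ) ^ (-((p - q) * j))) := by
        refine ENNReal.tsum_le_tsum fun j => ?_
        have h2j : (0 : ℝ) < 2 ^ (-(j : ℝ)) := by positivity
        refine (mul_le_mul' le_rfl (hweak X L g hX hL hL1 hvol hg hgX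
          (L * (2 : ℝ) ^ (-(j : ℝ)) / 2) (by positivity))).trans (le_of_eq ?_)
        rw [hvol, ENNReal.ofReal_rpow_of_pos hL, ← ENNReal.ofReal_mul (by positivity),
          ← ENNReal.ofReal_mul (by positivity), ← ENNReal.ofReal_mul (by positivity)]
        congr 1
        rw [Real.div_rpow (by positivity) (by norm_num), Real.mul_rpow hL.le h2j.le,
          Real.mul_rpow hL.le h2j.le, ← Real.rpow_mul (by norm_num), ← Real.rpow_mul (by norm_num),
          Real.rpow_neg (by norm_num : (0 : ℝ) ≤ 2) q, div_inv_eq_mul]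
        have e1 : L ^ (p - n * (n + 1) / 2) =
            L ^ p * L ^ (-q) * L ^ (q - n * (n + 1) / 2) := by
          rw [← Real.rpow_add hL, ← Real.rpow_add hL]; congr 1; ring
        have e2 : (2 : ℝ) ^ (-((p - q) * j)) = 2 ^ (-(j : ℝ) * p) * 2 ^ (-(j : ℝ) * -q) := by
          rw [← Real.rpow_add (by norm_num)]; congr 1; ring
        rw [e1, e2]
        ring
    _ = _ := by
        rw [ENNReal.tsum_mul_left]
        ring

/-- Restriction estimate for the moment curve with sharp dependence on the support. -/
lemma exists_lintegral_extOp_rpow_le {n : ℕ} (hn : 2 ≤ n) {q p : ℝ}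
    (hq : (n : ℝ) ^ 2 < q) (hqp : q < p) :
    ∃ C : ℝ≥0∞, C ≠ ⊤ ∧ ∀ (X : Set ℝ) (g : ℝ → ℂ) (σ : ℝ), MeasurableSet X → volume X ≤ 1 →
      Measurable g → 0 < σ → (∀ x, ‖g x‖ ≤ X.indicator (fun _ => σ) x) →
      ∫⁻ f, ‖extOp n g f‖ₑ ^ p ≤
        C * ENNReal.ofReal σ ^ p * volume X ^ (p - n * (n + 1) / 2) := by
  obtain ⟨C, hC, h⟩ := exists_lintegral_extOp_rpow_le_of_indicator hn hq hqp
  refine ⟨C, hC, fun X g σ hX hX1 hg hσ hgX => ?_⟩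
  have hp0 : 0 < p := lt_of_le_of_lt (by positivity) (hq.trans hqp)
  have h1 := h X (fun x => (σ : ℂ)⁻¹ * g x) hX hX1 (hg.const_mul _) (by
    intro x
    have := hgX x
    rw [norm_mul, norm_inv, Complex.norm_real, Real.norm_of_nonneg hσ.le, ← div_eq_inv_mul,
      div_le_iff₀ hσ]
    by_cases hx : x ∈ X
    · rw [indicator_of_mem hx] at this ⊢
      simpa using this
    · rw [indicator_of_notMem hx] at this ⊢
      simpa using this)
  have h2 : ∀ f, extOp n g f = σ * extOp n (fun x => (σ : ℂ)⁻¹ * g x) f := by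
    intro f
    have hσ' : (σ : ℂ) ≠ 0 := by exact_mod_cast hσ.ne'
    unfold extOp
    rw [← integral_const_mul]
    congr 1
    ext x
    field_simp
  have h3 : ∀ f, ‖extOp n g f‖ₑ ^ p = ENNReal.ofReal σ ^ p *
      ‖extOp n (fun x => (σ : ℂ)⁻¹ * g x) f‖ₑ ^ p := by
    intro f
    rw [h2, enorm_mul, ENNReal.mul_rpow_of_nonneg _ _ hp0.le, ← ofReal_norm (σ : ℂ),
      Complex.norm_real, Real.norm_of_nonneg hσ.le]
  simp_rw [h3]
  rw [lintegral_const_mul' _ _ (ENNReal.rpow_ne_top_of_nonneg hp0.le ENNReal.ofReal_ne_top)]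
  refine (mul_le_mul' le_rfl h1).trans (le_of_eq ?_)
  ring

lemma integral_Icc_fin_two (F : (Fin 2 → ℝ) → ℂ) (hF : Continuous F) :
    ∫ ξ in Icc (0 : Fin 2 → ℝ) 1, F ξ =
      ∫ s in Icc (0 : ℝ) 1, ∫ t in Icc (0 : ℝ) 1, F ![s, t] := by
  have h := (volume_preserving_finTwoArrow ℝ).symm.setIntegral_preimage_emb
    (MeasurableEquiv.measurableEmbedding _) F (Icc (0 : Fin 2 → ℝ) 1)
  rw [← h]
  have hpre : (MeasurableEquiv.finTwoArrow (α := ℝ)).symm ⁻¹' Icc (0 : Fin 2 → ℝ) 1 =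
      Icc (0 : ℝ) 1 ×ˢ Icc (0 : ℝ) 1 := by
    ext ⟨s, t⟩
    simp only [mem_preimage, mem_Icc, Pi.le_def, Fin.forall_fin_two, mem_prod]
    simp [MeasurableEquiv.finTwoArrow]
    tauto
  rw [hpre, Measure.volume_eq_prod, setIntegral_prod]
  · rfl
  · refine ContinuousOn.integrableOn_compact (isCompact_Icc.prod isCompact_Icc) ?_
    refine Continuous.continuousOn (hF.comp ?_)
    rw [continuous_pi_iff]
    intro i
    fin_cases i
    · exact continuous_fst
    · exact continuous_snd

lemma Eone_eq (k : ℕ) (x : Idx k → ℝ) :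
    Eone k x = ∫ s in Icc (0 : ℝ) 1, ∫ t in Icc (0 : ℝ) 1,
      expChar (∑ β : Idx k, x β * s ^ (β.1.1 : ℕ) * t ^ (β.1.2 : ℕ)) := by
  have h := integral_Icc_fin_two (fun ξ => expChar (Pphase k x ξ)) (by
    unfold Pphase; fun_prop)
  exact h

lemma measurable_Eone (k : ℕ) : Measurable (Eone k) := by
  have h1 : Continuous fun q : (Idx k → ℝ) × (Fin 2 → ℝ) => expChar (Pphase k q.1 q.2) := by
    unfold Pphase
    fun_prop
  exact (h1.stronglyMeasurable.integral_prod_right' (ν := volume.restrict (Icc 0 1))).measurable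

/-- The inclusion of the summands of `Idx (m + 1)` according to whether the second exponent
vanishes. -/
def idxOfSum (m : ℕ) : Fin (m + 1) ⊕ triangle m → Idx (m + 1)
  | Sum.inl i => ⟨(⟨i + 1, by omega⟩, ⟨0, by omega⟩), by
      change 1 ≤ (i : ℕ) + 1 + 0 ∧ (i : ℕ) + 1 + 0 ≤ m + 1
      omega⟩
  | Sum.inr p => ⟨(⟨p.1.1, by have := mem_triangle.1 p.2; omega⟩,
      ⟨p.1.2 + 1, by have := mem_triangle.1 p.2; omega⟩), by
      have := mem_triangle.1 p.2
      change 1 ≤ p.1.1 + (p.1.2 + 1) ∧ p.1.1 + (p.1.2 + 1) ≤ m + 1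
      omega⟩

lemma bijective_idxOfSum (m : ℕ) : Function.Bijective (idxOfSum m) := by
  constructor
  · rintro (i | ⟨p, hp⟩) (j | ⟨r, hr⟩) h
    · have := congrArg (fun β : Idx (m + 1) => (β.1.1 : ℕ)) h
      simp only [idxOfSum] at this
      congr 1
      ext
      omega
    · have := congrArg (fun β : Idx (m + 1) => (β.1.2 : ℕ)) h
      simp only [idxOfSum] at this
      omega
    · have := congrArg (fun β : Idx (m + 1) => (β.1.2 : ℕ)) h
      simp only [idxOfSum] at this
      omega
    · have h1 := congrArg (fun β : Idx (m + 1) => (β.1.1 : ℕ)) h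
      have h2 := congrArg (fun β : Idx (m + 1) => (β.1.2 : ℕ)) h
      simp only [idxOfSum] at h1 h2
      congr 2
      exact Prod.ext h1 (by omega)
  · rintro ⟨⟨⟨a, ha⟩, ⟨b, hb⟩⟩, h1, h2⟩
    simp only at h1 h2
    rcases b with _ | b
    · refine ⟨Sum.inl ⟨a - 1, by omega⟩, ?_⟩
      refine Subtype.ext (Prod.ext (Fin.ext ?_) (Fin.ext rfl))
      change a - 1 + 1 = a
      omega
    · refine ⟨Sum.inr ⟨(a, b), mem_triangle.2 (by omega)⟩, ?_⟩
      exact Subtype.ext (Prod.ext (Fin.ext rfl) (Fin.ext rfl))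

/-- The bijection `Idx (m + 1) ≃ Fin (m + 1) ⊕ triangle m`. -/
def idxEquiv (m : ℕ) : Idx (m + 1) ≃ Fin (m + 1) ⊕ triangle m :=
  (Equiv.ofBijective (idxOfSum m) (bijective_idxOfSum m)).symm

/-- The inner oscillatory integral in the second variable. -/
def innerInt (m : ℕ) (r : triangle m → ℝ) (x : ℝ) : ℂ :=
  ∫ y in Icc (0 : ℝ) 1, expChar ((triPrim m r x).eval y)

lemma measurable_innerInt (m : ℕ) (r : triangle m → ℝ) : Measurable (innerInt m r) := by
  have h1 : Continuous fun q : ℝ × ℝ => expChar ((triPrim m r q.1).eval q.2) := by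
    simp only [eval_triPrim]
    fun_prop
  exact (h1.stronglyMeasurable.integral_prod_right' (ν := volume.restrict (Icc 0 1))).measurable

lemma norm_innerInt_le_one (m : ℕ) (r : triangle m → ℝ) (x : ℝ) : ‖innerInt m r x‖ ≤ 1 := by
  refine (norm_setIntegral_le_of_norm_le_const (C := 1) (by simp)
    (fun y _ => (norm_expChar _).le)).trans ?_
  simp

lemma Eone_idxEquiv (m : ℕ) (f : Fin (m + 1) → ℝ) (r : triangle m → ℝ) :
    Eone (m + 1) (fun β => Sum.elim f (fun p => ((p.1.2 + 1).factorial : ℝ)⁻¹ * r p)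
      (idxEquiv m β)) = extOp (m + 1) ((Icc (0 : ℝ) 1).indicator (innerInt m r)) f := by
  rw [Eone_eq, extOp]
  have h : ∀ s t : ℝ, expChar (∑ β : Idx (m + 1),
      Sum.elim f (fun p => ((p.1.2 + 1).factorial : ℝ)⁻¹ * r p) (idxEquiv m β) *
        s ^ (β.1.1 : ℕ) * t ^ (β.1.2 : ℕ)) =
      expChar ((triPrim m r s).eval t) * expChar (∑ i : Fin (m + 1), f i * s ^ (i + 1 : ℕ)) := by
    intro s t
    rw [← expChar_add]
    congr 1
    rw [← (idxEquiv m).symm.sum_comp, Fintype.sum_sum_type, eval_triPrim, add_comm]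
    simp only [Equiv.apply_symm_apply, Sum.elim_inl, Sum.elim_inr]
    congr 1
    · refine Finset.sum_congr rfl fun p _ => ?_
      change _ * s ^ p.1.1 * t ^ (p.1.2 + 1) = _
      field_simp
    · refine Finset.sum_congr rfl fun i _ => ?_
      change f i * s ^ ((i : ℕ) + 1) * t ^ 0 = _
      rw [pow_zero, mul_one]
  simp_rw [h, integral_mul_const]
  rw [← integral_indicator measurableSet_Icc]
  refine integral_congr_ae (Filter.Eventually.of_forall fun s => ?_)
  by_cases hs : s ∈ Icc (0 : ℝ) 1 <;> simp [indicator, hs, innerInt]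

/-- The points of `[0, 1]` at which `‖g‖` is of size `2⁻ʲ`. -/
def dyadicLevel (g : ℝ → ℂ) (j : ℕ) : Set ℝ :=
  {x | x ∈ Icc (0 : ℝ) 1 ∧ (2 : ℝ) ^ (-(j : ℝ)) / 2 < ‖g x‖ ∧ ‖g x‖ ≤ (2 : ℝ) ^ (-(j : ℝ))}

lemma measurableSet_dyadicLevel {g : ℝ → ℂ} (hg : Measurable g) (j : ℕ) :
    MeasurableSet (dyadicLevel g j) :=
  measurableSet_Icc.inter ((measurableSet_lt measurable_const hg.norm).inter
    (measurableSet_le hg.norm measurable_const))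

lemma pairwise_disjoint_dyadicLevel (g : ℝ → ℂ) :
    Pairwise (Function.onFun Disjoint (dyadicLevel g)) := by
  have key : ∀ i j : ℕ, i < j → Disjoint (dyadicLevel g i) (dyadicLevel g j) := by
    intro i j hij
    rw [Set.disjoint_left]
    rintro x ⟨_, h1, _⟩ ⟨_, _, h2⟩
    have h3 : (2 : ℝ) ^ (-(j : ℝ)) ≤ (2 : ℝ) ^ (-(i : ℝ) - 1) := by
      refine Real.rpow_le_rpow_of_exponent_le (by norm_num) ?_
      have : ((i : ℝ) + 1) ≤ j := by exact_mod_cast hij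
      linarith
    rw [Real.rpow_sub (by norm_num), Real.rpow_one] at h3
    linarith
  intro i j hij
  rcases lt_or_gt_of_ne hij with h | h
  · exact key i j h
  · exact (key j i h).symm

lemma enorm_extOp_indicator_le_tsum (n : ℕ) {g : ℝ → ℂ} (hg : Measurable g)
    (hg1 : ∀ x, ‖g x‖ ≤ 1) (f : Fin n → ℝ) :
    ‖extOp n ((Icc (0 : ℝ) 1).indicator g) f‖ₑ ≤
      ∑' j : ℕ, ‖extOp n ((dyadicLevel g j).indicator g) f‖ₑ := by
  set E : ℝ → ℂ := fun x => expChar (∑ i, f i * x ^ (i + 1 : ℕ)) with hE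
  have hEc : Continuous E := by fun_prop
  have hind : ∀ X : Set ℝ, MeasurableSet X →
      extOp n (X.indicator g) f = ∫ x in X, g x * E x := by
    intro X hX
    rw [extOp, ← integral_indicator hX]
    refine integral_congr_ae (Filter.Eventually.of_forall fun s => ?_)
    by_cases hs : s ∈ X <;> simp [indicator, hs, hE]
  have hsub : (⋃ j, dyadicLevel g j) ⊆ Icc (0 : ℝ) 1 :=
    iUnion_subset fun j x hx => hx.1
  have hint : IntegrableOn (fun x => g x * E x) (Icc (0 : ℝ) 1) := by
    refine Measure.integrableOn_of_bounded (M := 1) (by simp)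
      (hg.mul hEc.measurable).aestronglyMeasurable ?_
    refine Filter.Eventually.of_forall fun x => ?_
    rw [norm_mul, hE, norm_expChar, mul_one]
    exact hg1 x
  have hU : ∫ x in Icc (0 : ℝ) 1, g x * E x = ∫ x in ⋃ j, dyadicLevel g j, g x * E x := by
    refine setIntegral_eq_of_subset_of_forall_sdiff_eq_zero measurableSet_Icc
      hsub ?_
    rintro x ⟨hx, hxU⟩
    by_contra hne
    have hg0 : g x ≠ 0 := left_ne_zero_of_mul hne
    obtain ⟨j, h1, h2⟩ := exists_dyadic_scale (norm_pos_iff.2 hg0) (hg1 x)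
    exact hxU (mem_iUnion.2 ⟨j, hx, h1, h2⟩)
  have hs := hasSum_integral_iUnion (fun j => measurableSet_dyadicLevel hg j)
    (pairwise_disjoint_dyadicLevel g) (hint.mono_set hsub)
  rw [hind _ measurableSet_Icc, hU, ← hs.tsum_eq]
  refine enorm_tsum_le_tsum_enorm.trans (le_of_eq ?_)
  exact tsum_congr fun j => by rw [hind _ (measurableSet_dyadicLevel hg j)]

lemma volume_dyadicLevel_innerInt_le (m : ℕ) (r : triangle m → ℝ) (j : ℕ) :
    volume (dyadicLevel (innerInt m r) j) ≤ ENNReal.ofReal (4 * (2 : ℝ) ^ (j : ℝ)) *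
      weightMean m (fun p => (4 * ((m : ℝ) + 3))⁻¹ * (2 : ℝ) ^ (-(j : ℝ)) * r p) := by
  set σ : ℝ := (2 : ℝ) ^ (-(j : ℝ)) with hσ
  have hσ0 : 0 < σ := by positivity
  set h : ℝ := (4 * ((m : ℝ) + 3))⁻¹ * σ with hh
  have hh0 : 0 < h := by positivity
  set X := dyadicLevel (innerInt m r) j with hX
  have hXm : MeasurableSet X := measurableSet_dyadicLevel (measurable_innerInt m r) j
  have hpt : ∀ x ∈ X, ENNReal.ofReal (σ / 4) ≤
      ∫⁻ y in Icc (0 : ℝ) 1,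
        ENNReal.ofReal (cauchyWeight ((triPoly m (fun p => h * r p) x).eval y)) := by
    intro x hx
    have h1 := norm_integral_expChar_le (triPrim m r x) (m + 1) (natDegree_triPrim_le m r x) hh0
    have h2 : ENNReal.ofReal (σ / 2) ≤ ENNReal.ofReal ‖innerInt m r x‖ :=
      ENNReal.ofReal_le_ofReal hx.2.1.le
    have h3 : (((m + 1 : ℕ) : ℝ) + 2) * h = σ / 4 := by
      rw [hh]; push_cast; field_simp; ring
    rw [h3, derivative_triPrim] at h1
    simp only [triPoly_smul]
    have h4 := h2.trans h1
    rw [show σ / 2 = σ / 4 + σ / 4 by ring, ENNReal.ofReal_add (by positivity) (by positivity)] at h4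
    exact (ENNReal.add_le_add_iff_right ENNReal.ofReal_ne_top).1 h4
  have h5 : ENNReal.ofReal (σ / 4) * volume X ≤ weightMean m (fun p => h * r p) := by
    calc ENNReal.ofReal (σ / 4) * volume X = ∫⁻ x in X, ENNReal.ofReal (σ / 4) := by simp
      _ ≤ ∫⁻ x in X, ∫⁻ y in Icc (0 : ℝ) 1,
          ENNReal.ofReal (cauchyWeight ((triPoly m (fun p => h * r p) x).eval y)) :=
        setLIntegral_mono' hXm hpt
      _ ≤ _ := lintegral_mono_set fun x hx => hx.1
  calc volume X = ENNReal.ofReal (4 * (2 : ℝ) ^ (j : ℝ)) * (ENNReal.ofReal (σ / 4) * volume X) := by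
        rw [← mul_assoc, ← ENNReal.ofReal_mul (by positivity)]
        have : 4 * (2 : ℝ) ^ (j : ℝ) * (σ / 4) = 1 := by
          rw [hσ, Real.rpow_neg (by norm_num)]; field_simp
        rw [this, ENNReal.ofReal_one, one_mul]
    _ ≤ _ := mul_le_mul' le_rfl h5

lemma sq_lt_critExponent (n : ℕ) : (n : ℝ) ^ 2 < critExponent n := by
  rw [critExponent]
  rcases n with _ | _ | _ | n
  · norm_num
  · norm_num
  · norm_num
  · push_cast
    have : (0 : ℝ) ≤ n := n.cast_nonneg
    nlinarith [mul_nonneg this this, mul_nonneg (mul_nonneg this this) this]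

lemma lintegral_extOp_innerInt_le (m : ℕ) (hm : 1 ≤ m) {p η : ℝ} (hη : 0 < η)
    (hp : critExponent (m + 1) + 2 * η = p) :
    ∃ C : ℝ≥0∞, C ≠ ⊤ ∧ ∀ r : triangle m → ℝ,
      ∫⁻ f, ‖extOp (m + 1) ((Icc (0 : ℝ) 1).indicator (innerInt m r)) f‖ₑ ^ p ≤
        C * ∑' j : ℕ, ENNReal.ofReal ((2 : ℝ) ^ ((-((m : ℝ) + 1) * (m + 2) / 2 - η / 2) * j)) *
          weightMean m (fun p => (4 * ((m : ℝ) + 3))⁻¹ * (2 : ℝ) ^ (-(j : ℝ)) * r p) ^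
            (critExponent m + η) := by
  have hcs := critExponent_succ m
  have hc0 : 0 < critExponent m := lt_of_le_of_lt (sq_nonneg _) (sq_lt_critExponent m)
  have hc1 : 0 < critExponent (m + 1) :=
    lt_of_le_of_lt (sq_nonneg _) (sq_lt_critExponent (m + 1))
  have hp0 : 0 < p := by linarith
  obtain ⟨C, hC, hext⟩ := exists_lintegral_extOp_rpow_le (n := m + 1) (by omega)
    (sq_lt_critExponent (m + 1)) (p := p) (by linarith)
  obtain ⟨C', hC', hsum⟩ := exists_tsum_rpow_le (s := p) (ε := η / 2) hp0 (by positivity)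
  set e := critExponent m + η with he
  have he0 : 0 < e := by positivity
  refine ⟨C' * (C * ENNReal.ofReal ((4 : ℝ) ^ e)),
    ENNReal.mul_ne_top hC' (ENNReal.mul_ne_top hC ENNReal.ofReal_ne_top), fun r => ?_⟩
  set g := innerInt m r with hg
  have hgm : Measurable g := measurable_innerInt m r
  set X := dyadicLevel g with hX
  have hXm : ∀ j, MeasurableSet (X j) := fun j => measurableSet_dyadicLevel hgm j
  have hXv : ∀ j, volume (X j) ≤ 1 := fun j => by
    refine (measure_mono (fun x hx => hx.1 : X j ⊆ Icc (0 : ℝ) 1)).trans ?_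
    simp
  have hpiece : ∀ j : ℕ, ∫⁻ f, ‖extOp (m + 1) ((X j).indicator g) f‖ₑ ^ p ≤
      (C * ENNReal.ofReal ((4 : ℝ) ^ e)) * (ENNReal.ofReal ((2 : ℝ) ^ ((e - p) * j)) *
        weightMean m (fun p => (4 * ((m : ℝ) + 3))⁻¹ * (2 : ℝ) ^ (-(j : ℝ)) * r p) ^ e) := by
    intro j
    refine (hext (X j) ((X j).indicator g) ((2 : ℝ) ^ (-(j : ℝ))) (hXm j) (hXv j)
      (hgm.indicator (hXm j)) (by positivity) fun x => ?_).trans ?_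
    · by_cases hx : x ∈ X j
      · simpa [hx] using hx.2.2
      · simp [hx]
    · set W := weightMean m (fun p => (4 * ((m : ℝ) + 3))⁻¹ * (2 : ℝ) ^ (-(j : ℝ)) * r p)
      have h1 : volume (X j) ^ (p - ((m + 1 : ℕ) : ℝ) * (((m + 1 : ℕ) : ℝ) + 1) / 2) ≤
          ENNReal.ofReal ((4 * (2 : ℝ) ^ (j : ℝ)) ^ e) * W ^ e := by
        refine (ENNReal.rpow_le_rpow_of_exponent_ge (hXv j) (z := e) ?_).trans ?_
        · push_cast
          rw [he, ← hp, hcs]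
          linarith
        · rw [← ENNReal.ofReal_rpow_of_pos (by positivity), ← ENNReal.mul_rpow_of_nonneg _ _ he0.le]
          exact ENNReal.rpow_le_rpow (volume_dyadicLevel_innerInt_le m r j) he0.le
      refine (mul_le_mul' le_rfl h1).trans (le_of_eq ?_)
      rw [ENNReal.ofReal_rpow_of_pos (by positivity)]
      have h2 : ENNReal.ofReal (((2 : ℝ) ^ (-(j : ℝ))) ^ p) *
          ENNReal.ofReal ((4 * (2 : ℝ) ^ (j : ℝ)) ^ e) =
          ENNReal.ofReal ((4 : ℝ) ^ e) * ENNReal.ofReal ((2 : ℝ) ^ ((e - p) * j)) := by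
        rw [← ENNReal.ofReal_mul (by positivity), ← ENNReal.ofReal_mul (by positivity)]
        congr 1
        rw [Real.mul_rpow (by norm_num) (by positivity), ← Real.rpow_mul (by norm_num),
          ← Real.rpow_mul (by norm_num), mul_left_comm, ← Real.rpow_add (by norm_num)]
        congr 2
        ring
      calc _ = C * (ENNReal.ofReal (((2 : ℝ) ^ (-(j : ℝ))) ^ p) *
          ENNReal.ofReal ((4 * (2 : ℝ) ^ (j : ℝ)) ^ e)) * W ^ e := by ring
        _ = _ := by rw [h2]; ring
  have hmeas : ∀ j : ℕ, Measurable fun f : Fin (m + 1) → ℝ =>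
      ‖extOp (m + 1) ((X j).indicator g) f‖ₑ ^ p := fun j =>
    (measurable_extOp (m + 1) (hgm.indicator (hXm j))).enorm.pow_const p
  calc ∫⁻ f, ‖extOp (m + 1) ((Icc (0 : ℝ) 1).indicator g) f‖ₑ ^ p
      ≤ ∫⁻ f, C' * ∑' j : ℕ, ENNReal.ofReal ((2 : ℝ) ^ (η / 2 * j)) *
          ‖extOp (m + 1) ((X j).indicator g) f‖ₑ ^ p := by
        refine lintegral_mono fun f => le_trans ?_ (hsum _)
        exact ENNReal.rpow_le_rpow
          (enorm_extOp_indicator_le_tsum (m + 1) hgm (norm_innerInt_le_one m r) f) hp0.le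
    _ = C' * ∑' j : ℕ, ENNReal.ofReal ((2 : ℝ) ^ (η / 2 * j)) *
          ∫⁻ f, ‖extOp (m + 1) ((X j).indicator g) f‖ₑ ^ p := by
        rw [lintegral_const_mul' _ _ hC', lintegral_tsum fun j =>
          ((hmeas j).const_mul _).aemeasurable]
        congr 1
        exact tsum_congr fun j => lintegral_const_mul _ (hmeas j)
    _ ≤ C' * ∑' j : ℕ, (C * ENNReal.ofReal ((4 : ℝ) ^ e)) *
          (ENNReal.ofReal ((2 : ℝ) ^ ((-((m : ℝ) + 1) * (m + 2) / 2 - η / 2) * j)) *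
            weightMean m (fun p => (4 * ((m : ℝ) + 3))⁻¹ * (2 : ℝ) ^ (-(j : ℝ)) * r p) ^ e) := by
        refine mul_le_mul' le_rfl (ENNReal.tsum_le_tsum fun j => ?_)
        refine (mul_le_mul' le_rfl (hpiece j)).trans (le_of_eq ?_)
        rw [mul_left_comm, ← mul_assoc (ENNReal.ofReal ((2 : ℝ) ^ (η / 2 * j))),
          ← ENNReal.ofReal_mul (by positivity), ← Real.rpow_add (by norm_num)]
        congr 5
        rw [he, ← hp, hcs]
        ring
    _ = _ := by simp only [ENNReal.tsum_mul_left, mul_assoc]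

lemma lintegral_Eone_rpow_lt_top (m : ℕ) (hm : 1 ≤ m) {p : ℝ} (hp : critExponent (m + 1) < p) :
    ∫⁻ x : Idx (m + 1) → ℝ, ‖Eone (m + 1) x‖ₑ ^ p < ⊤ := by
  set η := (p - critExponent (m + 1)) / 2 with hη
  have hη0 : 0 < η := by rw [hη]; linarith
  obtain ⟨C, hC, hbound⟩ := lintegral_extOp_innerInt_le m hm hη0 (p := p) (by rw [hη]; ring)
  have hfin := lintegral_tsum_weightMean_lt_top m (e := critExponent m + η)
    (a := -((m : ℝ) + 1) * (m + 2) / 2 - η / 2) (c := (4 * ((m : ℝ) + 3))⁻¹) (by positivity)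
    (by linarith) (lintegral_weightMean_lt_top m _ (by linarith))
  have hF : Measurable fun x : Idx (m + 1) → ℝ => ‖Eone (m + 1) x‖ₑ ^ p :=
    (measurable_Eone (m + 1)).enorm.pow_const p
  rw [lintegral_pi_split_symm (idxEquiv m) _ hF]
  set Φ : (triangle m → ℝ) → ℝ≥0∞ := fun r => ∫⁻ f : Fin (m + 1) → ℝ,
    ‖Eone (m + 1) fun i => Sum.elim f r (idxEquiv m i)‖ₑ ^ p with hΦ
  have hΦm : Measurable Φ := by
    have h1 : Measurable fun q : (triangle m → ℝ) × (Fin (m + 1) → ℝ) =>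
        fun i => Sum.elim q.2 q.1 (idxEquiv m i) := by
      refine measurable_pi_lambda _ fun i => ?_
      rcases idxEquiv m i with a | b
      · exact (measurable_pi_apply a).comp measurable_snd
      · exact (measurable_pi_apply b).comp measurable_fst
    exact (hF.comp h1).lintegral_prod_right'
  have hd : ∀ p : triangle m, ((p.1.2 + 1).factorial : ℝ)⁻¹ ≠ 0 := fun p => by positivity
  have hdiag := lintegral_comp_diag (fun p : triangle m => ((p.1.2 + 1).factorial : ℝ)⁻¹) hd Φ hΦm
  have hlt : ∫⁻ r : triangle m → ℝ, Φ (fun p => ((p.1.2 + 1).factorial : ℝ)⁻¹ * r p) < ⊤ := by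
    refine lt_of_le_of_lt (lintegral_mono fun r => ?_)
      ((lintegral_const_mul' C _ hC).trans_lt (ENNReal.mul_lt_top hC.lt_top hfin))
    rw [hΦ]
    simp only [Eone_idxEquiv]
    exact hbound r
  rw [hdiag] at hlt
  by_contra htop
  rw [not_lt, top_le_iff] at htop
  rw [htop, ENNReal.mul_top] at hlt
  · exact lt_irrefl _ hlt
  · rw [ne_eq, ENNReal.ofReal_eq_zero, not_le, abs_pos]
    exact inv_ne_zero (Finset.prod_ne_zero_iff.2 fun p _ => hd p)

instance (k : ℕ) : DecidableEq (Idx k) := by unfold Idx; infer_instance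

/-- The coefficient of `s ^ i * w ^ j` in `s ^ β₁ * (w + (θ * s + b)) ^ β₂`. -/
def shearCoef (θ b : ℝ) (β₁ β₂ i j : ℕ) : ℝ :=
  if β₁ ≤ i then
    (β₂.choose j) * ((β₂ - j).choose (i - β₁)) * θ ^ (i - β₁) * b ^ (β₂ - j - (i - β₁))
  else 0

lemma shearCoef_eq_zero_of_lt {θ b : ℝ} {β₁ β₂ i j : ℕ} (h : β₂ < j) :
    shearCoef θ b β₁ β₂ i j = 0 := by
  simp [shearCoef, Nat.choose_eq_zero_of_lt h]

lemma shearCoef_self {θ b : ℝ} {β₁ β₂ i : ℕ} :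
    shearCoef θ b β₁ β₂ i β₂ = if i = β₁ then 1 else 0 := by
  rw [shearCoef]
  rcases lt_trichotomy i β₁ with h | h | h
  · rw [if_neg (by omega), if_neg (by omega)]
  · simp [h]
  · rw [if_pos h.le, if_neg (by omega), Nat.sub_self, Nat.choose_eq_zero_of_lt (show 0 < i - β₁ by omega)]
    simp

lemma shearCoef_eq_zero_of_add_lt {θ b : ℝ} {β₁ β₂ i j : ℕ} (h : β₁ + β₂ < i + j) :
    shearCoef θ b β₁ β₂ i j = 0 := by
  rw [shearCoef]
  split_ifs with h1
  · rcases lt_or_ge β₂ j with h2 | h2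
    · simp [Nat.choose_eq_zero_of_lt h2]
    · rw [Nat.choose_eq_zero_of_lt (show β₂ - j < i - β₁ by omega)]
      simp
  · rfl

lemma pow_mul_add_pow_eq_sum_shearCoef {k β₁ β₂ : ℕ} (h : β₁ + β₂ ≤ k) (θ b s w : ℝ) :
    s ^ β₁ * (w + (θ * s + b)) ^ β₂ = ∑ i ∈ Finset.range (k + 1), ∑ j ∈ Finset.range (k + 1),
      shearCoef θ b β₁ β₂ i j * s ^ i * w ^ j := by
  rw [Finset.sum_comm, add_pow, Finset.mul_sum]
  have hsub : Finset.range (β₂ + 1) ⊆ Finset.range (k + 1) :=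
    Finset.range_subset_range.2 (by omega)
  rw [← Finset.sum_subset hsub]
  · refine Finset.sum_congr rfl fun j hj => ?_
    rw [Finset.mem_range] at hj
    rw [show k + 1 = β₁ + (k + 1 - β₁) by omega, Finset.sum_range_add, Finset.sum_eq_zero, zero_add]
    · have hsub' : Finset.range (β₂ - j + 1) ⊆ Finset.range (k + 1 - β₁) :=
        Finset.range_subset_range.2 (by omega)
      rw [← Finset.sum_subset hsub']
      · rw [add_pow, Finset.mul_sum, Finset.sum_mul, Finset.mul_sum]
        refine Finset.sum_congr rfl fun l hl => ?_
        rw [shearCoef, if_pos (by omega), Nat.add_sub_cancel_left, pow_add, mul_pow]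
        ring
      · intro l _ hl
        rw [Finset.mem_range] at hl
        rw [shearCoef_eq_zero_of_add_lt (by omega)]
        simp
    · intro i hi
      rw [Finset.mem_range] at hi
      rw [shearCoef, if_neg (by omega)]
      simp
  · intro j _ hj
    rw [Finset.mem_range] at hj
    refine Finset.sum_eq_zero fun i _ => ?_
    rw [shearCoef_eq_zero_of_lt (by omega)]
    simp

lemma sum_range_sum_range_eq_add_sum_Idx (k : ℕ) (g : ℕ → ℕ → ℝ)
    (hg : ∀ i j, k < i + j → g i j = 0) :
    ∑ i ∈ Finset.range (k + 1), ∑ j ∈ Finset.range (k + 1), g i j =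
      g 0 0 + ∑ γ : Idx k, g γ.1.1 γ.1.2 := by
  have h1 : ∑ i ∈ Finset.range (k + 1), ∑ j ∈ Finset.range (k + 1), g i j =
      ∑ q : Fin (k + 1) × Fin (k + 1), g q.1 q.2 := by
    rw [Fintype.sum_prod_type, Finset.sum_range]
    refine Finset.sum_congr rfl fun i _ => ?_
    rw [Finset.sum_range]
  rw [h1, ← Finset.sum_filter_add_sum_filter_not Finset.univ
    (fun q : Fin (k + 1) × Fin (k + 1) => 1 ≤ (q.1 : ℕ) + q.2 ∧ (q.1 : ℕ) + q.2 ≤ k), add_comm]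
  congr 1
  · rw [Finset.sum_eq_single (0, 0)]
    · rfl
    · rintro ⟨a, b⟩ hq hne
      refine hg _ _ ?_
      have h2 : (a : ℕ) ≠ 0 ∨ (b : ℕ) ≠ 0 := by
        by_contra! h
        exact hne (Prod.ext (Fin.ext h.1) (Fin.ext h.2))
      have h3 := (Finset.mem_filter.1 hq).2
      simp only at h3 ⊢
      omega
    · intro h
      exact absurd (by simp) h
  · exact Finset.sum_subtype _ (by simp) _

/-- The matrix that maps the non-constant coefficients of a polynomial `P` of degree at most `k`
to those of `P (s, w + (θ * s + b))`. -/
def shearMatrix (k : ℕ) (θ b : ℝ) : Matrix (Idx k) (Idx k) ℝ :=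
  fun γ β => shearCoef θ b β.1.1 β.1.2 γ.1.1 γ.1.2

lemma det_shearMatrix (k : ℕ) (θ b : ℝ) : (shearMatrix k θ b).det = 1 := by
  have h : (shearMatrix k θ b).BlockTriangular fun γ => γ.1.2 := fun γ β hlt =>
    shearCoef_eq_zero_of_lt hlt
  rw [h.det_fintype]
  refine Finset.prod_eq_one fun a _ => ?_
  have : (shearMatrix k θ b).toSquareBlock (fun γ => γ.1.2) a = 1 := by
    ext ⟨γ, hγ⟩ ⟨β, hβ⟩
    rw [Matrix.one_apply]
    change shearCoef θ b β.1.1 β.1.2 γ.1.1 γ.1.2 = _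
    rw [show γ.1.2 = β.1.2 from hγ.trans hβ.symm, shearCoef_self]
    refine if_congr ⟨fun h => ?_, fun h => ?_⟩ rfl rfl
    · exact Subtype.ext (Subtype.ext (Prod.ext (Fin.ext h) (hγ.trans hβ.symm)))
    · rw [Subtype.mk.injEq] at h
      rw [h]
  rw [this, Matrix.det_one]

lemma exists_sum_eq_add_sum_shearMatrix (k : ℕ) (θ b : ℝ) (x : Idx k → ℝ) :
    ∃ c : ℝ, ∀ s y : ℝ, ∑ β : Idx k, x β * s ^ (β.1.1 : ℕ) * y ^ (β.1.2 : ℕ) =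
      c + ∑ γ : Idx k, (shearMatrix k θ b).mulVec x γ * s ^ (γ.1.1 : ℕ) *
        (y - (θ * s + b)) ^ (γ.1.2 : ℕ) := by
  refine ⟨∑ β : Idx k, x β * shearCoef θ b β.1.1 β.1.2 0 0, fun s y => ?_⟩
  have h1 : ∀ β : Idx k, x β * s ^ (β.1.1 : ℕ) * y ^ (β.1.2 : ℕ) =
      x β * shearCoef θ b β.1.1 β.1.2 0 0 + ∑ γ : Idx k, shearMatrix k θ b γ β * x β *
        s ^ (γ.1.1 : ℕ) * (y - (θ * s + b)) ^ (γ.1.2 : ℕ) := by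
    intro β
    have h2 := pow_mul_add_pow_eq_sum_shearCoef β.2.2 θ b s (y - (θ * s + b))
    rw [sub_add_cancel, sum_range_sum_range_eq_add_sum_Idx k (fun i j =>
      shearCoef θ b β.1.1 β.1.2 i j * s ^ i * (y - (θ * s + b)) ^ j)] at h2
    · rw [mul_assoc, h2, mul_add, Finset.mul_sum]
      congr 1
      · simp
      · refine Finset.sum_congr rfl fun γ _ => ?_
        rw [shearMatrix]
        ring
    · intro i j hij
      rw [shearCoef_eq_zero_of_add_lt (lt_of_le_of_lt β.2.2 hij)]
      simp
  rw [Finset.sum_congr rfl fun β _ => h1 β, Finset.sum_add_distrib, Finset.sum_comm]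
  congr 1
  refine Finset.sum_congr rfl fun γ _ => ?_
  rw [Matrix.mulVec, dotProduct, Finset.sum_mul, Finset.sum_mul]

/-- The multi-index `(i, j)`. -/
def idxMk {k : ℕ} (i j : ℕ) (h : 1 ≤ i + j ∧ i + j ≤ k) : Idx k :=
  ⟨(⟨i, by omega⟩, ⟨j, by omega⟩), h⟩

lemma idx_ext {k : ℕ} {β γ : Idx k} (h1 : (β.1.1 : ℕ) = γ.1.1) (h2 : (β.1.2 : ℕ) = γ.1.2) :
    β = γ := Subtype.ext (Prod.ext (Fin.ext h1) (Fin.ext h2))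

section

variable {k : ℕ} (hk : 2 ≤ k) (θ b : ℝ) (x : Idx k → ℝ)

lemma shearMatrix_mulVec_top :
    (shearMatrix k θ b).mulVec x (idxMk 0 k (by omega)) = x (idxMk 0 k (by omega)) := by
  rw [Matrix.mulVec, dotProduct, Fintype.sum_eq_single (idxMk 0 k (by omega))]
  · change shearCoef θ b 0 k 0 k * _ = _
    simp [shearCoef_self]
  · intro β hβ
    have h : (β.1.2 : ℕ) < k := by
      by_contra h
      have := β.2
      exact hβ (idx_ext (by change (β.1.1 : ℕ) = 0; omega) (by change (β.1.2 : ℕ) = k; omega))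
    change shearCoef θ b _ _ 0 k * _ = 0
    rw [shearCoef_eq_zero_of_lt h, zero_mul]

lemma shearMatrix_mulVec_one :
    (shearMatrix k θ b).mulVec x (idxMk 1 (k - 1) (by omega)) =
      x (idxMk 1 (k - 1) (by omega)) + k * θ * x (idxMk 0 k (by omega)) := by
  rw [Matrix.mulVec, dotProduct, Fintype.sum_eq_add (idxMk 1 (k - 1) (by omega))
    (idxMk 0 k (by omega))]
  · change shearCoef θ b 1 (k - 1) 1 (k - 1) * _ + shearCoef θ b 0 k 1 (k - 1) * _ = _
    rw [shearCoef_self, shearCoef, if_pos rfl, if_pos (by omega), show k - (k - 1) = 1 by omega,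
      ← Nat.choose_symm (show k - 1 ≤ k by omega), show k - (k - 1) = 1 by omega]
    simp
  · intro h
    have := congrArg (fun β : Idx k => (β.1.1 : ℕ)) h
    simp [idxMk] at this
  · rintro β ⟨h1, h2⟩
    change shearCoef θ b _ _ 1 (k - 1) * _ = 0
    have hβ := β.2
    rcases lt_trichotomy (β.1.2 : ℕ) (k - 1) with h | h | h
    · rw [shearCoef_eq_zero_of_lt h, zero_mul]
    · have h3 : (1 : ℕ) ≠ β.1.1 := fun h4 => h1 (idx_ext h4.symm h)
      rw [h, shearCoef_self, if_neg h3, zero_mul]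
    · exact absurd (idx_ext (by change (β.1.1 : ℕ) = 0; omega)
        (by change (β.1.2 : ℕ) = k; omega)) h2

lemma shearMatrix_mulVec_zero :
    (shearMatrix k θ b).mulVec x (idxMk 0 (k - 1) (by omega)) =
      x (idxMk 0 (k - 1) (by omega)) + k * b * x (idxMk 0 k (by omega)) := by
  rw [Matrix.mulVec, dotProduct, Fintype.sum_eq_add (idxMk 0 (k - 1) (by omega))
    (idxMk 0 k (by omega))]
  · change shearCoef θ b 0 (k - 1) 0 (k - 1) * _ + shearCoef θ b 0 k 0 (k - 1) * _ = _
    rw [shearCoef_self, shearCoef, if_pos rfl, if_pos (by omega), show k - (k - 1) = 1 by omega,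
      ← Nat.choose_symm (show k - 1 ≤ k by omega), show k - (k - 1) = 1 by omega]
    simp
  · intro h
    have := congrArg (fun β : Idx k => (β.1.2 : ℕ)) h
    simp only [idxMk] at this
    omega
  · rintro β ⟨h1, h2⟩
    change shearCoef θ b _ _ 0 (k - 1) * _ = 0
    have hβ := β.2
    rcases lt_trichotomy (β.1.2 : ℕ) (k - 1) with h | h | h
    · rw [shearCoef_eq_zero_of_lt h, zero_mul]
    · have h3 : (0 : ℕ) ≠ β.1.1 := fun h4 => h1 (idx_ext h4.symm h)
      rw [h, shearCoef_self, if_neg h3, zero_mul]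
    · exact absurd (idx_ext (by change (β.1.1 : ℕ) = 0; omega)
        (by change (β.1.2 : ℕ) = k; omega)) h2

end

/-- Lebesgue measure on the unit square. -/
def unitSquare : Measure (ℝ × ℝ) :=
  (volume.restrict (Icc 0 1)).prod (volume.restrict (Icc 0 1))

instance isProbabilityMeasure_restrict_Icc_zero_one :
    IsProbabilityMeasure (volume.restrict (Icc (0 : ℝ) 1)) := ⟨by simp⟩

instance : IsProbabilityMeasure unitSquare := by unfold unitSquare; infer_instance

lemma ae_unitSquare : ∀ᵐ q ∂unitSquare, q.1 ∈ Icc (0 : ℝ) 1 ∧ q.2 ∈ Icc (0 : ℝ) 1 := by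
  rw [unitSquare, Measure.prod_restrict]
  exact ae_restrict_mem (measurableSet_Icc.prod measurableSet_Icc)

/-- The Fejér kernel `|∫₀¹ e(t u) du|²`. -/
def fejerKernel (t : ℝ) : ℝ := ‖∫ u in Icc (0 : ℝ) 1, expChar (t * u)‖ ^ 2

lemma measurable_fejerKernel : Measurable fejerKernel := by
  have h1 : Continuous fun q : ℝ × ℝ => expChar (q.1 * q.2) := by fun_prop
  exact ((h1.stronglyMeasurable.integral_prod_right'
    (ν := volume.restrict (Icc 0 1))).measurable.norm).pow_const 2

lemma fejerKernel_nonneg (t : ℝ) : 0 ≤ fejerKernel t := sq_nonneg _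

lemma fejerKernel_le_one (t : ℝ) : fejerKernel t ≤ 1 := by
  refine pow_le_one₀ (norm_nonneg _) ?_
  refine (norm_setIntegral_le_of_norm_le_const (C := 1) (by simp)
    (fun y _ => (norm_expChar _).le)).trans ?_
  simp

lemma integral_expChar_sub_eq_fejerKernel (t : ℝ) :
    ∫ q, expChar (t * (q.1 - q.2)) ∂unitSquare = (fejerKernel t : ℂ) := by
  have h1 : ∀ q : ℝ × ℝ, expChar (t * (q.1 - q.2)) =
      expChar (t * q.1) * (starRingEnd ℂ) (expChar (t * q.2)) := by
    intro q
    rw [conj_expChar, ← expChar_add]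
    congr 1
    ring
  simp_rw [h1]
  rw [unitSquare, integral_prod_mul (fun u : ℝ => expChar (t * u))
    (fun u : ℝ => (starRingEnd ℂ) (expChar (t * u))), integral_conj, Complex.mul_conj,
    fejerKernel, Complex.normSq_eq_norm_sq]

lemma expChar_re (t : ℝ) : (expChar t).re = Real.cos (2 * π * t) := by
  rw [expChar, show (2 * π * Complex.I * t : ℂ) = ((2 * π * t : ℝ) : ℂ) * Complex.I by
    push_cast; ring, Complex.exp_ofReal_mul_I_re]

lemma half_le_cos_of_abs_le {t : ℝ} (ht : |t| ≤ 1 / 6) : 1 / 2 ≤ Real.cos (2 * π * t) := by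
  rw [← Real.cos_abs, ← Real.cos_pi_div_three]
  refine Real.cos_le_cos_of_nonneg_of_le_pi (abs_nonneg _) (by linarith [Real.pi_pos]) ?_
  rw [abs_mul, abs_of_pos (by positivity)]
  nlinarith [Real.pi_pos]

lemma integrable_of_continuous_expChar {f : ℝ → ℝ} (hf : Continuous f) :
    IntegrableOn (fun u => expChar (f u)) (Icc (0 : ℝ) 1) :=
  (continuous_expChar.comp hf).continuousOn.integrableOn_compact isCompact_Icc

lemma fejerKernel_ge {t : ℝ} (ht : |t| ≤ 1 / 6) : 1 / 4 ≤ fejerKernel t := by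
  have h1 : (1 / 2 : ℝ) ≤ (∫ u in Icc (0 : ℝ) 1, expChar (t * u)).re := by
    have hint := integrable_of_continuous_expChar (f := fun u => t * u) (by fun_prop)
    have h2 : (∫ u in Icc (0 : ℝ) 1, expChar (t * u)).re =
        ∫ u in Icc (0 : ℝ) 1, (expChar (t * u)).re := (integral_re hint).symm
    rw [h2]
    calc (1 / 2 : ℝ) = ∫ u in Icc (0 : ℝ) 1, (1 / 2 : ℝ) := by simp
      _ ≤ _ := by
        refine setIntegral_mono_on (integrable_const _) hint.re measurableSet_Icc fun u hu => ?_
        change _ ≤ (expChar (t * u)).re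
        rw [expChar_re]
        refine half_le_cos_of_abs_le ?_
        rw [abs_mul, abs_of_nonneg hu.1]
        exact (mul_le_of_le_one_right (abs_nonneg t) hu.2).trans ht
  have h3 := h1.trans (Complex.re_le_norm _)
  rw [fejerKernel]
  nlinarith

lemma fejerKernel_le_cauchyWeight {t : ℝ} (ht : 32 ≤ |t|) :
    fejerKernel t ≤ cauchyWeight (t / 32) / 4608 := by
  have ht0 : t ≠ 0 := by
    rintro rfl
    norm_num at ht
  have h1 : ∫ u in Icc (0 : ℝ) 1, expChar (t * u) =
      (Complex.exp (2 * π * Complex.I * t) - 1) / (2 * π * Complex.I * t) := by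
    rw [integral_Icc_eq_integral_Ioc, ← intervalIntegral.integral_of_le zero_le_one]
    have hc : (2 * π * Complex.I * t : ℂ) ≠ 0 := by
      simp [Complex.I_ne_zero, Real.pi_ne_zero, ht0]
    have h2 := integral_exp_mul_complex (a := 0) (b := 1) hc
    simp only [Complex.ofReal_zero, Complex.ofReal_one, mul_zero, mul_one, Complex.exp_zero] at h2
    rw [← h2]
    refine intervalIntegral.integral_congr fun u _ => ?_
    simp only [expChar]
    push_cast
    ring_nf
  have h2 : ‖∫ u in Icc (0 : ℝ) 1, expChar (t * u)‖ ≤ 1 / (3 * |t|) := by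
    rw [h1, norm_div]
    have h3 : ‖Complex.exp (2 * π * Complex.I * t) - 1‖ ≤ 2 := by
      refine (norm_sub_le _ _).trans ?_
      rw [show Complex.exp (2 * π * Complex.I * t) = expChar t from rfl, norm_expChar]
      norm_num
    have h4 : ‖(2 * π * Complex.I * t : ℂ)‖ = 2 * π * |t| := by
      simp [abs_of_pos Real.pi_pos]
    rw [h4, div_le_div_iff₀ (by positivity) (by positivity)]
    nlinarith [Real.pi_gt_three, abs_pos.2 ht0]
  have h5 : fejerKernel t ≤ (1 / (3 * |t|)) ^ 2 := by
    rw [fejerKernel]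
    gcongr
  refine h5.trans ?_
  have h6 : 1024 ≤ t ^ 2 := by
    rw [← sq_abs]
    nlinarith
  rw [div_pow, one_pow, mul_pow, sq_abs, cauchyWeight, inv_eq_one_div, div_div,
    div_le_div_iff₀ (by positivity) (by positivity)]
  nlinarith

lemma integral_indicator_sub_cauchyWeight_ge {δ a : ℝ} (hδ : 0 < δ) (hδ1 : δ ≤ 1)
    (ha : a ∈ Icc (1 / 4 : ℝ) (3 / 4)) :
    δ / 2000 ≤ ∫ y in Icc (0 : ℝ) 1, ((Icc (a - δ / 192) (a + δ / 192)).indicator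
      (fun _ => (1 / 8 : ℝ)) y - cauchyWeight ((y - a) / δ) / 4608) := by
  have hw : Integrable fun y : ℝ => cauchyWeight ((y - a) / δ) :=
    (integrable_inv_one_add_sq.comp_div hδ.ne').comp_sub_right a
  have hi : Integrable ((Icc (a - δ / 192) (a + δ / 192)).indicator (fun _ => (1 / 8 : ℝ))) :=
    (integrable_indicator_iff measurableSet_Icc).2 (by simp)
  rw [integral_sub hi.integrableOn (hw.integrableOn.div_const _), integral_div]
  have h1 : ∫ y in Icc (0 : ℝ) 1, cauchyWeight ((y - a) / δ) ≤ π * δ := by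
    refine (setIntegral_le_integral hw (Filter.Eventually.of_forall fun y =>
      (cauchyWeight_pos _).le)).trans (le_of_eq ?_)
    rw [integral_sub_right_eq_self (fun y : ℝ => cauchyWeight (y / δ)) a,
      Measure.integral_comp_div cauchyWeight δ, abs_of_pos hδ]
    change δ • ∫ y : ℝ, (1 + y ^ 2)⁻¹ = _
    rw [integral_univ_inv_one_add_sq, smul_eq_mul, mul_comm]
  have h2 : ∫ y in Icc (0 : ℝ) 1, (Icc (a - δ / 192) (a + δ / 192)).indicator
      (fun _ => (1 / 8 : ℝ)) y = δ / 768 := by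
    have hsub : Icc (a - δ / 192) (a + δ / 192) ⊆ Icc (0 : ℝ) 1 :=
      Icc_subset_Icc (by linarith [ha.1]) (by linarith [ha.2])
    rw [setIntegral_indicator measurableSet_Icc, inter_eq_right.2 hsub, setIntegral_const,
      Real.volume_real_Icc_of_le (by linarith)]
    simp
    ring
  rw [h2]
  nlinarith [Real.pi_lt_d2]

lemma norm_integral_expChar_mul_fejerKernel_ge {Φ : ℝ × ℝ → ℝ} (hΦ : Continuous Φ)
    {θ b δ : ℝ} (hθ : 0 ≤ θ) (hθ' : θ ≤ 1 / 4) (hb : 1 / 4 ≤ b) (hb' : b ≤ 1 / 2)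
    (hδ : 0 < δ) (hδ1 : δ ≤ 1)
    (hsmall : ∀ q : ℝ × ℝ, q.1 ∈ Icc (0 : ℝ) 1 → |q.2 - (θ * q.1 + b)| ≤ δ → |Φ q| ≤ 1 / 6) :
    δ / 2000 ≤ ‖∫ q, expChar (Φ q) * (fejerKernel (32 / δ * (q.2 - (θ * q.1 + b))) : ℂ)
      ∂unitSquare‖ := by
  set K : ℝ × ℝ → ℝ := fun q => fejerKernel (32 / δ * (q.2 - (θ * q.1 + b))) with hK
  have hKm : Measurable K := measurable_fejerKernel.comp (by fun_prop)
  set L : ℝ × ℝ → ℝ := fun q => (Icc (θ * q.1 + b - δ / 192) (θ * q.1 + b + δ / 192)).indicator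
      (fun _ => (1 / 8 : ℝ)) q.2 - cauchyWeight ((q.2 - (θ * q.1 + b)) / δ) / 4608 with hL
  have hint : Integrable (fun q => expChar (Φ q) * (K q : ℂ)) unitSquare := by
    refine Integrable.of_bound (C := 1) ?_ (Filter.Eventually.of_forall fun q => ?_)
    · exact ((continuous_expChar.comp hΦ).measurable.mul
        (Complex.measurable_ofReal.comp hKm)).aestronglyMeasurable
    · rw [norm_mul, norm_expChar, one_mul, Complex.norm_real, Real.norm_of_nonneg
        (fejerKernel_nonneg _)]
      exact fejerKernel_le_one _
  have hLm : Measurable L := by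
    have hs : MeasurableSet {q : ℝ × ℝ | q.2 ∈ Icc (θ * q.1 + b - δ / 192)
        (θ * q.1 + b + δ / 192)} := by
      have h1 : MeasurableSet {q : ℝ × ℝ | θ * q.1 + b - δ / 192 ≤ q.2} :=
        measurableSet_le (by fun_prop) (by fun_prop)
      have h2 : MeasurableSet {q : ℝ × ℝ | q.2 ≤ θ * q.1 + b + δ / 192} :=
        measurableSet_le (by fun_prop) (by fun_prop)
      exact h1.inter h2
    refine Measurable.sub ((measurable_const (a := (1 / 8 : ℝ))).indicator hs) ?_
    exact (measurable_cauchyWeight.comp (by fun_prop)).div_const _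
  have hLint : Integrable L unitSquare := by
    refine Integrable.of_bound (C := 2) hLm.aestronglyMeasurable
      (Filter.Eventually.of_forall fun q => ?_)
    rw [Real.norm_eq_abs, abs_le]
    have h1 := cauchyWeight_le_one ((q.2 - (θ * q.1 + b)) / δ)
    have h2 := cauchyWeight_pos ((q.2 - (θ * q.1 + b)) / δ)
    simp only [hL, indicator]
    split_ifs <;> constructor <;> linarith
  have hpt : ∀ q : ℝ × ℝ, q.1 ∈ Icc (0 : ℝ) 1 → L q ≤ (expChar (Φ q) * (K q : ℂ)).re := by
    intro q hq
    rw [Complex.re_mul_ofReal, expChar_re]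
    have hc := cauchyWeight_pos ((q.2 - (θ * q.1 + b)) / δ)
    have hK0 : 0 ≤ K q := fejerKernel_nonneg _
    have hKabs : |32 / δ * (q.2 - (θ * q.1 + b))| = 32 / δ * |q.2 - (θ * q.1 + b)| := by
      rw [abs_mul, abs_of_pos (by positivity)]
    rcases le_or_gt |q.2 - (θ * q.1 + b)| δ with h1 | h1
    · have h2 := half_le_cos_of_abs_le (hsmall q hq h1)
      by_cases h3 : q.2 ∈ Icc (θ * q.1 + b - δ / 192) (θ * q.1 + b + δ / 192)
      · have h4 : 1 / 4 ≤ K q := by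
          refine fejerKernel_ge ?_
          have h5 : |q.2 - (θ * q.1 + b)| ≤ δ / 192 :=
            abs_le.2 ⟨by linarith [h3.1], by linarith [h3.2]⟩
          rw [hKabs]
          calc 32 / δ * |q.2 - (θ * q.1 + b)| ≤ 32 / δ * (δ / 192) := by gcongr
            _ = 1 / 6 := by field_simp; norm_num
        simp only [hL, indicator_of_mem h3]
        nlinarith
      · simp only [hL, indicator_of_notMem h3]
        nlinarith
    · have h3 : q.2 ∉ Icc (θ * q.1 + b - δ / 192) (θ * q.1 + b + δ / 192) := by
        intro h
        have : |q.2 - (θ * q.1 + b)| ≤ δ / 192 :=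
          abs_le.2 ⟨by linarith [h.1], by linarith [h.2]⟩
        linarith
      have h4 : K q ≤ cauchyWeight ((q.2 - (θ * q.1 + b)) / δ) / 4608 := by
        have h5 := fejerKernel_le_cauchyWeight (t := 32 / δ * (q.2 - (θ * q.1 + b))) (by
          rw [hKabs, div_mul_eq_mul_div, le_div_iff₀ hδ]
          gcongr)
        rwa [show 32 / δ * (q.2 - (θ * q.1 + b)) / 32 = (q.2 - (θ * q.1 + b)) / δ by ring] at h5
      simp only [hL, indicator_of_notMem h3]
      nlinarith [Real.neg_one_le_cos (2 * π * Φ q)]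
  calc δ / 2000 = ∫ s in Icc (0 : ℝ) 1, δ / 2000 := by simp
    _ ≤ ∫ s in Icc (0 : ℝ) 1, ∫ y in Icc (0 : ℝ) 1, L (s, y) := by
        refine setIntegral_mono_on (integrable_const _) hLint.integral_prod_left
          measurableSet_Icc fun s hs => ?_
        exact integral_indicator_sub_cauchyWeight_ge (a := θ * s + b) hδ hδ1
          ⟨by nlinarith [hs.1], by nlinarith [hs.1, hs.2]⟩
    _ = ∫ q, L q ∂unitSquare := (integral_prod _ hLint).symm
    _ ≤ ∫ q, (expChar (Φ q) * (K q : ℂ)).re ∂unitSquare := by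
        refine integral_mono_ae hLint hint.re ?_
        filter_upwards [ae_unitSquare] with q hq
        exact hpt q hq.1
    _ = (∫ q, expChar (Φ q) * (K q : ℂ) ∂unitSquare).re := integral_re hint
    _ ≤ _ := Complex.re_le_norm _

/-- The phase `∑ z_γ s ^ γ₁ (y - (θ s + b)) ^ γ₂`. -/
def shearedPhase (k : ℕ) (θ b : ℝ) (z : Idx k → ℝ) (q : ℝ × ℝ) : ℝ :=
  ∑ γ : Idx k, z γ * q.1 ^ (γ.1.1 : ℕ) * (q.2 - (θ * q.1 + b)) ^ (γ.1.2 : ℕ)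

/-- The oscillatory integral over the unit square with phase `shearedPhase`. -/
def shearedInt (k : ℕ) (θ b : ℝ) (z : Idx k → ℝ) : ℂ :=
  ∫ q, expChar (shearedPhase k θ b z q) ∂unitSquare

@[fun_prop]
lemma continuous_shearedPhase (k : ℕ) (θ b : ℝ) :
    Continuous fun w : (Idx k → ℝ) × (ℝ × ℝ) => shearedPhase k θ b w.1 w.2 := by
  unfold shearedPhase
  fun_prop

lemma continuous_shearedPhase_right (k : ℕ) (θ b : ℝ) (z : Idx k → ℝ) :
    Continuous (shearedPhase k θ b z) := by
  unfold shearedPhase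
  fun_prop

lemma measurable_shearedInt (k : ℕ) (θ b : ℝ) : Measurable (shearedInt k θ b) := by
  have h1 : Continuous fun w : (Idx k → ℝ) × (ℝ × ℝ) => expChar (shearedPhase k θ b w.1 w.2) :=
    continuous_expChar.comp (continuous_shearedPhase k θ b)
  exact (h1.stronglyMeasurable.integral_prod_right' (ν := unitSquare)).measurable

lemma norm_Eone_eq_norm_shearedInt (k : ℕ) (θ b : ℝ) (x : Idx k → ℝ) :
    ‖Eone k x‖ = ‖shearedInt k θ b ((shearMatrix k θ b).mulVec x)‖ := by
  obtain ⟨c, hc⟩ := exists_sum_eq_add_sum_shearMatrix k θ b x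
  set z := (shearMatrix k θ b).mulVec x
  have hint : Integrable (fun q => expChar (shearedPhase k θ b z q)) unitSquare := by
    refine Integrable.of_bound (C := 1) ?_ (Filter.Eventually.of_forall fun q =>
      (norm_expChar _).le)
    exact (continuous_expChar.comp (continuous_shearedPhase_right k θ b z)).aestronglyMeasurable
  have h : Eone k x = expChar c * shearedInt k θ b z := by
    rw [Eone_eq, shearedInt]
    have hint' := hint
    rw [unitSquare] at hint' ⊢
    rw [integral_prod _ hint', ← integral_const_mul]
    refine integral_congr_ae (Filter.Eventually.of_forall fun s => ?_)
    change _ = expChar c * _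
    rw [← integral_const_mul]
    refine integral_congr_ae (Filter.Eventually.of_forall fun y => ?_)
    change expChar _ = expChar c * expChar _
    rw [hc, expChar_add]
    rfl
  rw [h, norm_mul, norm_expChar, one_mul]

lemma shearedPhase_add_single {k : ℕ} (hk : 1 ≤ k) (θ b v : ℝ) (z : Idx k → ℝ) (q : ℝ × ℝ) :
    shearedPhase k θ b (z + Pi.single (idxMk 0 1 (by omega)) v) q =
      shearedPhase k θ b z q + v * (q.2 - (θ * q.1 + b)) := by
  simp only [shearedPhase, Pi.add_apply, add_mul, Finset.sum_add_distrib]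
  congr 1
  rw [Fintype.sum_eq_single (idxMk 0 1 (by omega))]
  · rw [Pi.single_eq_same]
    change v * q.1 ^ 0 * (q.2 - (θ * q.1 + b)) ^ 1 = _
    rw [pow_zero, mul_one, pow_one]
  · intro γ hγ
    rw [Pi.single_eq_of_ne hγ]
    ring

lemma integral_shearedInt_add_single {k : ℕ} (hk : 1 ≤ k) (θ b τ : ℝ) (z : Idx k → ℝ) :
    ∫ u, shearedInt k θ b (z + Pi.single (idxMk 0 1 (by omega)) (τ * (u.1 - u.2))) ∂unitSquare =
      ∫ q, expChar (shearedPhase k θ b z q) *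
        (fejerKernel (τ * (q.2 - (θ * q.1 + b))) : ℂ) ∂unitSquare := by
  simp only [shearedInt, shearedPhase_add_single hk, expChar_add]
  rw [integral_integral_swap]
  · refine integral_congr_ae (Filter.Eventually.of_forall fun q => ?_)
    change ∫ u : ℝ × ℝ, expChar (shearedPhase k θ b z q) *
      expChar (τ * (u.1 - u.2) * (q.2 - (θ * q.1 + b))) ∂unitSquare =
        expChar (shearedPhase k θ b z q) * (fejerKernel (τ * (q.2 - (θ * q.1 + b))) : ℂ)
    rw [integral_const_mul, ← integral_expChar_sub_eq_fejerKernel]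
    congr 1
    refine integral_congr_ae (Filter.Eventually.of_forall fun u => ?_)
    change expChar _ = expChar _
    congr 1
    ring
  · refine Integrable.of_bound (C := 1) ?_ (Filter.Eventually.of_forall fun q => ?_)
    · have h1 : Continuous fun w : (ℝ × ℝ) × (ℝ × ℝ) => shearedPhase k θ b z w.2 :=
        (continuous_shearedPhase_right k θ b z).comp continuous_snd
      have h2 : Continuous fun w : (ℝ × ℝ) × (ℝ × ℝ) =>
          τ * (w.1.1 - w.1.2) * (w.2.2 - (θ * w.2.1 + b)) := by fun_prop
      exact ((continuous_expChar.comp h1).mul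
        (continuous_expChar.comp h2)).aestronglyMeasurable
    · rw [Function.uncurry, norm_mul, norm_expChar, norm_expChar, one_mul]

/-- Half the reciprocal of a bound for the number of coefficients, with room to spare. -/
def boxScale (k : ℕ) : ℝ := (12 * ((Fintype.card (Idx k) : ℝ) + 1))⁻¹

lemma boxScale_pos (k : ℕ) : 0 < boxScale k := by unfold boxScale; positivity

lemma boxScale_le_one (k : ℕ) : boxScale k ≤ 1 := by
  refine inv_le_one_of_one_le₀ ?_
  have : (0 : ℝ) ≤ Fintype.card (Idx k) := Nat.cast_nonneg _
  linarith

/-- A box of coefficients adapted to a strip of width `D⁻¹`. -/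
def smallBox (k : ℕ) (D : ℝ) : Set (Idx k → ℝ) :=
  univ.pi fun γ => Icc (boxScale k * D ^ (γ.1.2 : ℕ)) (2 * (boxScale k * D ^ (γ.1.2 : ℕ)))

/-- An enlargement of `smallBox`, stable under the translations by which we average. -/
def bigBox (k : ℕ) (D : ℝ) : Set (Idx k → ℝ) :=
  {z | (∀ γ : Idx k, (γ.1.2 : ℕ) = k → boxScale k * D ^ k ≤ z γ) ∧
    ∀ γ : Idx k, |z γ| ≤ 34 * D ^ (γ.1.2 : ℕ)}

lemma measurableSet_smallBox (k : ℕ) (D : ℝ) : MeasurableSet (smallBox k D) :=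
  MeasurableSet.univ_pi fun _ => measurableSet_Icc

lemma measurableSet_bigBox (k : ℕ) (D : ℝ) : MeasurableSet (bigBox k D) := by
  have h1 : MeasurableSet {z : Idx k → ℝ | ∀ γ : Idx k, (γ.1.2 : ℕ) = k →
      boxScale k * D ^ k ≤ z γ} := by
    simp only [ofPred_forall]
    exact MeasurableSet.iInter fun γ => MeasurableSet.iInter fun _ =>
      measurableSet_le measurable_const (measurable_pi_apply γ)
  have h2 : MeasurableSet {z : Idx k → ℝ | ∀ γ : Idx k, |z γ| ≤ 34 * D ^ (γ.1.2 : ℕ)} := by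
    simp only [ofPred_forall]
    exact MeasurableSet.iInter fun γ =>
      measurableSet_le (measurable_pi_apply γ).abs measurable_const
  exact h1.inter h2

lemma volume_smallBox (k : ℕ) {D : ℝ} (hD : 0 < D) :
    volume (smallBox k D) = ENNReal.ofReal
      (boxScale k ^ Fintype.card (Idx k) * D ^ (∑ γ : Idx k, (γ.1.2 : ℕ))) := by
  have hb := boxScale_pos k
  rw [smallBox, volume_pi_pi]
  simp only [Real.volume_Icc]
  rw [← ENNReal.ofReal_prod_of_nonneg]
  · congr 1
    rw [← Finset.prod_pow_eq_pow_sum, ← Finset.card_univ, ← Finset.prod_const,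
      ← Finset.prod_mul_distrib]
    exact Finset.prod_congr rfl fun γ _ => by ring
  · intro γ _
    have : 0 < boxScale k * D ^ (γ.1.2 : ℕ) := by positivity
    linarith

lemma abs_shearedPhase_le {k : ℕ} {D θ b : ℝ} (hD : 0 < D) {z : Idx k → ℝ}
    (hz : z ∈ smallBox k D) {q : ℝ × ℝ} (hq : q.1 ∈ Icc (0 : ℝ) 1)
    (hw : |q.2 - (θ * q.1 + b)| ≤ D⁻¹) : |shearedPhase k θ b z q| ≤ 1 / 6 := by
  have hb := boxScale_pos k
  have hterm : ∀ γ ∈ Finset.univ, |z γ * q.1 ^ (γ.1.1 : ℕ) *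
      (q.2 - (θ * q.1 + b)) ^ (γ.1.2 : ℕ)| ≤ 2 * boxScale k := by
    intro γ _
    have h1 := hz γ (mem_univ _)
    have h2 : |z γ| ≤ 2 * (boxScale k * D ^ (γ.1.2 : ℕ)) := by
      have h3 : 0 < boxScale k * D ^ (γ.1.2 : ℕ) := by positivity
      rw [abs_of_pos (h3.trans_le h1.1)]
      exact h1.2
    rw [abs_mul, abs_mul, abs_pow, abs_pow, abs_of_nonneg hq.1]
    calc |z γ| * q.1 ^ (γ.1.1 : ℕ) * |q.2 - (θ * q.1 + b)| ^ (γ.1.2 : ℕ)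
        ≤ (2 * (boxScale k * D ^ (γ.1.2 : ℕ))) * 1 * (D⁻¹) ^ (γ.1.2 : ℕ) := by
          have h4 : q.1 ^ (γ.1.1 : ℕ) ≤ 1 := pow_le_one₀ hq.1 hq.2
          have h5 : 0 ≤ q.1 ^ (γ.1.1 : ℕ) := pow_nonneg hq.1 _
          gcongr
      _ = 2 * boxScale k := by
          rw [inv_pow]
          field_simp
  refine (Finset.abs_sum_le_sum_abs _ _).trans ((Finset.sum_le_sum hterm).trans ?_)
  rw [Finset.sum_const, Finset.card_univ, nsmul_eq_mul, boxScale]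
  have : (0 : ℝ) ≤ Fintype.card (Idx k) := Nat.cast_nonneg _
  rw [← div_eq_mul_inv, ← mul_div_assoc, div_le_div_iff₀ (by positivity) (by norm_num)]
  linarith

lemma add_single_mem_bigBox {k : ℕ} (hk : 2 ≤ k) {D : ℝ} (hD : 0 < D) {z : Idx k → ℝ}
    (hz : z ∈ smallBox k D) {v : ℝ} (hv : |v| ≤ 1) :
    z + Pi.single (idxMk 0 1 (by omega)) (32 * D * v) ∈ bigBox k D := by
  have hb := boxScale_pos k
  have hb1 := boxScale_le_one k
  constructor
  · intro γ hγ
    have hne : γ ≠ idxMk 0 1 (by omega) := by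
      intro h
      rw [h] at hγ
      change 1 = k at hγ
      omega
    rw [Pi.add_apply, Pi.single_eq_of_ne hne, add_zero]
    have := (hz γ (mem_univ _)).1
    rwa [hγ] at this
  · intro γ
    have h1 := hz γ (mem_univ _)
    have h3 : 0 < boxScale k * D ^ (γ.1.2 : ℕ) := by positivity
    have h2 : |z γ| ≤ 2 * D ^ (γ.1.2 : ℕ) := by
      rw [abs_of_pos (h3.trans_le h1.1)]
      refine h1.2.trans ?_
      have : boxScale k * D ^ (γ.1.2 : ℕ) ≤ 1 * D ^ (γ.1.2 : ℕ) := by gcongr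
      linarith
    rw [Pi.add_apply]
    refine (abs_add_le _ _).trans ?_
    by_cases hγ : γ = idxMk 0 1 (by omega)
    · have h4 : (γ.1.2 : ℕ) = 1 := by rw [hγ]; rfl
      rw [h4, pow_one] at h2 ⊢
      rw [← hγ, Pi.single_eq_same, abs_mul, abs_of_pos (by positivity : 0 < 32 * D)]
      have : 32 * D * |v| ≤ 32 * D := mul_le_of_le_one_right (by positivity) hv
      linarith
    · rw [Pi.single_eq_of_ne hγ, abs_zero]
      have : 0 < D ^ (γ.1.2 : ℕ) := by positivity
      linarith

lemma rpow_le_lintegral_shearedInt {k : ℕ} (hk : 2 ≤ k) {D θ b p : ℝ} (hD : 1 ≤ D) (hθ : 0 ≤ θ)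
    (hθ' : θ ≤ 1 / 4) (hb : 1 / 4 ≤ b) (hb' : b ≤ 1 / 2) (hp : 1 ≤ p) {z : Idx k → ℝ}
    (hz : z ∈ smallBox k D) :
    ENNReal.ofReal (D⁻¹ / 2000) ^ p ≤ ∫⁻ u, ‖shearedInt k θ b
      (z + Pi.single (idxMk 0 1 (by omega)) (32 * D * (u.1 - u.2)))‖ₑ ^ p ∂unitSquare := by
  have hD0 : 0 < D := by linarith
  have h1 := norm_integral_expChar_mul_fejerKernel_ge (continuous_shearedPhase_right k θ b z)
    hθ hθ' hb hb' (inv_pos.2 hD0) (inv_le_one_of_one_le₀ hD)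
    (fun q hq hw => abs_shearedPhase_le hD0 hz hq hw)
  rw [div_inv_eq_mul, ← integral_shearedInt_add_single (by omega : 1 ≤ k)] at h1
  set F : ℝ × ℝ → ℂ := fun u => shearedInt k θ b
    (z + Pi.single (idxMk 0 1 (by omega)) (32 * D * (u.1 - u.2))) with hF
  have hFm : Measurable F := by
    refine (measurable_shearedInt k θ b).comp (measurable_const.add ?_)
    refine measurable_pi_lambda _ fun γ => ?_
    by_cases hγ : γ = idxMk 0 1 (by omega)
    · subst hγ
      simp only [Pi.single_eq_same]
      fun_prop
    · simp only [Pi.single_eq_of_ne hγ]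
      exact measurable_const
  have h2 : ENNReal.ofReal (D⁻¹ / 2000) ≤ ∫⁻ u, ‖F u‖ₑ ∂unitSquare := by
    refine (ENNReal.ofReal_le_ofReal h1).trans ?_
    rw [ofReal_norm]
    exact enorm_integral_le_lintegral_enorm _
  have h3 := eLpNorm'_le_eLpNorm'_of_exponent_le (f := F) one_pos hp unitSquare
    hFm.aestronglyMeasurable
  rw [eLpNorm', eLpNorm'] at h3
  simp only [ENNReal.rpow_one, div_one] at h3
  have h4 := ENNReal.rpow_le_rpow (h2.trans h3) (by linarith : 0 ≤ p)
  rwa [← ENNReal.rpow_mul, one_div, inv_mul_cancel₀ (by linarith), ENNReal.rpow_one] at h4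

lemma volume_smallBox_mul_le_lintegral_bigBox {k : ℕ} (hk : 2 ≤ k) {D θ b p : ℝ} (hD : 1 ≤ D)
    (hθ : 0 ≤ θ) (hθ' : θ ≤ 1 / 4) (hb : 1 / 4 ≤ b) (hb' : b ≤ 1 / 2) (hp : 1 ≤ p) :
    ENNReal.ofReal (D⁻¹ / 2000) ^ p * volume (smallBox k D) ≤
      ∫⁻ z in bigBox k D, ‖shearedInt k θ b z‖ₑ ^ p := by
  set G : (Idx k → ℝ) → ℝ≥0∞ := (bigBox k D).indicator fun z => ‖shearedInt k θ b z‖ₑ ^ p with hG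
  have hGm : Measurable G :=
    ((measurable_shearedInt k θ b).enorm.pow_const p).indicator (measurableSet_bigBox k D)
  set T : ℝ × ℝ → Idx k → ℝ := fun u =>
    Pi.single (idxMk 0 1 (by omega)) (32 * D * (u.1 - u.2)) with hT
  have hTm : Measurable T := by
    refine measurable_pi_lambda _ fun γ => ?_
    by_cases hγ : γ = idxMk 0 1 (by omega)
    · subst hγ
      simp only [hT, Pi.single_eq_same]
      fun_prop
    · simp only [hT, Pi.single_eq_of_ne hγ]
      exact measurable_const
  have h1 : ∀ z ∈ smallBox k D, ENNReal.ofReal (D⁻¹ / 2000) ^ p ≤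
      ∫⁻ u, G (z + T u) ∂unitSquare := by
    intro z hz
    refine (rpow_le_lintegral_shearedInt hk hD hθ hθ' hb hb' hp hz).trans (lintegral_mono_ae ?_)
    filter_upwards [ae_unitSquare] with u hu
    have hmem : z + T u ∈ bigBox k D := by
      refine add_single_mem_bigBox hk (by linarith) hz (abs_le.2 ⟨?_, ?_⟩)
      · linarith [hu.1.1, hu.2.2]
      · linarith [hu.1.2, hu.2.1]
    rw [hG, indicator_of_mem hmem]
  calc ENNReal.ofReal (D⁻¹ / 2000) ^ p * volume (smallBox k D)
      = ∫⁻ z in smallBox k D, ENNReal.ofReal (D⁻¹ / 2000) ^ p := by rw [setLIntegral_const]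
    _ ≤ ∫⁻ z in smallBox k D, ∫⁻ u, G (z + T u) ∂unitSquare :=
        setLIntegral_mono' (measurableSet_smallBox k D) h1
    _ ≤ ∫⁻ z, ∫⁻ u, G (z + T u) ∂unitSquare := setLIntegral_le_lintegral _ _
    _ = ∫⁻ u, (∫⁻ z, G (z + T u)) ∂unitSquare := by
        have h2 : Measurable fun w : (Idx k → ℝ) × (ℝ × ℝ) => G (w.1 + T w.2) :=
          hGm.comp (measurable_fst.add (hTm.comp measurable_snd))
        exact lintegral_lintegral_swap h2.aemeasurable
    _ = ∫⁻ u, (∫⁻ z, G z) ∂unitSquare :=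
        lintegral_congr fun u => lintegral_add_right_eq_self G (T u)
    _ = ∫⁻ z, G z := by rw [lintegral_const, measure_univ, mul_one]
    _ = _ := lintegral_indicator (measurableSet_bigBox k D) _

lemma sum_range_sub_mul (a : ℝ) (n : ℕ) :
    ∑ j ∈ Finset.range n, (a - j) * j = a * n * (n - 1) / 2 - (n - 1) * n * (2 * n - 1) / 6 := by
  induction n with
  | zero => simp
  | succ n ih =>
    rw [Finset.sum_range_succ, ih]
    push_cast
    ring

lemma sum_Idx_snd (k : ℕ) :
    ((∑ γ : Idx k, (γ.1.2 : ℕ) : ℕ) : ℝ) = (k : ℝ) * (k + 1) * (k + 2) / 6 := by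
  have h1 := sum_range_sum_range_eq_add_sum_Idx k (fun i j => if i + j ≤ k then (j : ℝ) else 0)
    (fun i j hij => if_neg (by omega))
  have h2 : ∀ γ : Idx k, (if (γ.1.1 : ℕ) + (γ.1.2 : ℕ) ≤ k then ((γ.1.2 : ℕ) : ℝ) else 0) =
      ((γ.1.2 : ℕ) : ℝ) := fun γ => if_pos γ.2.2
  simp only [h2] at h1
  rw [Nat.cast_sum]
  have h3 : ∀ j ∈ Finset.range (k + 1), ∑ i ∈ Finset.range (k + 1),
      (if i + j ≤ k then (j : ℝ) else 0) = (((k : ℝ) + 1) - j) * j := by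
    intro j hj
    rw [Finset.mem_range] at hj
    rw [← Finset.sum_filter, Finset.sum_const]
    have h4 : (Finset.range (k + 1)).filter (fun i => i + j ≤ k) = Finset.range (k + 1 - j) := by
      ext i
      simp only [Finset.mem_filter, Finset.mem_range]
      omega
    rw [h4, Finset.card_range, nsmul_eq_mul, Nat.cast_sub (by omega)]
    push_cast
    ring
  rw [Finset.sum_comm, Finset.sum_congr rfl h3, sum_range_sub_mul] at h1
  push_cast at h1
  simp only [ite_self, zero_add] at h1
  rw [← h1]
  ring

lemma setLIntegral_Eone_preimage_bigBox (k : ℕ) (θ b D p : ℝ) :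
    ∫⁻ x in (shearMatrix k θ b).mulVec ⁻¹' bigBox k D, ‖Eone k x‖ₑ ^ p =
      ∫⁻ z in bigBox k D, ‖shearedInt k θ b z‖ₑ ^ p := by
  have hm : Measurable (shearMatrix k θ b).mulVec :=
    (LinearMap.continuous_of_finiteDimensional (Matrix.toLin' (shearMatrix k θ b))).measurable
  have hdet := det_shearMatrix k θ b
  have h1 := lintegral_comp_mulVec (shearMatrix k θ b) (by rw [hdet]; norm_num)
    ((bigBox k D).indicator fun z => ‖shearedInt k θ b z‖ₑ ^ p)
    (((measurable_shearedInt k θ b).enorm.pow_const p).indicator (measurableSet_bigBox k D))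
  rw [hdet, inv_one, abs_one, ENNReal.ofReal_one, one_mul,
    lintegral_indicator (measurableSet_bigBox k D)] at h1
  rw [← h1, ← lintegral_indicator (hm (measurableSet_bigBox k D))]
  refine lintegral_congr fun x => ?_
  have h2 : ‖Eone k x‖ₑ = ‖shearedInt k θ b ((shearMatrix k θ b).mulVec x)‖ₑ := by
    rw [← ofReal_norm, ← ofReal_norm, norm_Eone_eq_norm_shearedInt k θ b x]
  simp only [indicator, mem_preimage, h2]
  rfl

lemma abs_sub_mul_le_of_mem_preimage_bigBox {k : ℕ} (hk : 2 ≤ k) {D θ b θ' b' : ℝ} (hD : 0 < D)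
    {x : Idx k → ℝ} (h : (shearMatrix k θ b).mulVec x ∈ bigBox k D)
    (h' : (shearMatrix k θ' b').mulVec x ∈ bigBox k D) :
    |θ - θ'| * (boxScale k * D) ≤ 34 ∧ |b - b'| * (boxScale k * D) ≤ 34 := by
  have hε := boxScale_pos k
  have htop := h.1 (idxMk 0 k (by omega)) rfl
  rw [shearMatrix_mulVec_top hk] at htop
  set t := x (idxMk 0 k (by omega)) with ht
  have hk2 : (2 : ℝ) ≤ k := by exact_mod_cast hk
  have hDk : D ^ k = D ^ (k - 1) * D := by
    rw [← pow_succ, Nat.sub_add_cancel (by omega)]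
  have hpos : 0 < D ^ (k - 1) := by positivity
  have key : ∀ a a' c : ℝ, |c + k * a * t| ≤ 34 * D ^ (k - 1) → |c + k * a' * t| ≤ 34 * D ^ (k - 1) →
      |a - a'| * (boxScale k * D) ≤ 34 := by
    intro a a' c h1 h2
    have h3 : |k * (a - a') * t| ≤ 68 * D ^ (k - 1) := by
      rw [show k * (a - a') * t = (c + k * a * t) - (c + k * a' * t) by ring]
      refine (abs_sub _ _).trans ?_
      linarith
    have ht0 : 0 < t := lt_of_lt_of_le (by positivity) htop
    rw [abs_mul, abs_mul, abs_of_pos ht0, abs_of_pos (by linarith : (0 : ℝ) < k)] at h3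
    have h4 : 2 * |a - a'| * (boxScale k * D ^ k) ≤ 68 * D ^ (k - 1) := by
      refine le_trans ?_ h3
      gcongr
    rw [hDk] at h4
    have h5 : (|a - a'| * (boxScale k * D)) * D ^ (k - 1) ≤ 34 * D ^ (k - 1) := by linarith
    exact le_of_mul_le_mul_right h5 hpos
  constructor
  · have h1 := h.2 (idxMk 1 (k - 1) (by omega))
    have h2 := h'.2 (idxMk 1 (k - 1) (by omega))
    rw [shearMatrix_mulVec_one hk] at h1 h2
    exact key _ _ _ h1 h2
  · have h1 := h.2 (idxMk 0 (k - 1) (by omega))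
    have h2 := h'.2 (idxMk 0 (k - 1) (by omega))
    rw [shearMatrix_mulVec_zero hk] at h1 h2
    exact key _ _ _ h1 h2

lemma eq_of_abs_div_sub_mul_le {M : ℕ} (hM : 1 ≤ M) {m n : ℕ} {e : ℝ}
    (h : |(m : ℝ) / (4 * M) + e - ((n : ℝ) / (4 * M) + e)| * (140 * M) ≤ 34) : m = n := by
  have hM0 : (0 : ℝ) < M := by exact_mod_cast hM
  by_contra hne
  have h1 : (1 : ℝ) ≤ |(m : ℝ) - n| := by
    have h2 : (1 : ℤ) ≤ |(m : ℤ) - n| := Int.one_le_abs (by omega)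
    exact_mod_cast h2
  rw [show (m : ℝ) / (4 * M) + e - ((n : ℝ) / (4 * M) + e) = (m - n) / (4 * M) by ring, abs_div,
    abs_of_pos (by positivity : (0 : ℝ) < 4 * M), div_mul_eq_mul_div, div_le_iff₀ (by positivity)]
    at h
  nlinarith

lemma sq_mul_le_lintegral_Eone {k : ℕ} (hk : 2 ≤ k) {p : ℝ} (hp : 1 ≤ p) {M : ℕ} (hM : 1 ≤ M)
    {D : ℝ} (hD : boxScale k * D = 140 * M) (hD1 : 1 ≤ D) :
    (M : ℝ≥0∞) ^ 2 * (ENNReal.ofReal (D⁻¹ / 2000) ^ p * volume (smallBox k D)) ≤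
      ∫⁻ x : Idx k → ℝ, ‖Eone k x‖ₑ ^ p := by
  have hM0 : (0 : ℝ) < M := by exact_mod_cast hM
  set Ω : Fin M × Fin M → Set (Idx k → ℝ) := fun l =>
    (shearMatrix k ((l.1 : ℕ) / (4 * M) + 0) ((l.2 : ℕ) / (4 * M) + 1 / 4)).mulVec ⁻¹' bigBox k D
    with hΩ
  have hΩm : ∀ l, MeasurableSet (Ω l) := fun l =>
    (LinearMap.continuous_of_finiteDimensional (Matrix.toLin' (shearMatrix k _ _))).measurable
      (measurableSet_bigBox k D)
  have hdisj : Pairwise (Function.onFun Disjoint Ω) := by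
    intro l l' hne
    refine Set.disjoint_left.2 fun x hx hx' => hne ?_
    have h := abs_sub_mul_le_of_mem_preimage_bigBox hk (by linarith) hx hx'
    rw [hD] at h
    exact Prod.ext (Fin.ext (eq_of_abs_div_sub_mul_le hM h.1))
      (Fin.ext (eq_of_abs_div_sub_mul_le hM h.2))
  have hfrac : ∀ i : Fin M, (0 : ℝ) ≤ (i : ℕ) / (4 * M) ∧ ((i : ℕ) : ℝ) / (4 * M) ≤ 1 / 4 := by
    intro i
    refine ⟨by positivity, ?_⟩
    rw [div_le_div_iff₀ (by positivity) (by norm_num)]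
    have : ((i : ℕ) : ℝ) ≤ M := by exact_mod_cast i.2.le
    linarith
  calc (M : ℝ≥0∞) ^ 2 * (ENNReal.ofReal (D⁻¹ / 2000) ^ p * volume (smallBox k D))
      = ∑ l : Fin M × Fin M, ENNReal.ofReal (D⁻¹ / 2000) ^ p * volume (smallBox k D) := by
        rw [Finset.sum_const, Finset.card_univ, Fintype.card_prod, Fintype.card_fin, nsmul_eq_mul,
          Nat.cast_mul, sq]
    _ ≤ ∑ l : Fin M × Fin M, ∫⁻ x in Ω l, ‖Eone k x‖ₑ ^ p := by
        refine Finset.sum_le_sum fun l _ => ?_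
        rw [setLIntegral_Eone_preimage_bigBox]
        have h1 := hfrac l.1
        have h2 := hfrac l.2
        exact volume_smallBox_mul_le_lintegral_bigBox hk hD1 (by linarith [h1.1])
          (by linarith [h1.2]) (by linarith [h2.1]) (by linarith [h2.2]) hp
    _ = ∫⁻ x in ⋃ l, Ω l, ‖Eone k x‖ₑ ^ p := by
        rw [lintegral_iUnion hΩm hdisj, tsum_fintype]
    _ ≤ _ := setLIntegral_le_lintegral _ _

lemma lintegral_Eone_rpow_eq_top_of_one_le {k : ℕ} (hk : 2 ≤ k) {p : ℝ} (hp : 1 ≤ p)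
    (hpk : p < critExponent k) : ∫⁻ x : Idx k → ℝ, ‖Eone k x‖ₑ ^ p = ⊤ := by
  have hε := boxScale_pos k
  have hε1 := boxScale_le_one k
  set S := ∑ γ : Idx k, (γ.1.2 : ℕ) with hS
  set N := Fintype.card (Idx k)
  have hSe : critExponent k = S + 2 := by rw [hS, sum_Idx_snd, critExponent]
  set A : ℝ := 140 / boxScale k with hA
  have hA0 : 0 < A := by positivity
  set c : ℝ := (2000 * A)⁻¹ ^ p * (boxScale k ^ N * A ^ S) with hc
  have hc0 : 0 < c := by positivity
  have hbound : ∀ M : ℕ, ENNReal.ofReal (c * ((M + 1 : ℕ) : ℝ) ^ (critExponent k - p)) ≤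
      ∫⁻ x : Idx k → ℝ, ‖Eone k x‖ₑ ^ p := by
    intro M
    set R : ℝ := ((M + 1 : ℕ) : ℝ) with hR
    have hR1 : 1 ≤ R := by rw [hR]; exact_mod_cast Nat.succ_le_succ (Nat.zero_le M)
    have hR0 : 0 < R := by linarith
    have hA1 : 1 ≤ A := by
      rw [hA, le_div_iff₀ hε]
      linarith
    refine le_trans (le_of_eq ?_) (sq_mul_le_lintegral_Eone hk hp (M := M + 1) (by omega)
      (D := A * R) (by rw [hA, ← hR]; field_simp) (by nlinarith))
    rw [volume_smallBox k (by positivity), ENNReal.ofReal_rpow_of_pos (by positivity),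
      ← ENNReal.ofReal_natCast, ← ENNReal.ofReal_pow (by positivity),
      ← ENNReal.ofReal_mul (by positivity), ← ENNReal.ofReal_mul (by positivity)]
    congr 1
    have h1 : ((A * R)⁻¹ / 2000) ^ p = (2000 * A)⁻¹ ^ p * R ^ (-p) := by
      rw [Real.rpow_neg hR0.le, ← Real.inv_rpow hR0.le, ← Real.mul_rpow (by positivity)
        (by positivity)]
      congr 1
      field_simp
    rw [h1, hc, hSe, mul_pow, show (S : ℝ) + 2 - p = -p + ((S + 2 : ℕ) : ℝ) by push_cast; ring,
      Real.rpow_add hR0, Real.rpow_natCast, pow_add]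
    ring
  have hlim : Filter.Tendsto (fun M : ℕ => ENNReal.ofReal
      (c * ((M + 1 : ℕ) : ℝ) ^ (critExponent k - p))) Filter.atTop (nhds ⊤) := by
    refine ENNReal.tendsto_ofReal_atTop.comp (Filter.Tendsto.const_mul_atTop hc0 ?_)
    exact (tendsto_rpow_atTop (by linarith)).comp
      (tendsto_natCast_atTop_atTop.comp (Filter.tendsto_add_atTop_nat 1))
  exact top_le_iff.1 (le_of_tendsto' hlim hbound)

lemma norm_Eone_le_one (k : ℕ) (x : Idx k → ℝ) : ‖Eone k x‖ ≤ 1 := by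
  rw [norm_Eone_eq_norm_shearedInt k 0 0, shearedInt]
  refine (norm_integral_le_of_norm_le_const (C := 1)
    (Filter.Eventually.of_forall fun q => (norm_expChar _).le)).trans ?_
  simp

lemma lintegral_Eone_rpow_eq_top {k : ℕ} (hk : 2 ≤ k) {p : ℝ} (hpk : p < critExponent k) :
    ∫⁻ x : Idx k → ℝ, ‖Eone k x‖ₑ ^ p = ⊤ := by
  have h1 : 1 < critExponent k := by
    rw [critExponent]
    have : (0 : ℝ) ≤ (k : ℝ) * (k + 1) * (k + 2) / 6 := by positivity
    linarith
  refine top_le_iff.1 ?_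
  rw [← lintegral_Eone_rpow_eq_top_of_one_le hk (le_max_right p 1) (max_lt hpk h1)]
  refine lintegral_mono fun x => ENNReal.rpow_le_rpow_of_exponent_ge ?_ (le_max_left p 1)
  rw [← ofReal_norm]
  exact ENNReal.ofReal_le_one.2 (norm_Eone_le_one k x)

/-- **Theorem 1.2** (sharp convergence exponent of Tarry's problem in dimension two):
for every `k ≥ 2`, `inf{p ∈ (0,∞) : ∫_{ℝ^N} |E_k1(x)|^p dx < ∞} = k(k+1)(k+2)/6 + 2`. -/
theorem tarry_convergence_exponent_dim_two (k : ℕ) (hk : 2 ≤ k) :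
    sInf {p : ℝ | 0 < p ∧
        (∫⁻ x : Idx k → ℝ, ENNReal.ofReal (‖Eone k x‖ ^ p)) < ⊤} =
      (k : ℝ) * (k + 1) * (k + 2) / 6 + 2 := by
  change _ = critExponent k
  have hcrit : 0 < critExponent k := lt_of_le_of_lt (sq_nonneg _) (sq_lt_critExponent k)
  have henorm : ∀ p : ℝ, 0 < p → ∫⁻ x : Idx k → ℝ, ENNReal.ofReal (‖Eone k x‖ ^ p) =
      ∫⁻ x : Idx k → ℝ, ‖Eone k x‖ₑ ^ p := fun p hp => lintegral_congr fun x => by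
    rw [← ofReal_norm, ENNReal.ofReal_rpow_of_nonneg (norm_nonneg _) hp.le]
  have hmem : ∀ p, critExponent k < p → p ∈ {p : ℝ | 0 < p ∧
      (∫⁻ x : Idx k → ℝ, ENNReal.ofReal (‖Eone k x‖ ^ p)) < ⊤} := by
    intro p hp
    have hp0 := hcrit.trans hp
    refine ⟨hp0, ?_⟩
    rw [henorm p hp0]
    obtain ⟨m, rfl⟩ : ∃ m, k = m + 1 := ⟨k - 1, by omega⟩
    exact lintegral_Eone_rpow_lt_top m (by omega) hp
  refine csInf_eq_of_forall_ge_of_forall_gt_exists_lt ⟨_, hmem _ (lt_add_one _)⟩ ?_ ?_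
  · rintro p ⟨hp0, hp⟩
    by_contra! hlt
    rw [henorm p hp0, lintegral_Eone_rpow_eq_top hk hlt] at hp
    exact lt_irrefl _ hp
  · intro w hw
    exact ⟨(critExponent k + w) / 2, hmem _ (by linarith), by linarith⟩

end
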